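/- arXiv:math/0501416 — 6 statements merged into one kernel-verified Lean document; each statement's English description precedes it below -/
import Mathlib

section
/- A lattice A with zero is amenable, i.e., for every lattice B with zero the tensor product A ⊗ B is a lattice, if and only if A is locally finite (every finite subset of A generates a finite sublattice) and every finite sublattice of A satisfies condition (T∨). -/
/-!
The join of two finitely generated bi-ideals always exists, and their meet exists exactly when
their intersection is finitely generated (`tensorIsLattice_iff`).

**Sufficiency.** Let `L` be a finite sublattice of `A` containing the first coordinates of the
generators. A map `f : L → B` is closed up by the step `f ↦ (a ↦ ⨆ ⨅ f(C))`, the supremum over all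
nonempty covers `C` of `a`. Every cover of a join-irreducible `p` is trivial or refines to a minimal
pair `(p, I)` (`exists_minimalPair`), so condition (T) makes the iteration stop after finitely many
steps (`exists_closed_map`). Hence a finitely generated bi-ideal is a finite union of boxes `↓(s, g s)`
with `s ∈ L`, where `g` turns joins into meets; the intersection of two such bi-ideals is generated
by the pairs `(s, g s ⊓ g' s)` (`tensorIsLattice_of_condT`).

**Necessity.** The key is that amenability forces every finitely generated bi-ideal `H` of `A × B` to
be, up to trivial pairs, a finite union of boxes (`exists_cap`). For this, `B` is embedded by
`b ↦ (b, ↓b)` into the lattice `Shadow B` of pairs `(b, Z)` with `Z` a lower set containing `b`.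
Let `t` bound the first coordinates of the generators. Intersecting the bi-ideal generated by the
image of `H` with the one generated by `(t, (⊥, B))` leaves only `Shadow`-components of the form
`(⊥, Z)`, where joins are just unions; finite generation of this intersection bounds `H` by finitely
many boxes.

With `B` the order dual of `A` plus a zero, and `H` generated by the pairs `(a, a)` for `a` in a finite
set, finiteness of the set of boxes bounds the set of all `s` with `(s, s) ∈ H`, which is a sublattice
(`locallyFinite_of_amenable`).

If a finite sublattice fails (T), then the relation "`j` occurs in a minimal pair of `p`" has a
cycle. With `B` the dual of the lattice `LevelSet A` of sequences of lower sets of `A` in which joins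
of elements of level `i` lie in level `i + 1`, going around the cycle produces pairs `(p, X)` in a
fixed finitely generated bi-ideal such that `p` enters `X` arbitrarily late (`exists_late`). Finitely
many boxes cannot capture all of them (`condT_of_amenable`).
-/

universe u

section BiIdeals

variable (A B : Type*) [SemilatticeSup A] [OrderBot A] [SemilatticeSup B] [OrderBot B]

/-- `⊥_{A,B} = (A × {0}) ∪ ({0} × B)`. -/
def botPairs : Set (A × B) := {p | p.1 = ⊥ ∨ p.2 = ⊥}

/-- A bi-ideal of `A × B`. -/
def IsBiIdeal (I : Set (A × B)) : Prop :=
  (∀ p q : A × B, p.1 ≤ q.1 → p.2 ≤ q.2 → q ∈ I → p ∈ I) ∧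
  botPairs A B ⊆ I ∧
  (∀ (a : A) (b₀ b₁ : B), (a, b₀) ∈ I → (a, b₁) ∈ I → (a, b₀ ⊔ b₁) ∈ I) ∧
  (∀ (a₀ a₁ : A) (b : B), (a₀, b) ∈ I → (a₁, b) ∈ I → (a₀ ⊔ a₁, b) ∈ I)

/-- A finitely generated bi-ideal: the least bi-ideal containing some finite
subset of `A × B`. -/
def IsFGBiIdeal (J : Set (A × B)) : Prop :=
  ∃ F : Finset (A × B),
    IsLeast {I : Set (A × B) | IsBiIdeal A B I ∧ ↑F ⊆ I} J

/-- The tensor product `A ⊗ B` (the poset of finitely generated bi-ideals of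
`A × B`, ordered by inclusion) is a lattice. -/
def TensorIsLattice : Prop :=
  ∀ I J : {K : Set (A × B) // IsFGBiIdeal A B K},
    (∃ s, IsLUB {I, J} s) ∧ (∃ m, IsGLB {I, J} m)

end BiIdeals

/-- `p` is join-irreducible. -/
def SJoinIrr (S : Type*) [SemilatticeSup S] (p : S) : Prop :=
  ¬ IsBot p ∧ ∀ b c : S, b ⊔ c = p → b = p ∨ c = p

/-- A minimal pair `(p, I)`. -/
def SMinimalPair (S : Type*) [SemilatticeSup S] (p : S) (I : Finset S) : Prop :=
  SJoinIrr S p ∧ (∀ q ∈ I, SJoinIrr S q) ∧ 2 ≤ I.card ∧ p ∉ I ∧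
  (∃ hI : I.Nonempty, p ≤ I.sup' hI id) ∧
  ∀ (J : Finset S) (hJ : J.Nonempty), (∀ q ∈ J, SJoinIrr S q) →
    (∀ x ∈ J, ∃ y ∈ I, x ≤ y) → p ≤ J.sup' hJ id → I ⊆ J

/-- Condition (T). -/
def CondT (S : Type*) [SemilatticeSup S] : Prop :=
  ∃ r : S → S → Prop,
    (∀ p, SJoinIrr S p → r p p) ∧
    (∀ p q, SJoinIrr S p → SJoinIrr S q → r p q → r q p → p = q) ∧
    (∀ p q s, SJoinIrr S p → SJoinIrr S q → SJoinIrr S s → r p q → r q s → r p s) ∧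
    (∀ p q, SJoinIrr S p → SJoinIrr S q → r p q ∨ r q p) ∧
    (∀ (p : S) (I : Finset S), SMinimalPair S p I → ∀ j ∈ I, r p j)

/-! ### Generated bi-ideals -/

section Gen

variable {A B : Type*} [SemilatticeSup A] [OrderBot A] [SemilatticeSup B] [OrderBot B]

/-- The bi-ideal generated by a set of pairs. -/
def biGen (F : Set (A × B)) : Set (A × B) := ⋂₀ {I | IsBiIdeal A B I ∧ F ⊆ I}

namespace IsBiIdeal

variable {I : Set (A × B)}

theorem lower (h : IsBiIdeal A B I) {a a' : A} {b b' : B} (ha : a ≤ a') (hb : b ≤ b')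
    (hI : (a', b') ∈ I) : (a, b) ∈ I := h.1 (a, b) (a', b') ha hb hI

theorem bot_left (h : IsBiIdeal A B I) (b : B) : ((⊥ : A), b) ∈ I := h.2.1 (Or.inl rfl)

theorem bot_right (h : IsBiIdeal A B I) (a : A) : (a, (⊥ : B)) ∈ I := h.2.1 (Or.inr rfl)

theorem sup_right (h : IsBiIdeal A B I) {a : A} {b b' : B} (h0 : (a, b) ∈ I) (h1 : (a, b') ∈ I) :
    (a, b ⊔ b') ∈ I := h.2.2.1 a b b' h0 h1

theorem sup_left (h : IsBiIdeal A B I) {a a' : A} {b : B} (h0 : (a, b) ∈ I) (h1 : (a', b) ∈ I) :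
    (a ⊔ a', b) ∈ I := h.2.2.2 a a' b h0 h1

theorem inter {J : Set (A × B)} (hI : IsBiIdeal A B I) (hJ : IsBiIdeal A B J) :
    IsBiIdeal A B (I ∩ J) :=
  ⟨fun p q h1 h2 h => ⟨hI.1 p q h1 h2 h.1, hJ.1 p q h1 h2 h.2⟩,
    fun _ h => ⟨hI.2.1 h, hJ.2.1 h⟩,
    fun _ _ _ h h' => ⟨hI.sup_right h.1 h'.1, hJ.sup_right h.2 h'.2⟩,
    fun _ _ _ h h' => ⟨hI.sup_left h.1 h'.1, hJ.sup_left h.2 h'.2⟩⟩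

end IsBiIdeal

theorem biGen_isBiIdeal (F : Set (A × B)) : IsBiIdeal A B (biGen F) :=
  ⟨fun p q h1 h2 h I hI => hI.1.1 p q h1 h2 (h I hI),
    fun _ h _ hI => hI.1.2.1 h,
    fun _ _ _ h h' I hI => hI.1.sup_right (h I hI) (h' I hI),
    fun _ _ _ h h' I hI => hI.1.sup_left (h I hI) (h' I hI)⟩

theorem subset_biGen (F : Set (A × B)) : F ⊆ biGen F := fun _ h _ hI => hI.2 h

theorem biGen_subset {F I : Set (A × B)} (hI : IsBiIdeal A B I) (hF : F ⊆ I) : biGen F ⊆ I :=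
  fun _ h => h I ⟨hI, hF⟩

theorem isFGBiIdeal_iff {J : Set (A × B)} :
    IsFGBiIdeal A B J ↔ ∃ F : Finset (A × B), J = biGen (F : Set (A × B)) := by
  constructor
  · rintro ⟨F, hF⟩
    exact ⟨F, (hF.2 ⟨biGen_isBiIdeal _, subset_biGen _⟩).antisymm (biGen_subset hF.1.1 hF.1.2)⟩
  · rintro ⟨F, rfl⟩
    exact ⟨F, ⟨biGen_isBiIdeal _, subset_biGen _⟩, fun I hI => biGen_subset hI.1 hI.2⟩

/-- Meets in the tensor product, when they exist, are intersections. -/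
theorem tensorIsLattice_iff :
    TensorIsLattice A B ↔ ∀ F G : Finset (A × B),
      ∃ E : Finset (A × B), biGen (F : Set (A × B)) ∩ biGen (G : Set (A × B)) =
        biGen (E : Set (A × B)) := by
  classical
  constructor
  · intro h F G
    obtain ⟨-, ⟨m, hmF⟩, hm⟩ := h ⟨_, isFGBiIdeal_iff.2 ⟨F, rfl⟩⟩ ⟨_, isFGBiIdeal_iff.2 ⟨G, rfl⟩⟩
    obtain ⟨E, rfl⟩ := isFGBiIdeal_iff.1 hmF
    refine ⟨E, Set.Subset.antisymm ?_ ?_⟩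
    · intro x hx
      -- the bi-ideal generated by `x` alone is a lower bound, hence below the meet
      have key := hm.2 (show (⟨_, isFGBiIdeal_iff.2 ⟨{x}, rfl⟩⟩ :
        {K : Set (A × B) // IsFGBiIdeal A B K}) ∈ _ from ?_)
      · exact key (subset_biGen _ (by simp))
      · rintro y (rfl | rfl)
        · exact biGen_subset (biGen_isBiIdeal _) (by simpa using hx.1)
        · exact biGen_subset (biGen_isBiIdeal _) (by simpa using hx.2)
    · exact Set.subset_inter (hm.1 (Or.inl rfl)) (hm.1 (Or.inr rfl))
  · rintro h ⟨I, hI⟩ ⟨J, hJ⟩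
    obtain ⟨F, rfl⟩ := isFGBiIdeal_iff.1 hI
    obtain ⟨G, rfl⟩ := isFGBiIdeal_iff.1 hJ
    constructor
    · refine ⟨⟨_, isFGBiIdeal_iff.2 ⟨F ∪ G, rfl⟩⟩, ?_, ?_⟩
      · rintro y (rfl | rfl)
        · exact biGen_subset (biGen_isBiIdeal _)
            (fun x hx => subset_biGen _ (Finset.mem_coe.2 (Finset.mem_union_left _ hx)))
        · exact biGen_subset (biGen_isBiIdeal _)
            (fun x hx => subset_biGen _ (Finset.mem_coe.2 (Finset.mem_union_right _ hx)))
      · rintro ⟨K, hK⟩ hu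
        have h1 : biGen (F : Set (A × B)) ⊆ K := hu (Or.inl rfl)
        have h2 : biGen (G : Set (A × B)) ⊆ K := hu (Or.inr rfl)
        obtain ⟨E, rfl⟩ := isFGBiIdeal_iff.1 hK
        refine biGen_subset (biGen_isBiIdeal _) (fun x hx => ?_)
        rcases Finset.mem_union.1 (Finset.mem_coe.1 hx) with hx | hx
        · exact h1 (subset_biGen _ hx)
        · exact h2 (subset_biGen _ hx)
    · obtain ⟨E, hE⟩ := h F G
      refine ⟨⟨_, isFGBiIdeal_iff.2 ⟨E, hE⟩⟩, ?_, ?_⟩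
      · rintro y (rfl | rfl)
        · exact Set.inter_subset_left
        · exact Set.inter_subset_right
      · rintro ⟨K, hK⟩ hu
        exact Set.subset_inter (hu (Or.inl rfl)) (hu (Or.inr rfl))

end Gen

/-! ### Join-irreducibles and minimal pairs in finite lattices -/

section Irreducible

variable {L : Type*} [Lattice L]

/-- In a finite lattice every element is the join of the join-irreducibles below it. -/
theorem le_of_irr_le [Finite L] (a z : L) (h : ∀ q, SJoinIrr L q → q ≤ a → q ≤ z) : a ≤ z := by
  induction a using WellFoundedLT.induction with
  | ind a ih =>
    by_cases hb : IsBot a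
    · exact hb z
    by_cases ha : SJoinIrr L a
    · exact h a ha le_rfl
    · simp only [SJoinIrr, not_and, not_forall, not_or] at ha
      obtain ⟨b, c, hbc, hb', hc'⟩ := ha hb
      have h1 : b ≤ a := hbc ▸ le_sup_left
      have h2 : c ≤ a := hbc ▸ le_sup_right
      rw [← hbc]
      exact sup_le (ih b (lt_of_le_of_ne h1 hb') fun q hq hqb => h q hq (hqb.trans h1))
        (ih c (lt_of_le_of_ne h2 hc') fun q hq hqc => h q hq (hqc.trans h2))

/-- A nontrivial cover of a join-irreducible element refines to a minimal pair. The minimal pair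
consists of the maximal elements of a minimal lower set of join-irreducibles that covers `p`. -/
theorem exists_minimalPair [Finite L] {p : L} (hp : SJoinIrr L p) (C : Finset L) (hC : C.Nonempty)
    (hpC : p ≤ C.sup' hC id) (hn : ∀ c ∈ C, ¬ p ≤ c) :
    ∃ I : Finset L, SMinimalPair L p I ∧ ∀ x ∈ I, ∃ c ∈ C, x ≤ c := by
  classical
  have := Fintype.ofFinite L
  let P : Finset L → Prop := fun D =>
    (∀ x ∈ D, SJoinIrr L x) ∧ (∀ x ∈ D, ∀ y, SJoinIrr L y → y ≤ x → y ∈ D) ∧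
    (∀ x ∈ D, ∃ c ∈ C, x ≤ c) ∧ ∀ z, (∀ x ∈ D, x ≤ z) → p ≤ z
  have hP0 : P (Finset.univ.filter fun x => SJoinIrr L x ∧ ∃ c ∈ C, x ≤ c) := by
    refine ⟨?_, ?_, ?_, ?_⟩
    · intro x hx
      exact (Finset.mem_filter.1 hx).2.1
    · intro x hx y hy hyx
      obtain ⟨c, hc, hxc⟩ := (Finset.mem_filter.1 hx).2.2
      exact Finset.mem_filter.2 ⟨Finset.mem_univ _, hy, c, hc, hyx.trans hxc⟩
    · intro x hx
      exact (Finset.mem_filter.1 hx).2.2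
    · intro z hz
      refine hpC.trans (Finset.sup'_le _ _ fun c hc => le_of_irr_le c z fun q hq hqc => ?_)
      exact hz q (Finset.mem_filter.2 ⟨Finset.mem_univ _, hq, c, hc, hqc⟩)
  obtain ⟨D, hD⟩ := exists_minimal_of_wellFoundedLT P ⟨_, hP0⟩
  obtain ⟨⟨hDirr, hDlow, hDC, hDp⟩, hDmin⟩ := hD
  let I := D.filter fun x => ∀ y ∈ D, x ≤ y → x = y
  have hmax : ∀ x ∈ D, ∃ y ∈ I, x ≤ y := by
    intro x hx
    obtain ⟨y, hxy, hy⟩ := D.finite_toSet.exists_le_maximal hx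
    exact ⟨y, Finset.mem_filter.2 ⟨hy.1, fun z hz hyz => hyz.antisymm (hy.2 hz hyz)⟩, hxy⟩
  have hIp : ∀ z, (∀ x ∈ I, x ≤ z) → p ≤ z := fun z hz => hDp z fun x hx => by
    obtain ⟨y, hy, hxy⟩ := hmax x hx
    exact hxy.trans (hz y hy)
  have hIne : I.Nonempty := by
    rw [Finset.nonempty_iff_ne_empty]
    intro h0
    exact hp.1 fun z => hIp z (by simp [h0])
  have hIC : ∀ x ∈ I, ∃ c ∈ C, x ≤ c := fun x hx => hDC x (Finset.mem_filter.1 hx).1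
  refine ⟨I, ⟨hp, fun q hq => hDirr q (Finset.mem_filter.1 hq).1, ?_, ?_, ?_, ?_⟩, hIC⟩
  · by_contra hcard
    have h1 : I.card = 1 := by
      have := hIne.card_pos
      omega
    obtain ⟨i, hi⟩ := Finset.card_eq_one.1 h1
    obtain ⟨c, hc, hic⟩ := hIC i (by simp [hi])
    exact hn c hc ((hIp i (by simp [hi])).trans hic)
  · intro hpI
    obtain ⟨c, hc, hpc⟩ := hIC p hpI
    exact hn c hc hpc
  · exact ⟨hIne, hIp _ fun x hx => Finset.le_sup' id hx⟩
  · intro J hJ hJirr hJI hpJ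
    let D' : Finset L := Finset.univ.filter fun x => SJoinIrr L x ∧ ∃ j ∈ J, x ≤ j
    have hD'D : D' ⊆ D := by
      intro x hx
      obtain ⟨hxi, j, hj, hxj⟩ := (Finset.mem_filter.1 hx).2
      obtain ⟨y, hy, hjy⟩ := hJI j hj
      exact hDlow y (Finset.mem_filter.1 hy).1 x hxi (hxj.trans hjy)
    have hD' : P D' := by
      refine ⟨fun x hx => hDirr x (hD'D hx), ?_, fun x hx => hDC x (hD'D hx), ?_⟩
      · intro x hx y hy hyx
        obtain ⟨-, j, hj, hxj⟩ := (Finset.mem_filter.1 hx).2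
        exact Finset.mem_filter.2 ⟨Finset.mem_univ _, hy, j, hj, hyx.trans hxj⟩
      · intro z hz
        exact hpJ.trans (Finset.sup'_le _ _ fun j hj =>
          hz j (Finset.mem_filter.2 ⟨Finset.mem_univ _, hJirr j hj, j, hj, le_rfl⟩))
    have hDD' : D ⊆ D' := hDmin hD' hD'D
    intro i hi
    obtain ⟨hiD, himax⟩ := Finset.mem_filter.1 hi
    obtain ⟨-, j, hj, hij⟩ := (Finset.mem_filter.1 (hDD' hiD)).2
    have hjD : j ∈ D :=
      hD'D (Finset.mem_filter.2 ⟨Finset.mem_univ _, hJirr j hj, j, hj, le_rfl⟩)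
    rw [himax j hjD hij]
    exact hj

/-- `p` is not below any member of a minimal pair `(p, I)`. -/
theorem SMinimalPair.not_le {p : L} {I : Finset L} (h : SMinimalPair L p I) {y : L} (hy : y ∈ I) :
    ¬ p ≤ y := by
  intro hpy
  obtain ⟨hp, -, hcard, -, -, hmin⟩ := h
  have := Finset.card_le_card (hmin {p} (Finset.singleton_nonempty p) (by simpa using hp)
    (by simpa using ⟨y, hy, hpy⟩) (by simp))
  simp at this
  omega

/-- If the relation "`j` occurs in a minimal pair of `p`" has no cycle, then (T) holds: the linear
order comes from Szpilrajn's extension theorem. Otherwise, the elements of a cycle form a set as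
described. -/
theorem condT_or_exists_cyclic : CondT L ∨ ∃ Z : Set L, Z.Nonempty ∧
    ∀ p ∈ Z, ∃ I, SMinimalPair L p I ∧ ∃ j ∈ I, j ∈ Z := by
  let D : L → L → Prop := fun p j => ∃ I, SMinimalPair L p I ∧ j ∈ I
  by_cases hcyc : ∃ p, Relation.TransGen D p p
  · right
    obtain ⟨p, hp⟩ := hcyc
    refine ⟨{q | Relation.TransGen D p q ∧ Relation.TransGen D q p}, ⟨p, hp, hp⟩, ?_⟩
    rintro q ⟨hpq, hqp⟩
    obtain ⟨j, ⟨I, hI, hj⟩, hjp⟩ := Relation.TransGen.head'_iff.1 hqp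
    refine ⟨I, hI, j, hj, hpq.tail ⟨I, hI, hj⟩, ?_⟩
    exact Relation.TransGen.trans_right hjp hp
  · left
    have : IsPartialOrder L (Relation.ReflTransGen D) :=
      { refl := fun _ => Relation.ReflTransGen.refl
        trans := fun _ _ _ h h' => h.trans h'
        antisymm := by
          intro a b hab hba
          rcases Relation.reflTransGen_iff_eq_or_transGen.1 hab with h | h
          · exact h.symm
          · exact (hcyc ⟨a, h.trans_left hba⟩).elim }
    obtain ⟨s, hs, hle⟩ := extend_partialOrder (Relation.ReflTransGen D)
    exact ⟨s, fun p _ => hs.refl p, fun p q _ _ h h' => hs.antisymm p q h h',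
      fun p q t _ _ _ h h' => hs.trans p q t h h', fun p q _ _ => hs.total p q,
      fun p I hI j hj => hle _ _ (Relation.ReflTransGen.single ⟨I, hI, hj⟩)⟩

end Irreducible

/-! ### Condition (T) makes tensor products lattices -/

section Sufficiency

variable {L : Type*} [Lattice L] [Fintype L] {B : Type*} [Lattice B] [OrderBot B]

open Classical in
/-- One closure step: the supremum, over all nonempty covers `C` of `a`, of the infimum of `f`
on `C`. -/
noncomputable def coverStep (f : L → B) (a : L) : B :=
  (Finset.univ : Finset {C : Finset L // ∃ h : C.Nonempty, a ≤ C.sup' h id}).sup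
    fun C => C.1.inf' C.2.fst f

theorem le_coverStep (f : L → B) {a : L} (C : Finset L) (hC : C.Nonempty) (ha : a ≤ C.sup' hC id) :
    C.inf' hC f ≤ coverStep f a := by
  classical
  exact Finset.le_sup (f := fun C : {C : Finset L // ∃ h : C.Nonempty, a ≤ C.sup' h id} =>
    C.1.inf' C.2.fst f) (Finset.mem_univ ⟨C, hC, ha⟩)

theorem coverStep_le (f : L → B) {a : L} {b : B}
    (h : ∀ (C : Finset L) (hC : C.Nonempty), a ≤ C.sup' hC id → C.inf' hC f ≤ b) :
    coverStep f a ≤ b :=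
  Finset.sup_le fun C _ => h C.1 C.2.fst C.2.snd

theorem self_le_coverStep (f : L → B) (a : L) : f a ≤ coverStep f a := by
  simpa using le_coverStep f {a} (Finset.singleton_nonempty a) (by simp)

theorem coverStep_antitone (f : L → B) : Antitone (coverStep f) := fun _ _ h =>
  coverStep_le f fun C hC hb => le_coverStep f C hC (h.trans hb)

theorem coverStep_mem {H : Set (L × B)} (hlow : ∀ a a' b b', a ≤ a' → b ≤ b' → (a', b') ∈ H → (a, b) ∈ H)
    (hr : ∀ a b b', (a, b) ∈ H → (a, b') ∈ H → (a, b ⊔ b') ∈ H)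
    (hl : ∀ a a' b, (a, b) ∈ H → (a', b) ∈ H → (a ⊔ a', b) ∈ H)
    (f : L → B) (hf : ∀ a, (a, f a) ∈ H) (a : L) : (a, coverStep f a) ∈ H := by
  classical
  refine Finset.sup_induction (p := fun b => (a, b) ∈ H) ?_ (fun b hb b' hb' => hr a b b' hb hb') ?_
  · exact hlow _ _ _ _ le_rfl bot_le (hf a)
  · rintro ⟨C, hC, ha⟩ -
    refine hlow _ _ _ _ ha le_rfl ?_
    exact Finset.sup'_induction hC id (p := fun x => (x, C.inf' hC f) ∈ H)
      (fun x hx y hy => hl x y _ hx hy)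
      (fun c hc => hlow _ _ _ _ le_rfl (Finset.inf'_le f hc) (hf c))

/-- Under (T), every antitone map `f : L → B` has a least extension to a map turning joins into
meets, and it is reached by finitely many closure steps, so that its graph lies in every "bi-ideal"
containing the graph of `f`. -/
theorem exists_closed_map (hT : CondT L) (f : L → B) (hf : Antitone f) :
    ∃ g : L → B, Antitone g ∧ (∀ a, f a ≤ g a) ∧ (∀ a b, g a ⊓ g b ≤ g (a ⊔ b)) ∧
      ∀ H : Set (L × B), (∀ a a' b b', a ≤ a' → b ≤ b' → (a', b') ∈ H → (a, b) ∈ H) →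
        (∀ a b b', (a, b) ∈ H → (a, b') ∈ H → (a, b ⊔ b') ∈ H) →
        (∀ a a' b, (a, b) ∈ H → (a', b) ∈ H → (a ⊔ a', b) ∈ H) →
        (∀ a, (a, f a) ∈ H) → ∀ a, (a, g a) ∈ H := by
  classical
  obtain ⟨r, -, hanti, htrans, -, hmin⟩ := hT
  let F : ℕ → L → B := fun n => coverStep^[n] f
  have hF0 : F 0 = f := rfl
  have hFs : ∀ n, F (n + 1) = coverStep (F n) := fun n => Function.iterate_succ_apply' _ _ _
  have hFanti : ∀ n, Antitone (F n) := by
    intro n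
    cases n with
    | zero => exact hf
    | succ n => rw [hFs]; exact coverStep_antitone _
  have hFmono : Monotone F := monotone_nat_of_le_succ fun n a => by
    rw [hFs]; exact self_le_coverStep _ _
  have hirr : ∀ p : {p : L // SJoinIrr L p}, ∃ k, ∀ n, F n p ≤ F k p := by
    let R : {p : L // SJoinIrr L p} → {p : L // SJoinIrr L p} → Prop :=
      fun q p => q ≠ p ∧ r p q
    have hRt : IsTrans _ R := ⟨fun x y z hxy hyz => by
      refine ⟨?_, htrans _ _ _ z.2 y.2 x.2 hyz.2 hxy.2⟩
      rintro rfl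
      exact hxy.1 (Subtype.ext (hanti _ _ x.2 y.2 hyz.2 hxy.2))⟩
    have hRi : Std.Irrefl R := ⟨fun x hx => hx.1 rfl⟩
    have hwf : WellFounded R := Finite.wellFounded_of_trans_of_irrefl R
    intro p
    induction p using hwf.induction with
    | _ p ih =>
      choose! k hk using ih
      let k0 := Finset.univ.sup k
      refine ⟨k0 + 1, fun n => ?_⟩
      induction n with
      | zero => exact hFmono (Nat.zero_le _) _
      | succ n ihn =>
        rw [hFs n]
        refine coverStep_le _ fun C hC hpC => ?_
        by_cases hc : ∃ c ∈ C, (p : L) ≤ c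
        · obtain ⟨c, hc, hpc⟩ := hc
          exact (Finset.inf'_le _ hc).trans ((hFanti n hpc).trans ihn)
        · push Not at hc
          obtain ⟨I, hI, hIC⟩ := exists_minimalPair p.2 C hC hpC hc
          obtain ⟨hIne, hpI⟩ := hI.2.2.2.2.1
          rw [hFs k0]
          refine le_trans ?_ (le_coverStep _ I hIne hpI)
          refine Finset.le_inf' _ _ fun i hi => ?_
          obtain ⟨c, hc, hic⟩ := hIC i hi
          let i' : {p : L // SJoinIrr L p} := ⟨i, hI.2.1 i hi⟩
          have hRi' : R i' p := by
            refine ⟨?_, hmin _ I hI i hi⟩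
            intro h
            have : i = p := congrArg Subtype.val h
            exact hI.2.2.2.1 (this ▸ hi)
          exact (Finset.inf'_le _ hc).trans ((hFanti n hic).trans
            ((hk i' hRi' n).trans (hFmono (Finset.le_sup (Finset.mem_univ i')) i)))
  choose k hk using hirr
  let N := Finset.univ.sup k
  have hstab : ∀ n a, F n a ≤ F (N + 1) a := by
    intro n a
    let C : Finset L := Finset.univ.filter fun q => SJoinIrr L q ∧ q ≤ a
    by_cases hC : C.Nonempty
    · rw [hFs N]
      refine le_trans ?_ (le_coverStep _ C hC (le_of_irr_le _ _ fun q hq hqa =>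
        Finset.le_sup' id (Finset.mem_filter.2 ⟨Finset.mem_univ _, hq, hqa⟩)))
      refine Finset.le_inf' _ _ fun q hq => ?_
      obtain ⟨-, hqi, hqa⟩ := Finset.mem_filter.1 hq
      exact (hFanti n hqa).trans ((hk ⟨q, hqi⟩ n).trans
        (hFmono (Finset.le_sup (Finset.mem_univ (⟨q, hqi⟩ : {p : L // SJoinIrr L p}))) q))
    · -- no join-irreducible lies below `a`, so `a` is the least element and `f a` bounds all values
      have hbot : IsBot a := fun z => le_of_irr_le a z fun q hq hqa =>
        (hC ⟨q, Finset.mem_filter.2 ⟨Finset.mem_univ _, hq, hqa⟩⟩).elim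
      have hbd : ∀ n x, F n x ≤ f a := by
        intro n
        induction n with
        | zero => exact fun x => hf (hbot x)
        | succ n ih =>
          intro x
          rw [hFs]
          refine coverStep_le _ fun C hC _ => ?_
          obtain ⟨c, hc⟩ := hC
          exact (Finset.inf'_le _ hc).trans (ih c)
      exact (hbd n a).trans (hFmono (Nat.zero_le _) a)
  refine ⟨F (N + 1), hFanti _, fun a => hFmono (Nat.zero_le _) a, fun a b => ?_, ?_⟩
  · refine le_trans ?_ (hstab (N + 2) (a ⊔ b))
    rw [hFs (N + 1)]
    refine le_trans ?_ (le_coverStep _ {a, b} (by simp) ?_)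
    · refine Finset.le_inf' _ _ fun x hx => ?_
      rcases Finset.mem_insert.1 hx with rfl | hx
      · exact inf_le_left
      · rw [Finset.mem_singleton.1 hx]; exact inf_le_right
    · exact sup_le (Finset.le_sup' id (by simp)) (Finset.le_sup' id (by simp))
  · intro H h1 h2 h3 h4
    have : ∀ n a, (a, F n a) ∈ H := by
      intro n
      induction n with
      | zero => exact h4
      | succ n ih => rw [hFs]; exact coverStep_mem h1 h2 h3 _ ih
    exact this _

/-- A bi-ideal whose generators have first coordinates in a finite sublattice satisfying (T) is a
finite union of boxes with first corners in that sublattice. -/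
theorem exists_box_description {A : Type*} [Lattice A] [OrderBot A] (S : Sublattice A) [Fintype S]
    (hT : CondT S) (F : Finset (A × B)) (hF : ∀ x ∈ F, x.1 ∈ S) :
    ∃ g : S → B, Antitone g ∧ ∀ x : A × B, x ∈ biGen (F : Set (A × B)) ↔
      x.1 = ⊥ ∨ x.2 = ⊥ ∨ ∃ s : S, x.1 ≤ s ∧ x.2 ≤ g s := by
  classical
  let f : S → B := fun s => (F.filter fun x => (s : A) ≤ x.1).sup Prod.snd
  have hf : Antitone f := fun s t hst => Finset.sup_mono fun x hx => by
    obtain ⟨h1, h2⟩ := Finset.mem_filter.1 hx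
    exact Finset.mem_filter.2 ⟨h1, le_trans (show (s : A) ≤ t from hst) h2⟩
  obtain ⟨g, hg, hfg, hgsup, hgmem⟩ := exists_closed_map hT f hf
  have hgen := biGen_isBiIdeal (F : Set (A × B))
  refine ⟨g, hg, fun x => ⟨fun hx => ?_, ?_⟩⟩
  · refine biGen_subset (I := {x : A × B | x.1 = ⊥ ∨ x.2 = ⊥ ∨ ∃ s : S, x.1 ≤ s ∧ x.2 ≤ g s})
      ⟨?_, ?_, ?_, ?_⟩ ?_ hx
    · rintro ⟨a, b⟩ ⟨a', b'⟩ h1 h2 (h | h | ⟨s, hs, hs'⟩)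
      · exact Or.inl (le_bot_iff.1 (h1.trans h.le))
      · exact Or.inr (Or.inl (le_bot_iff.1 (h2.trans h.le)))
      · exact Or.inr (Or.inr ⟨s, h1.trans hs, h2.trans hs'⟩)
    · rintro x (h | h)
      · exact Or.inl h
      · exact Or.inr (Or.inl h)
    · rintro a b b' (h | h | ⟨s, hs, hs'⟩) h'
      · exact Or.inl h
      · simp only at h
        subst h
        simpa using h'
      · rcases h' with h' | h' | ⟨t, ht, ht'⟩
        · exact Or.inl h'
        · simp only at h'
          subst h'
          exact Or.inr (Or.inr ⟨s, hs, by simpa using hs'⟩)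
        · exact Or.inr (Or.inr ⟨s ⊓ t, le_inf hs ht,
            sup_le (hs'.trans (hg inf_le_left)) (ht'.trans (hg inf_le_right))⟩)
    · rintro a a' b (h | h | ⟨s, hs, hs'⟩) h'
      · simp only at h
        subst h
        simpa using h'
      · exact Or.inr (Or.inl h)
      · rcases h' with h' | h' | ⟨t, ht, ht'⟩
        · simp only at h'
          subst h'
          exact Or.inr (Or.inr ⟨s, by simpa using hs, hs'⟩)
        · exact Or.inr (Or.inl h')
        · exact Or.inr (Or.inr ⟨s ⊔ t, sup_le_sup hs ht, (le_inf hs' ht').trans (hgsup s t)⟩)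
    · intro y hy
      refine Or.inr (Or.inr ⟨⟨y.1, hF y hy⟩, le_rfl, le_trans ?_ (hfg _)⟩)
      exact Finset.le_sup (f := Prod.snd) (Finset.mem_filter.2 ⟨hy, le_rfl⟩)
  · obtain ⟨a, b⟩ := x
    rintro (h | h | ⟨s, hs, hs'⟩)
    · exact hgen.2.1 (Or.inl h)
    · exact hgen.2.1 (Or.inr h)
    · refine hgen.lower hs hs' ?_
      refine hgmem {y | ((y.1 : A), y.2) ∈ biGen (F : Set (A × B))}
        (fun a a' b b' h1 h2 h => hgen.lower h1 h2 h) (fun a b b' h h' => hgen.sup_right h h')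
        (fun a a' b h h' => hgen.sup_left h h') (fun t => ?_) s
      refine Finset.sup_induction (p := fun b => ((t : A), b) ∈ biGen (F : Set (A × B)))
        (hgen.bot_right _) (fun b hb b' hb' => hgen.sup_right hb hb') fun y hy => ?_
      obtain ⟨h1, h2⟩ := Finset.mem_filter.1 hy
      exact hgen.lower h2 le_rfl (subset_biGen _ h1)

theorem tensorIsLattice_of_condT {A : Type*} [Lattice A] [OrderBot A]
    (hA : ∀ F : Finset A, ∃ S : Sublattice A, ↑F ⊆ (S : Set A) ∧ (S : Set A).Finite ∧ CondT S) :
    TensorIsLattice A B := by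
  classical
  rw [tensorIsLattice_iff]
  intro F G
  obtain ⟨S, hFG, hfin, hT⟩ := hA (F.image Prod.fst ∪ G.image Prod.fst)
  have : Fintype S := hfin.fintype
  obtain ⟨g, hg, hgF⟩ := exists_box_description S hT F fun x hx => hFG (by
    simp only [Finset.coe_union, Finset.coe_image]
    exact Or.inl ⟨x, hx, rfl⟩)
  obtain ⟨g', hg', hgG⟩ := exists_box_description S hT G fun x hx => hFG (by
    simp only [Finset.coe_union, Finset.coe_image]
    exact Or.inr ⟨x, hx, rfl⟩)
  refine ⟨Finset.univ.image fun s : S => ((s : A), g s ⊓ g' s), Set.Subset.antisymm ?_ ?_⟩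
  · rintro ⟨a, b⟩ ⟨h1, h2⟩
    set E := Finset.univ.image fun s : S => ((s : A), g s ⊓ g' s)
    have hgen := biGen_isBiIdeal (E : Set (A × B))
    rcases (hgF _).1 h1 with h | h | ⟨s, hs, hs'⟩
    · exact hgen.2.1 (Or.inl h)
    · exact hgen.2.1 (Or.inr h)
    rcases (hgG _).1 h2 with h | h | ⟨t, ht, ht'⟩
    · exact hgen.2.1 (Or.inl h)
    · exact hgen.2.1 (Or.inr h)
    refine hgen.lower (a' := ((s ⊓ t : S) : A)) (b' := g (s ⊓ t) ⊓ g' (s ⊓ t)) (le_inf hs ht)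
      (le_inf (hs'.trans (hg inf_le_left)) (ht'.trans (hg' inf_le_right))) ?_
    exact subset_biGen _ (Finset.mem_coe.2 (Finset.mem_image_of_mem _ (Finset.mem_univ _)))
  · refine biGen_subset ((biGen_isBiIdeal _).inter (biGen_isBiIdeal _)) ?_
    intro x hx
    obtain ⟨s, -, rfl⟩ := Finset.mem_image.1 (Finset.mem_coe.1 hx)
    exact ⟨(hgF _).2 (Or.inr (Or.inr ⟨s, le_rfl, inf_le_left⟩)),
      (hgG _).2 (Or.inr (Or.inr ⟨s, le_rfl, inf_le_right⟩))⟩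

end Sufficiency

/-! ### Amenability forces finite unions of boxes -/

section Shadow

/-- Pairs `(b, Z)` of an element of `B` and a lower set `Z` of `B` containing it, ordered
componentwise. -/
@[ext] structure Shadow (B : Type*) [Lattice B] where
  /-- The element of `B`. -/
  pt : B
  /-- The lower set. -/
  Z : Set B
  lower : IsLowerSet Z
  mem : pt ∈ Z

namespace Shadow

variable {B : Type*} [Lattice B]

instance : PartialOrder (Shadow B) where
  le x y := x.pt ≤ y.pt ∧ x.Z ⊆ y.Z
  le_refl x := ⟨le_rfl, subset_rfl⟩
  le_trans x y z h h' := ⟨h.1.trans h'.1, h.2.trans h'.2⟩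
  le_antisymm x y h h' := Shadow.ext (h.1.antisymm h'.1) (h.2.antisymm h'.2)

instance : Lattice (Shadow B) where
  sup x y := ⟨x.pt ⊔ y.pt, x.Z ∪ y.Z ∪ Set.Iic (x.pt ⊔ y.pt),
    (x.lower.union y.lower).union (isLowerSet_Iic _), Or.inr le_rfl⟩
  le_sup_left _ _ := ⟨le_sup_left, fun _ h => Or.inl (Or.inl h)⟩
  le_sup_right _ _ := ⟨le_sup_right, fun _ h => Or.inl (Or.inr h)⟩
  sup_le x y z h h' := ⟨sup_le h.1 h'.1, by
    rintro r ((hr | hr) | hr)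
    · exact h.2 hr
    · exact h'.2 hr
    · exact z.lower (le_trans hr (sup_le h.1 h'.1)) z.mem⟩
  inf x y := ⟨x.pt ⊓ y.pt, x.Z ∩ y.Z, x.lower.inter y.lower,
    x.lower inf_le_left x.mem, y.lower inf_le_right y.mem⟩
  inf_le_left _ _ := ⟨inf_le_left, fun _ h => h.1⟩
  inf_le_right _ _ := ⟨inf_le_right, fun _ h => h.2⟩
  le_inf _ _ _ h h' := ⟨le_inf h.1 h'.1, fun _ hr => ⟨h.2 hr, h'.2 hr⟩⟩

/-- The embedding `b ↦ (b, ↓b)`. -/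
def emb (b : B) : Shadow B := ⟨b, Set.Iic b, isLowerSet_Iic b, le_rfl⟩

theorem emb_mono : Monotone (emb : B → Shadow B) := fun _ _ h => ⟨h, Set.Iic_subset_Iic.2 h⟩

theorem emb_sup (b c : B) : emb (b ⊔ c) ≤ emb b ⊔ emb c := ⟨le_rfl, fun _ h => Or.inr h⟩

theorem emb_inf (b c : B) : emb b ⊓ emb c ≤ emb (b ⊓ c) := ⟨le_rfl, fun _ h => le_inf h.1 h.2⟩

variable [OrderBot B]

instance : OrderBot (Shadow B) where
  bot := ⟨⊥, {⊥}, fun _ _ h h' => le_bot_iff.1 (h.trans (le_of_eq h')), rfl⟩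
  bot_le x := ⟨bot_le, by
    rintro r rfl
    exact x.lower bot_le x.mem⟩

theorem eq_bot_of_mem_bot {r : B} (h : r ∈ (⊥ : Shadow B).Z) : r = ⊥ := h

end Shadow

variable {A B : Type*} [Lattice A] [OrderBot A] [Lattice B] [OrderBot B]

/-- If `A ⊗ Shadow B` is a lattice, then every finitely generated bi-ideal of `A × B` is, apart from
the trivial pairs, a finite union of boxes `↓c`. -/
theorem exists_cap (h : TensorIsLattice A (Shadow B)) (F : Finset (A × B)) :
    ∃ C : Set (A × B), C.Finite ∧ C ⊆ biGen (F : Set (A × B)) ∧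
      ∀ x ∈ biGen (F : Set (A × B)), x.1 = ⊥ ∨ x.2 = ⊥ ∨ ∃ c ∈ C, x.1 ≤ c.1 ∧ x.2 ≤ c.2 := by
  classical
  set H := biGen (F : Set (A × B)) with hHdef
  have hH : IsBiIdeal A B H := biGen_isBiIdeal _
  let F1 : Finset (A × Shadow B) := F.image fun x => (x.1, Shadow.emb x.2)
  let top : A := F.sup Prod.fst
  let full : Shadow B := ⟨⊥, Set.univ, isLowerSet_univ, trivial⟩
  let F2 : Finset (A × Shadow B) := {(top, full)}
  obtain ⟨G, hG⟩ := tensorIsLattice_iff.1 h F1 F2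
  have hI1 := biGen_isBiIdeal (F1 : Set (A × Shadow B))
  have hI2 := biGen_isBiIdeal (F2 : Set (A × Shadow B))
  have hHemb : ∀ x ∈ H, (x.1, Shadow.emb x.2) ∈ biGen (F1 : Set (A × Shadow B)) := by
    intro x hx
    refine biGen_subset (I := {x : A × B | (x.1, Shadow.emb x.2) ∈ biGen (F1 : Set (A × Shadow B))})
      ⟨?_, ?_, ?_, ?_⟩ ?_ hx
    · exact fun p q h1 h2 hq => hI1.lower h1 (Shadow.emb_mono h2) hq
    · rintro ⟨a, b⟩ (h | h)
      · exact hI1.2.1 (Or.inl h)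
      · refine hI1.lower le_rfl (b' := ⊥) ?_ (hI1.bot_right _)
        simp only at h
        subst h
        exact ⟨le_rfl, fun r hr => le_bot_iff.1 hr⟩
    · exact fun a b b' h h' => hI1.lower le_rfl (Shadow.emb_sup b b') (hI1.sup_right h h')
    · exact fun a a' b h h' => hI1.sup_left h h'
    · exact fun y hy => subset_biGen _ (Finset.mem_coe.2 (Finset.mem_image_of_mem _ hy))
  have hHtop : ∀ x ∈ H, x.2 = ⊥ ∨ x.1 ≤ top := by
    intro x hx
    refine biGen_subset (I := {x : A × B | x.2 = ⊥ ∨ x.1 ≤ top}) ⟨?_, ?_, ?_, ?_⟩ ?_ hx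
    · rintro p q h1 h2 (h | h)
      · exact Or.inl (le_bot_iff.1 (h2.trans h.le))
      · exact Or.inr (h1.trans h)
    · rintro ⟨a, b⟩ (h | h)
      · exact Or.inr (h.le.trans bot_le)
      · exact Or.inl h
    · rintro a b b' (h | h) (h' | h')
      · exact Or.inl (by simp_all)
      · exact Or.inr h'
      · exact Or.inr h
      · exact Or.inr h
    · rintro a a' b (h | h) (h' | h')
      · exact Or.inl h
      · exact Or.inl h
      · exact Or.inl h'
      · exact Or.inr (sup_le h h')
    · exact fun y hy => Or.inr (Finset.le_sup (f := Prod.fst) hy)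
  have h1 : ∀ x ∈ biGen (F1 : Set (A × Shadow B)), x.1 = ⊥ ∨ ∃ b, (x.1, b) ∈ H ∧ x.2 ≤ Shadow.emb b := by
    intro x hx
    refine biGen_subset (I := {x : A × Shadow B | x.1 = ⊥ ∨ ∃ b, (x.1, b) ∈ H ∧ x.2 ≤ Shadow.emb b})
      ⟨?_, ?_, ?_, ?_⟩ ?_ hx
    · rintro p q h1 h2 (h | ⟨b, hb, hb'⟩)
      · exact Or.inl (le_bot_iff.1 (h1.trans h.le))
      · exact Or.inr ⟨b, hH.lower h1 le_rfl hb, h2.trans hb'⟩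
    · rintro ⟨a, b⟩ (h | h)
      · exact Or.inl h
      · exact Or.inr ⟨⊥, hH.bot_right _, h.le.trans bot_le⟩
    · rintro a β β' (h | ⟨b, hb, hb'⟩) h'
      · exact Or.inl h
      · rcases h' with h' | ⟨c, hc, hc'⟩
        · exact Or.inl h'
        · exact Or.inr ⟨b ⊔ c, hH.sup_right hb hc, sup_le (hb'.trans (Shadow.emb_mono le_sup_left))
            (hc'.trans (Shadow.emb_mono le_sup_right))⟩
    · rintro a a' β (h | ⟨b, hb, hb'⟩) h'
      · simp only at h
        subst h
        simpa using h'
      · rcases h' with h' | ⟨c, hc, hc'⟩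
        · simp only at h'
          subst h'
          exact Or.inr ⟨b, by simpa using hb, hb'⟩
        · exact Or.inr ⟨b ⊓ c, hH.sup_left (hH.lower le_rfl inf_le_left hb)
            (hH.lower le_rfl inf_le_right hc), (le_inf hb' hc').trans (Shadow.emb_inf b c)⟩
    · intro y hy
      obtain ⟨x, hx, rfl⟩ := Finset.mem_image.1 (Finset.mem_coe.1 hy)
      exact Or.inr ⟨x.2, subset_biGen _ hx, le_rfl⟩
  have h2 : ∀ x ∈ biGen (F2 : Set (A × Shadow B)), x.1 = ⊥ ∨ x.2.pt = ⊥ := by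
    intro x hx
    refine biGen_subset (I := {x : A × Shadow B | x.1 = ⊥ ∨ x.2.pt = ⊥})
      ⟨?_, ?_, ?_, ?_⟩ ?_ hx
    · rintro p q h1 h2 (h | h)
      · exact Or.inl (le_bot_iff.1 (h1.trans h.le))
      · exact Or.inr (le_bot_iff.1 (h2.1.trans h.le))
    · rintro ⟨a, b⟩ (h | h)
      · exact Or.inl h
      · exact Or.inr (congrArg Shadow.pt h)
    · rintro a β β' (h | h) (h' | h')
      · exact Or.inl h
      · exact Or.inl h
      · exact Or.inl h'
      · exact Or.inr (le_bot_iff.1 (sup_le (le_of_eq h) (le_of_eq h')))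
    · rintro a a' β (h | h) (h' | h')
      · exact Or.inl (by simp_all)
      · exact Or.inr h'
      · exact Or.inr h
      · exact Or.inr h
    · intro y hy
      have : y = (top, full) := by simpa [F2] using hy
      subst this
      exact Or.inr rfl
  -- a bounding box for every generator of the intersection
  have hbd : ∀ y : A × Shadow B, ∃ b, y ∈ G → y.1 = ⊥ ∨
      ((y.1, b) ∈ H ∧ y.2 ≤ Shadow.emb b) := by
    intro y
    by_cases hy : y ∈ G
    · have : y ∈ biGen (F1 : Set _) ∩ biGen (F2 : Set _) := hG ▸ subset_biGen _ hy
      rcases h1 y this.1 with h | ⟨b, hb⟩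
      · exact ⟨⊥, fun _ => Or.inl h⟩
      · exact ⟨b, fun _ => Or.inr hb⟩
    · exact ⟨⊥, fun h => (hy h).elim⟩
  choose bd hbd using hbd
  -- close the boxes under `(a, b), (a', b') ↦ (a ⊔ a', b ⊓ b')`, the join of `A × Bᵒᵈ`
  let C0 : Set (A × Bᵒᵈ) := (fun y : A × Shadow B => (y.1, OrderDual.toDual (bd y))) ''
    {y | y ∈ G ∧ y.1 ≠ ⊥}
  have hC0 : C0.Finite := (G.finite_toSet.subset fun y hy => hy.1).image _
  let C : Set (A × B) := {c | (c.1, OrderDual.toDual c.2) ∈ supClosure C0}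
  have hCsup : ∀ c ∈ C, ∀ c' ∈ C, (c.1 ⊔ c'.1, c.2 ⊓ c'.2) ∈ C := fun c hc c' hc' =>
    (supClosed_supClosure : SupClosed (supClosure C0)) (a := (c.1, OrderDual.toDual c.2)) hc
      (b := (c'.1, OrderDual.toDual c'.2)) hc'
  refine ⟨C, ?_, ?_, ?_⟩
  · refine (hC0.supClosure).preimage (f := fun c : A × B => (c.1, OrderDual.toDual c.2)) ?_
    rintro ⟨a, b⟩ - ⟨a', b'⟩ - h
    simpa using h
  · have : supClosure C0 ⊆ {c | (c.1, OrderDual.ofDual c.2) ∈ H} := by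
      refine supClosure_min ?_ ?_
      · rintro _ ⟨y, ⟨hy, hy0⟩, rfl⟩
        exact ((hbd y hy).resolve_left hy0).1
      · rintro ⟨a, b⟩ h ⟨a', b'⟩ h'
        exact hH.sup_left (hH.lower le_rfl inf_le_left h) (hH.lower le_rfl inf_le_right h')
    exact fun c hc => this hc
  · rintro ⟨a, b⟩ hab
    by_cases hb0 : b = ⊥
    · exact Or.inr (Or.inl hb0)
    have ha : a ≤ top := (hHtop _ hab).resolve_left hb0
    -- the pair `(a, (⊥, ↓b))` lies in the intersection
    let β : Shadow B := ⟨⊥, Set.Iic b, isLowerSet_Iic b, bot_le⟩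
    have hmem : (a, β) ∈ biGen (G : Set (A × Shadow B)) := by
      rw [← hG]
      exact ⟨hI1.lower (b' := Shadow.emb b) le_rfl ⟨bot_le, subset_rfl⟩ (hHemb _ hab),
        hI2.lower (b' := full) ha ⟨le_rfl, Set.subset_univ _⟩ (subset_biGen _ (by simp [F2]))⟩
    have hM : ∀ x ∈ biGen (G : Set (A × Shadow B)), x.1 = ⊥ ∨ (x.2.pt = ⊥ ∧
        ∀ r ∈ x.2.Z, r = ⊥ ∨ ∃ c ∈ C, x.1 ≤ c.1 ∧ r ≤ c.2) := by
      intro x hx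
      refine biGen_subset (I := {x : A × Shadow B | x.1 = ⊥ ∨ (x.2.pt = ⊥ ∧
        ∀ r ∈ x.2.Z, r = ⊥ ∨ ∃ c ∈ C, x.1 ≤ c.1 ∧ r ≤ c.2)}) ⟨?_, ?_, ?_, ?_⟩ ?_ hx
      · rintro p q h1 h2 (h | ⟨h, h'⟩)
        · exact Or.inl (le_bot_iff.1 (h1.trans h.le))
        · refine Or.inr ⟨le_bot_iff.1 (h2.1.trans h.le), fun r hr => ?_⟩
          rcases h' r (h2.2 hr) with h0 | ⟨c, hc, hc1, hc2⟩
          · exact Or.inl h0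
          · exact Or.inr ⟨c, hc, h1.trans hc1, hc2⟩
      · rintro ⟨a, b⟩ (h | h)
        · exact Or.inl h
        · simp only at h
          subst h
          exact Or.inr ⟨rfl, fun r hr => Or.inl (Shadow.eq_bot_of_mem_bot hr)⟩
      · rintro a β β' (h | ⟨h, hr⟩) h'
        · exact Or.inl h
        · rcases h' with h' | ⟨h', hr'⟩
          · exact Or.inl h'
          · have hpt : β.pt ⊔ β'.pt = ⊥ := le_bot_iff.1 (sup_le (le_of_eq h) (le_of_eq h'))
            refine Or.inr ⟨hpt, ?_⟩
            rintro r ((h0 | h0) | h0)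
            · exact hr r h0
            · exact hr' r h0
            · exact Or.inl (le_bot_iff.1 (le_trans h0 (le_of_eq hpt)))
      · rintro a a' β (h | ⟨h, hr⟩) h'
        · simp only at h
          subst h
          simpa using h'
        · rcases h' with h' | ⟨h', hr'⟩
          · simp only at h'
            subst h'
            exact Or.inr ⟨h, by simpa using hr⟩
          · refine Or.inr ⟨h, fun r hrm => ?_⟩
            rcases hr r hrm with h0 | ⟨c, hc, hc1, hc2⟩
            · exact Or.inl h0
            rcases hr' r hrm with h0 | ⟨c', hc', hc1', hc2'⟩
            · exact Or.inl h0
            exact Or.inr ⟨_, hCsup c hc c' hc', sup_le_sup hc1 hc1', le_inf hc2 hc2'⟩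
      · intro y hy
        by_cases hy0 : y.1 = ⊥
        · exact Or.inl hy0
        · have hy12 : y ∈ biGen (F1 : Set _) ∩ biGen (F2 : Set _) := hG ▸ subset_biGen _ hy
          have hyb := (hbd y hy).resolve_left hy0
          exact Or.inr ⟨(h2 y hy12.2).resolve_left hy0, fun r hr => Or.inr ⟨(y.1, bd y),
            (subset_supClosure : C0 ⊆ supClosure C0) ⟨y, ⟨hy, hy0⟩, rfl⟩, le_rfl, hyb.2.2 hr⟩⟩
    rcases hM _ hmem with h0 | ⟨-, hr⟩
    · exact Or.inl h0
    · rcases hr b le_rfl with h0 | hc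
      · exact Or.inr (Or.inl h0)
      · exact Or.inr (Or.inr hc)

end Shadow

/-! ### Amenable lattices are locally finite -/

theorem locallyFinite_of_amenable {A : Type u} [Lattice A] [OrderBot A]
    (h : ∀ (B : Type u) [Lattice B] [OrderBot B], TensorIsLattice A B) (F : Finset A) :
    ∃ S : Set A, ↑F ⊆ S ∧ S.Finite ∧ SupClosed S ∧ InfClosed S := by
  classical
  let ι : A → WithBot Aᵒᵈ := fun a => ((OrderDual.toDual a : Aᵒᵈ) : WithBot Aᵒᵈ)
  have hι : ∀ a b, a ≤ b → ι b ≤ ι a := fun a b hab => WithBot.coe_le_coe.2 hab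
  have hι' : ∀ a b, ι b ≤ ι a → a ≤ b := fun a b hab =>
    (WithBot.coe_le_coe (α := Aᵒᵈ)).1 hab
  let E : Finset (A × WithBot Aᵒᵈ) := F.image fun a => (a, ι a)
  obtain ⟨C, hCfin, hCH, hC⟩ := exists_cap (h (Shadow (WithBot Aᵒᵈ))) E
  set H := biGen (E : Set (A × WithBot Aᵒᵈ))
  have hH : IsBiIdeal A (WithBot Aᵒᵈ) H := biGen_isBiIdeal _
  have hHle : ∀ x ∈ H, x.1 = ⊥ ∨ x.2 = ⊥ ∨ ∃ d, x.1 ≤ d ∧ x.2 = ι d := by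
    intro x hx
    refine biGen_subset (I := {x : A × WithBot Aᵒᵈ | x.1 = ⊥ ∨ x.2 = ⊥ ∨ ∃ d, x.1 ≤ d ∧ x.2 = ι d})
      ⟨?_, ?_, ?_, ?_⟩ ?_ hx
    · rintro ⟨a, b⟩ ⟨a', b'⟩ h1 h2 (h | h | ⟨d, hd, hd'⟩)
      · exact Or.inl (le_bot_iff.1 (h1.trans h.le))
      · exact Or.inr (Or.inl (le_bot_iff.1 (h2.trans h.le)))
      · induction b with
        | bot => exact Or.inr (Or.inl rfl)
        | coe b =>
          refine Or.inr (Or.inr ⟨OrderDual.ofDual b, (h1.trans hd).trans ?_, rfl⟩)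
          simp only at hd'
          subst hd'
          exact hι' _ _ h2
    · rintro x (h | h)
      · exact Or.inl h
      · exact Or.inr (Or.inl h)
    · rintro a b b' (h | h | ⟨d, hd, hd'⟩) h'
      · exact Or.inl h
      · simp only at h
        subst h
        simpa using h'
      · rcases h' with h' | h' | ⟨e, he, he'⟩
        · exact Or.inl h'
        · simp only at h'
          subst h'
          exact Or.inr (Or.inr ⟨d, hd, by simpa using hd'⟩)
        · simp only at hd' he'
          subst hd' he'
          exact Or.inr (Or.inr ⟨d ⊓ e, le_inf hd he, rfl⟩)
    · rintro a a' b (h | h | ⟨d, hd, hd'⟩) h'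
      · simp only at h
        subst h
        simpa using h'
      · exact Or.inr (Or.inl h)
      · rcases h' with h' | h' | ⟨e, he, he'⟩
        · simp only at h'
          subst h'
          exact Or.inr (Or.inr ⟨d, by simpa using hd, hd'⟩)
        · exact Or.inr (Or.inl h')
        · have hde : e ≤ d := hι' _ _ (by simp only at hd' he'; rw [← hd', he'])
          exact Or.inr (Or.inr ⟨d, sup_le hd (he.trans hde), hd'⟩)
    · intro y hy
      obtain ⟨a, -, rfl⟩ := Finset.mem_image.1 (Finset.mem_coe.1 hy)
      exact Or.inr (Or.inr ⟨a, le_rfl, rfl⟩)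
  refine ⟨{s | (s, ι s) ∈ H}, ?_, ?_, ?_, ?_⟩
  · exact fun a ha => subset_biGen _ (Finset.mem_coe.2 (Finset.mem_image_of_mem _ ha))
  · refine ((hCfin.image Prod.fst).insert ⊥).subset fun s hs => ?_
    rcases hC _ hs with h0 | h0 | ⟨c, hc, hc1, hc2⟩
    · exact Or.inl h0
    · exact (WithBot.coe_ne_bot h0).elim
    · rcases hHle c (hCH hc) with h0 | h0 | ⟨d, hd, hd'⟩
      · exact Or.inl (le_bot_iff.1 (hc1.trans h0.le))
      · exact (WithBot.coe_ne_bot (le_bot_iff.1 (hc2.trans h0.le))).elim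
      · have hds : d ≤ s := hι' _ _ (hc2.trans hd'.le)
        exact Or.inr ⟨c, hc, (hd.trans hds).antisymm hc1⟩
  · intro s hs t ht
    exact hH.sup_left (hH.lower le_rfl (hι _ _ le_sup_left) hs)
      (hH.lower le_rfl (hι _ _ le_sup_right) ht)
  · intro s hs t ht
    -- the join of `ι s` and `ι t` is `ι (s ⊓ t)`
    exact hH.sup_right (b := ι s) (b' := ι t) (hH.lower inf_le_left le_rfl hs)
      (hH.lower inf_le_right le_rfl ht)

/-! ### Amenable lattices satisfy (T) locally -/

section Level

/-- Increasing sequences of lower sets of `A`, each containing `⊥`, such that joins of two elements of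
one level belong to the next level; ordered by levelwise inclusion. -/
@[ext] structure LevelSet (A : Type*) [Lattice A] [OrderBot A] where
  /-- The set at a given level. -/
  lev : ℕ → Set A
  lower : ∀ i, IsLowerSet (lev i)
  bot_mem : ∀ i, ⊥ ∈ lev i
  sup_mem : ∀ i x y, x ∈ lev i → y ∈ lev i → x ⊔ y ∈ lev (i + 1)

namespace LevelSet

variable {A : Type*} [Lattice A] [OrderBot A]

instance : PartialOrder (LevelSet A) where
  le X Y := ∀ i, X.lev i ⊆ Y.lev i
  le_refl _ _ := subset_rfl
  le_trans _ _ _ h h' i := (h i).trans (h' i)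
  le_antisymm _ _ h h' := LevelSet.ext (funext fun i => (h i).antisymm (h' i))

instance : InfSet (LevelSet A) where
  sInf T :=
    { lev := fun i => {x | ∀ X ∈ T, x ∈ X.lev i}
      lower := fun i _ _ hxy h X hX => X.lower i hxy (h X hX)
      bot_mem := fun i X _ => X.bot_mem i
      sup_mem := fun i x y hx hy X hX => X.sup_mem i x y (hx X hX) (hy X hX) }

noncomputable instance : CompleteLattice (LevelSet A) :=
  completeLatticeOfInf _ fun _ => ⟨fun X hX _ _ hx => hx X hX, fun _ hY i _ hx _ hX => hY hX i hx⟩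

theorem mono (X : LevelSet A) {i j : ℕ} (h : i ≤ j) : X.lev i ⊆ X.lev j :=
  monotone_nat_of_le_succ (f := X.lev) (fun n x hx => by simpa using X.sup_mem n x x hx hx) h

/-- The constant sequence `↓a`. -/
def principal (a : A) : LevelSet A where
  lev _ := Set.Iic a
  lower _ := isLowerSet_Iic a
  bot_mem _ := bot_le
  sup_mem _ _ _ hx hy := sup_le hx hy

theorem mem_lev_inf {X Y : LevelSet A} {i : ℕ} {x : A} (hX : x ∈ X.lev i) (hY : x ∈ Y.lev i) :
    x ∈ (X ⊓ Y).lev i := by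
  -- the levelwise intersection of `X` and `Y` is a lower bound of both
  let W : LevelSet A :=
    { lev := fun i => X.lev i ∩ Y.lev i
      lower := fun i => (X.lower i).inter (Y.lower i)
      bot_mem := fun i => ⟨X.bot_mem i, Y.bot_mem i⟩
      sup_mem := fun i x y hx hy => ⟨X.sup_mem i x y hx.1 hy.1, Y.sup_mem i x y hx.2 hy.2⟩ }
  have h1 : W ≤ X := fun _ _ h => h.1
  have h2 : W ≤ Y := fun _ _ h => h.2
  exact (le_inf h1 h2 : W ≤ X ⊓ Y) i ⟨hX, hY⟩

theorem mem_lev_top (i : ℕ) (x : A) : x ∈ (⊤ : LevelSet A).lev i := by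
  let W : LevelSet A :=
    { lev := fun _ => Set.univ
      lower := fun _ => isLowerSet_univ
      bot_mem := fun _ => trivial
      sup_mem := fun _ _ _ _ _ => trivial }
  exact (le_top : W ≤ ⊤) i trivial

end LevelSet

variable {A : Type*} [Lattice A] [OrderBot A] {K : Type*} [Lattice K] [Fintype K]

open OrderDual LevelSet

/-- Every trip along the cyclic set `Z` delays by one level the moment at which `f p` enters: for all
`n` and all `p ∈ Z`, the bi-ideal `H` contains a pair `(f p, X)` such that below level `n` the sequence
`X` only contains elements lying below `f s` for some `s < p`. -/
theorem exists_late (f : K → A) (hsup : ∀ x y, f (x ⊔ y) = f x ⊔ f y)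
    (hinf : ∀ x y, f (x ⊓ y) = f x ⊓ f y) {H : Set (A × (LevelSet A)ᵒᵈ)}
    (hH : IsBiIdeal A (LevelSet A)ᵒᵈ H) (hfH : ∀ k, (f k, toDual (principal (f k))) ∈ H)
    (Z : Set K) (hZ : ∀ p ∈ Z, ∃ I, SMinimalPair K p I ∧ ∃ j ∈ I, j ∈ Z) (n : ℕ) :
    ∀ p ∈ Z, ∃ X : LevelSet A, (f p, toDual X) ∈ H ∧
      ∀ i, ∀ x ∈ X.lev i, x ≤ f p ∧ (n ≤ i ∨ ∃ s, s < p ∧ x ≤ f s) := by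
  classical
  have hmono : Monotone f := fun x y hxy => by
    rw [← sup_eq_right.2 hxy, hsup]
    exact le_sup_left
  induction n with
  | zero => exact fun p _ => ⟨_, hfH p, fun i x hx => ⟨hx, Or.inl (Nat.zero_le _)⟩⟩
  | succ n ih =>
    intro p hp
    obtain ⟨I, hI, j, hj, hjZ⟩ := hZ p hp
    obtain ⟨Xj, hXjH, hXj⟩ := ih j hjZ
    obtain ⟨-, hIirr, hcard, -, ⟨hIne, hpI⟩, hmin⟩ := id hI
    -- replacing `j` by the join-irreducibles strictly below it destroys the cover of `p`
    let J : Finset K := I.erase j ∪ Finset.univ.filter fun q => SJoinIrr K q ∧ q < j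
    have hJne : J.Nonempty := by
      have : (I.erase j).Nonempty := by
        rw [← Finset.card_pos, Finset.card_erase_of_mem hj]
        omega
      exact this.mono Finset.subset_union_left
    let a := J.sup' hJne id
    have hpa : ¬ p ≤ a := by
      intro hpa
      have hsub := hmin J hJne
        (by
          intro q hq
          rcases Finset.mem_union.1 hq with hq | hq
          · exact hIirr q (Finset.mem_of_mem_erase hq)
          · exact (Finset.mem_filter.1 hq).2.1)
        (by
          intro q hq
          rcases Finset.mem_union.1 hq with hq | hq
          · exact ⟨q, Finset.mem_of_mem_erase hq, le_rfl⟩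
          · exact ⟨j, hj, (Finset.mem_filter.1 hq).2.2.le⟩)
        hpa
      rcases Finset.mem_union.1 (hsub hj) with h | h
      · exact Finset.notMem_erase j I h
      · exact lt_irrefl j (Finset.mem_filter.1 h).2.2
    have hIa : ∀ q ∈ I, q ≠ j → q ≤ a := fun q hq hqj =>
      Finset.le_sup' id (Finset.mem_union_left _ (Finset.mem_erase.2 ⟨hqj, hq⟩))
    have hja : ∀ s, s < j → s ≤ a := fun s hs => le_of_irr_le s a fun q hq hqs =>
      Finset.le_sup' id (Finset.mem_union_right _
        (Finset.mem_filter.2 ⟨Finset.mem_univ _, hq, hqs.trans_lt hs⟩))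
    let X : LevelSet A :=
      { lev := fun i => {x | x ≤ f a ∨ (i = n ∧ ∃ y ∈ I, x ≤ f y) ∨ n < i}
        lower := by
          rintro i x y hxy (h | ⟨h, z, hz, hxz⟩ | h)
          · exact Or.inl (hxy.trans h)
          · exact Or.inr (Or.inl ⟨h, z, hz, hxy.trans hxz⟩)
          · exact Or.inr (Or.inr h)
        bot_mem := fun i => Or.inl bot_le
        sup_mem := by
          rintro i x y (h | ⟨h, -⟩ | h) (h' | ⟨h', -⟩ | h')
          · exact Or.inl (sup_le h h')
          all_goals exact Or.inr (Or.inr (by omega)) }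
    have hXmem : ∀ q ∈ I, (f q, toDual X) ∈ H := by
      intro q hq
      by_cases hqj : q = j
      · subst hqj
        refine hH.lower le_rfl (b' := toDual Xj) ?_ hXjH
        refine toDual_le_toDual.2 fun i x hx => ?_
        obtain ⟨hxq, hni | ⟨s, hs, hxs⟩⟩ := hXj i x hx
        · rcases hni.eq_or_lt with h | h
          · exact Or.inr (Or.inl ⟨h.symm, q, hq, hxq⟩)
          · exact Or.inr (Or.inr h)
        · exact Or.inl (hxs.trans (hmono (hja s hs)))
      · refine hH.lower le_rfl (b' := toDual (principal (f q))) ?_ (hfH q)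
        exact toDual_le_toDual.2 fun i x hx => Or.inl (le_trans hx (hmono (hIa q hq hqj)))
    have hXp : (f p, toDual X) ∈ H := by
      refine hH.lower (hmono hpI) le_rfl ?_
      refine Finset.sup'_induction hIne id (p := fun x => (f x, toDual X) ∈ H) ?_ hXmem
      intro x hx y hy
      rw [hsup]
      exact hH.sup_left hx hy
    refine ⟨principal (f p) ⊓ X, hH.sup_right (hfH p) hXp, fun i x hx => ?_⟩
    have hxp : x ≤ f p := (inf_le_left : principal (f p) ⊓ X ≤ principal (f p)) i hx
    have hxX : x ∈ X.lev i := (inf_le_right : principal (f p) ⊓ X ≤ X) i hx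
    refine ⟨hxp, ?_⟩
    rcases hxX with h | ⟨-, y, hy, hxy⟩ | h
    · refine Or.inr ⟨p ⊓ a, inf_lt_left.2 hpa, ?_⟩
      rw [hinf]
      exact le_inf hxp h
    · refine Or.inr ⟨p ⊓ y, inf_lt_left.2 (hI.not_le hy), ?_⟩
      rw [hinf]
      exact le_inf hxp hxy
    · exact Or.inl h

theorem condT_of_amenable {A : Type u} [Lattice A] [OrderBot A]
    (h : ∀ (B : Type u) [Lattice B] [OrderBot B], TensorIsLattice A B)
    {K : Type*} [Lattice K] [Fintype K] (f : K → A) (hf : Function.Injective f)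
    (hsup : ∀ x y, f (x ⊔ y) = f x ⊔ f y) (hinf : ∀ x y, f (x ⊓ y) = f x ⊓ f y) : CondT K := by
  classical
  rcases condT_or_exists_cyclic (L := K) with hT | ⟨Z, ⟨p, hp⟩, hZ⟩
  · exact hT
  exfalso
  let E : Finset (A × (LevelSet A)ᵒᵈ) :=
    Finset.univ.image fun k => (f k, toDual (principal (f k)))
  obtain ⟨C, hCfin, hCH, hC⟩ := exists_cap (h (Shadow (LevelSet A)ᵒᵈ)) E
  set H := biGen (E : Set (A × (LevelSet A)ᵒᵈ))
  have hH : IsBiIdeal A (LevelSet A)ᵒᵈ H := biGen_isBiIdeal _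
  have hfH : ∀ k, (f k, toDual (principal (f k))) ∈ H := fun k =>
    subset_biGen _ (Finset.mem_coe.2 (Finset.mem_image_of_mem _ (Finset.mem_univ k)))
  have hHlev : ∀ x ∈ H, ∃ m, x.1 ∈ (ofDual x.2).lev m := by
    intro x hx
    refine biGen_subset (I := {x : A × (LevelSet A)ᵒᵈ | ∃ m, x.1 ∈ (ofDual x.2).lev m})
      ⟨?_, ?_, ?_, ?_⟩ ?_ hx
    · rintro x y h1 h2 ⟨m, hm⟩
      exact ⟨m, (ofDual x.2).lower m h1 ((show ofDual y.2 ≤ ofDual x.2 from h2) m hm)⟩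
    · rintro ⟨a, b⟩ (h | h)
      · simp only at h
        subst h
        exact ⟨0, LevelSet.bot_mem _ _⟩
      · simp only at h
        subst h
        exact ⟨0, mem_lev_top _ _⟩
    · rintro a b b' ⟨m, hm⟩ ⟨m', hm'⟩
      exact ⟨max m m', mem_lev_inf (LevelSet.mono _ (le_max_left _ _) hm)
        (LevelSet.mono _ (le_max_right _ _) hm')⟩
    · rintro a a' b ⟨m, hm⟩ ⟨m', hm'⟩
      exact ⟨max m m' + 1, LevelSet.sup_mem _ _ _ _ (LevelSet.mono _ (le_max_left _ _) hm)
        (LevelSet.mono _ (le_max_right _ _) hm')⟩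
    · intro y hy
      obtain ⟨k, -, rfl⟩ := Finset.mem_image.1 (Finset.mem_coe.1 hy)
      exact ⟨0, le_refl (f k)⟩
  -- a level by which all finitely many boxes contain their first corner
  obtain ⟨N, hN⟩ : ∃ N, ∀ c ∈ C, c.1 ∈ (ofDual c.2).lev N := by
    choose! m hm using hHlev
    refine ⟨hCfin.toFinset.sup m, fun c hc => LevelSet.mono _ ?_ (hm c (hCH hc))⟩
    exact Finset.le_sup (hCfin.mem_toFinset.2 hc)
  have hmono : Monotone f := fun x y hxy => by
    rw [← sup_eq_right.2 hxy, hsup]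
    exact le_sup_left
  have hlt : ∀ s, s < p → ¬ f p ≤ f s := fun s hs hps =>
    hs.ne (hf ((hmono hs.le).antisymm hps))
  obtain ⟨X, hXH, hX⟩ := exists_late f hsup hinf hH hfH Z hZ (N + 1) p hp
  have hpX : f p ∈ X.lev N := by
    rcases hC _ hXH with h0 | h0 | ⟨c, hc, hc1, hc2⟩
    · simp only at h0
      rw [h0]
      exact X.bot_mem _
    · have : X = ⊤ := h0
      rw [this]
      exact mem_lev_top _ _
    · exact (show ofDual c.2 ≤ X from hc2) N ((ofDual c.2).lower N hc1 (hN c hc))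
  obtain ⟨-, h1 | ⟨s, hs, hps⟩⟩ := hX N _ hpX
  · omega
  · exact hlt s hs hps

end Level

/-- A lattice `A` with zero is amenable (for every lattice `B` with zero, the tensor
product `A ⊗ B` is a lattice) if and only if `A` is locally finite and every finite
sublattice of `A` satisfies condition (T∨). -/
theorem amenable_iff_locallyFinite_and_condT (A : Type u) [Lattice A] [OrderBot A] :
    (∀ (B : Type u) [Lattice B] [OrderBot B], TensorIsLattice A B) ↔
    ((∀ F : Finset A, ∃ S : Set A, ↑F ⊆ S ∧ S.Finite ∧ SupClosed S ∧ InfClosed S) ∧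
     (∀ (K : Type u) [Lattice K] [Fintype K] (f : K → A),
        Function.Injective f → (∀ x y, f (x ⊔ y) = f x ⊔ f y) →
        (∀ x y, f (x ⊓ y) = f x ⊓ f y) → CondT K)) := by
  constructor
  · intro h
    exact ⟨locallyFinite_of_amenable h, fun K _ _ f hf hsup hinf => condT_of_amenable h f hf hsup hinf⟩
  · rintro ⟨hfin, hT⟩ B _ _
    refine tensorIsLattice_of_condT fun F => ?_
    obtain ⟨S, hFS, hS, hsup, hinf⟩ := hfin F
    let S' : Sublattice A := ⟨S, hsup, hinf⟩
    have : Fintype S' := hS.fintype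
    exact ⟨S', hFS, hS, hT S' Subtype.val Subtype.val_injective (fun _ _ => rfl) fun _ _ => rfl⟩
end

section
/- For every lattice L, M₃⟨L⟩ is a lattice, and the diagonal map x ↦ (x,x,x) is an injective lattice homomorphism from L into M₃⟨L⟩ that is congruence-preserving: for every lattice congruence θ of L there is exactly one lattice congruence Θ of M₃⟨L⟩ such that Θ((x,x,x),(y,y,y)) holds if and only if θ(x,y) holds, for all x, y ∈ L. -/
/-!
A triple `(a, b, c)` is Boolean iff `a = (a ⊔ b) ⊓ (a ⊔ c)` and cyclically, and
`(a, b, c) ↦ ((a ⊔ b) ⊓ (a ⊔ c), (a ⊔ b) ⊓ (b ⊔ c), (a ⊔ c) ⊓ (b ⊔ c))` is a closure operator on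
`L³` whose closed elements are exactly the Boolean triples. So meets in `M₃⟨L⟩` are componentwise
and a join is the closure of the componentwise join (`isGLB_inf`, `isLUB_sup`). Both operations
are given by lattice polynomials, so the componentwise extension of `θ` is a congruence of
`M₃⟨L⟩`, and it restricts to `θ` on the diagonal.

For uniqueness, any congruence `Φ` of `M₃⟨L⟩` is shown to be determined by its restriction to the
diagonal. Let `o` and `i` be a lower and an upper bound of all components of `(a, b, c)` and
`(a', b', c')` (they replace the `0` and `1` that `L` may lack). If `Φ` relates these two triples,
meeting with `(i, o, o)` relates `(a, o, o)` to `(a', o, o)`; joining with `(o, i, o)` and with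
`(o, o, i)` relates `(a, i, a)` to `(a', i, a')` and `(a, a, i)` to `(a', a', i)`; the meet of these
relates `(a, a, a)` to `(a', a', a')` (`diag_of_rel`). Conversely, if `Φ` relates
the diagonal elements of `a, a'`, of `b, b'` and of `c, c'`, then it relates `(a, o, o)` to
`(a', o, o)` and so on, and `(a, b, c)` is the join of `(a, o, o)`, `(o, b, o)` and `(o, o, c)`
(`rel_of_diag`).
-/

/-- A lattice congruence. -/
def LatCon (L : Type*) [Lattice L] (θ : L → L → Prop) : Prop :=
  Equivalence θ ∧
  ∀ a b c d : L, θ a b → θ c d → θ (a ⊔ c) (b ⊔ d) ∧ θ (a ⊓ c) (b ⊓ d)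

/-- A lattice congruence on a poset (which is a lattice), expressed via least upper
bounds and greatest lower bounds. -/
def PosetLatCon {P : Type*} [PartialOrder P] (θ : P → P → Prop) : Prop :=
  Equivalence θ ∧
  (∀ a b c d s t : P, θ a b → θ c d → IsLUB {a, c} s → IsLUB {b, d} t → θ s t) ∧
  (∀ a b c d s t : P, θ a b → θ c d → IsGLB {a, c} s → IsGLB {b, d} t → θ s t)

/-- `M₃⟨L⟩`: the Boolean triples of `L`, with the componentwise order. -/
abbrev M3Angle (L : Type*) [Lattice L] :=
  {t : L × L × L // ∃ u v w : L, t = (v ⊓ w, u ⊓ w, u ⊓ v)}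

/-- The diagonal map `x ↦ (x, x, x)`. -/
def diag (L : Type*) [Lattice L] (x : L) : M3Angle L :=
  ⟨(x, x, x), x, x, x, by simp⟩

namespace M3Angle

variable {L : Type*} [Lattice L]

/-- The Boolean triple `(a, b, c)`, for `a`, `b`, `c` satisfying the closure inequalities. -/
def mk (a b c : L) (ha : (a ⊔ b) ⊓ (a ⊔ c) ≤ a) (hb : (a ⊔ b) ⊓ (b ⊔ c) ≤ b)
    (hc : (a ⊔ c) ⊓ (b ⊔ c) ≤ c) : M3Angle L :=
  ⟨(a, b, c), b ⊔ c, a ⊔ c, a ⊔ b, by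
    refine Prod.ext ?_ (Prod.ext ?_ ?_)
    · exact le_antisymm (le_inf le_sup_left le_sup_left) ((inf_comm _ _).trans_le ha)
    · exact le_antisymm (le_inf le_sup_left le_sup_right) ((inf_comm _ _).trans_le hb)
    · exact le_antisymm (le_inf le_sup_right le_sup_right) ((inf_comm _ _).trans_le hc)⟩

theorem closed (s : M3Angle L) :
    (s.1.1 ⊔ s.1.2.1) ⊓ (s.1.1 ⊔ s.1.2.2) ≤ s.1.1 ∧
    (s.1.1 ⊔ s.1.2.1) ⊓ (s.1.2.1 ⊔ s.1.2.2) ≤ s.1.2.1 ∧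
    (s.1.1 ⊔ s.1.2.2) ⊓ (s.1.2.1 ⊔ s.1.2.2) ≤ s.1.2.2 := by
  obtain ⟨_, u, v, w, rfl⟩ := s
  have h1 : v ⊓ w ⊔ u ⊓ w ≤ w := sup_le inf_le_right inf_le_right
  have h2 : v ⊓ w ⊔ u ⊓ v ≤ v := sup_le inf_le_left inf_le_right
  have h3 : u ⊓ w ⊔ u ⊓ v ≤ u := sup_le inf_le_left inf_le_left
  refine ⟨?_, ?_, ?_⟩
  · exact le_inf (inf_le_right.trans h2) (inf_le_left.trans h1)
  · exact le_inf (inf_le_right.trans h3) (inf_le_left.trans h1)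
  · exact le_inf (inf_le_right.trans h3) (inf_le_left.trans h2)

theorem le_iff (s t : M3Angle L) :
    s ≤ t ↔ s.1.1 ≤ t.1.1 ∧ s.1.2.1 ≤ t.1.2.1 ∧ s.1.2.2 ≤ t.1.2.2 := Iff.rfl

theorem eq_iff (s t : M3Angle L) :
    s = t ↔ s.1.1 = t.1.1 ∧ s.1.2.1 = t.1.2.1 ∧ s.1.2.2 = t.1.2.2 := by
  rw [Subtype.ext_iff, Prod.ext_iff, Prod.ext_iff]

/-- The componentwise meet of two Boolean triples. -/
def inf (s t : M3Angle L) : M3Angle L :=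
  mk (s.1.1 ⊓ t.1.1) (s.1.2.1 ⊓ t.1.2.1) (s.1.2.2 ⊓ t.1.2.2)
    (le_inf
      ((inf_le_inf (sup_le_sup inf_le_left inf_le_left)
        (sup_le_sup inf_le_left inf_le_left)).trans (closed s).1)
      ((inf_le_inf (sup_le_sup inf_le_right inf_le_right)
        (sup_le_sup inf_le_right inf_le_right)).trans (closed t).1))
    (le_inf
      ((inf_le_inf (sup_le_sup inf_le_left inf_le_left)
        (sup_le_sup inf_le_left inf_le_left)).trans (closed s).2.1)
      ((inf_le_inf (sup_le_sup inf_le_right inf_le_right)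
        (sup_le_sup inf_le_right inf_le_right)).trans (closed t).2.1))
    (le_inf
      ((inf_le_inf (sup_le_sup inf_le_left inf_le_left)
        (sup_le_sup inf_le_left inf_le_left)).trans (closed s).2.2)
      ((inf_le_inf (sup_le_sup inf_le_right inf_le_right)
        (sup_le_sup inf_le_right inf_le_right)).trans (closed t).2.2))

/-- The closure of an arbitrary triple: the least Boolean triple above it. -/
def cl (a b c : L) : M3Angle L :=
  ⟨((a ⊔ b) ⊓ (a ⊔ c), (a ⊔ b) ⊓ (b ⊔ c), (a ⊔ c) ⊓ (b ⊔ c)), b ⊔ c, a ⊔ c, a ⊔ b, by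
    simp only [inf_comm]⟩

/-- The join of two Boolean triples: the closure of the componentwise join. -/
def sup (s t : M3Angle L) : M3Angle L :=
  cl (s.1.1 ⊔ t.1.1) (s.1.2.1 ⊔ t.1.2.1) (s.1.2.2 ⊔ t.1.2.2)

theorem cl_le_iff (a b c : L) (s : M3Angle L) :
    cl a b c ≤ s ↔ a ≤ s.1.1 ∧ b ≤ s.1.2.1 ∧ c ≤ s.1.2.2 := by
  constructor
  · rintro ⟨h1, h2, h3⟩
    exact ⟨(le_inf le_sup_left le_sup_left).trans h1, (le_inf le_sup_right le_sup_left).trans h2,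
      (le_inf le_sup_right le_sup_right).trans h3⟩
  · rintro ⟨h1, h2, h3⟩
    obtain ⟨k1, k2, k3⟩ := closed s
    exact ⟨(inf_le_inf (sup_le_sup h1 h2) (sup_le_sup h1 h3)).trans k1,
      (inf_le_inf (sup_le_sup h1 h2) (sup_le_sup h2 h3)).trans k2,
      (inf_le_inf (sup_le_sup h1 h3) (sup_le_sup h2 h3)).trans k3⟩

theorem isLUB_sup (s t : M3Angle L) : IsLUB {s, t} (sup s t) := by
  rw [isLUB_iff_le_iff]
  intro z
  rw [sup, cl_le_iff]
  simp only [upperBounds_insert, upperBounds_singleton, Set.mem_inter_iff,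
    Set.mem_Ici, le_iff, sup_le_iff]
  tauto

theorem isGLB_inf (s t : M3Angle L) : IsGLB {s, t} (inf s t) := by
  rw [isGLB_iff_le_iff]
  intro z
  simp only [inf, mk, lowerBounds_insert, lowerBounds_singleton, Set.mem_inter_iff,
    Set.mem_Iic, le_iff, le_inf_iff]
  tauto

/-- `(x, o, o)` for `o ≤ x`. -/
def inl {o x : L} (h : o ≤ x) : M3Angle L := mk x o o (by simp [h]) (by simp [h]) (by simp [h])

/-- `(o, x, o)` for `o ≤ x`. -/
def inm {o x : L} (h : o ≤ x) : M3Angle L := mk o x o (by simp [h]) (by simp [h]) (by simp [h])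

/-- `(o, o, x)` for `o ≤ x`. -/
def inr {o x : L} (h : o ≤ x) : M3Angle L := mk o o x (by simp [h]) (by simp [h]) (by simp [h])

section Congruence

variable {Φ : M3Angle L → M3Angle L → Prop}

theorem rel_sup (hΦ : PosetLatCon Φ) {s t s' t' : M3Angle L} (h : Φ s s') (k : Φ t t') :
    Φ (sup s t) (sup s' t') :=
  hΦ.2.1 _ _ _ _ _ _ h k (isLUB_sup _ _) (isLUB_sup _ _)

theorem rel_inf (hΦ : PosetLatCon Φ) {s t s' t' : M3Angle L} (h : Φ s s') (k : Φ t t') :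
    Φ (inf s t) (inf s' t') :=
  hΦ.2.2 _ _ _ _ _ _ h k (isGLB_inf _ _) (isGLB_inf _ _)

theorem exists_bounds (s t : M3Angle L) : ∃ o i : L, o ≤ i ∧
    (o ≤ s.1.1 ∧ s.1.1 ≤ i) ∧ (o ≤ s.1.2.1 ∧ s.1.2.1 ≤ i) ∧ (o ≤ s.1.2.2 ∧ s.1.2.2 ≤ i) ∧
    (o ≤ t.1.1 ∧ t.1.1 ≤ i) ∧ (o ≤ t.1.2.1 ∧ t.1.2.1 ≤ i) ∧ (o ≤ t.1.2.2 ∧ t.1.2.2 ≤ i) := by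
  classical
  let S : Finset L := {s.1.1, s.1.2.1, s.1.2.2, t.1.1, t.1.2.1, t.1.2.2}
  have hS : S.Nonempty := ⟨s.1.1, by simp [S]⟩
  have h : ∀ x ∈ S, S.inf' hS id ≤ x ∧ x ≤ S.sup' hS id :=
    fun x hx => ⟨Finset.inf'_le id hx, Finset.le_sup' id hx⟩
  refine ⟨S.inf' hS id, S.sup' hS id, ?_, h _ ?_, h _ ?_, h _ ?_, h _ ?_, h _ ?_, h _ ?_⟩
  · exact (h s.1.1 (by simp [S])).1.trans (h s.1.1 (by simp [S])).2
  all_goals simp [S]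

/-- A lattice polynomial with parameters in `M₃⟨L⟩` sends `(a, b, c)` to `(a, a, a)`,
uniformly for all triples with components between `o` and `i`. -/
theorem poly_fst {o i : L} (h : o ≤ i) (s : M3Angle L) (h1 : o ≤ s.1.1 ∧ s.1.1 ≤ i)
    (h2 : o ≤ s.1.2.1) (h3 : o ≤ s.1.2.2) :
    inf (sup (inf s (inl h)) (inm h)) (sup (inf s (inl h)) (inr h)) = diag L s.1.1 := by
  simp [inf, sup, cl, mk, inl, inm, inr, diag, h1, h2, h3, h]

theorem poly_snd {o i : L} (h : o ≤ i) (s : M3Angle L) (h1 : o ≤ s.1.1)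
    (h2 : o ≤ s.1.2.1 ∧ s.1.2.1 ≤ i) (h3 : o ≤ s.1.2.2) :
    inf (sup (inf s (inm h)) (inl h)) (sup (inf s (inm h)) (inr h)) = diag L s.1.2.1 := by
  simp [inf, sup, cl, mk, inl, inm, inr, diag, h1, h2, h3, h]

theorem poly_trd {o i : L} (h : o ≤ i) (s : M3Angle L) (h1 : o ≤ s.1.1)
    (h2 : o ≤ s.1.2.1) (h3 : o ≤ s.1.2.2 ∧ s.1.2.2 ≤ i) :
    inf (sup (inf s (inr h)) (inl h)) (sup (inf s (inr h)) (inm h)) = diag L s.1.2.2 := by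
  simp [inf, sup, cl, mk, inl, inm, inr, diag, h1, h2, h3, h]

/-- A Boolean triple is recovered from the diagonal elements of its components by a lattice
polynomial with parameters in `M₃⟨L⟩`. -/
theorem poly_diag {o i : L} (h : o ≤ i) (s : M3Angle L) (h1 : o ≤ s.1.1 ∧ s.1.1 ≤ i)
    (h2 : o ≤ s.1.2.1 ∧ s.1.2.1 ≤ i) (h3 : o ≤ s.1.2.2 ∧ s.1.2.2 ≤ i) :
    sup (sup (inf (diag L s.1.1) (inl h)) (inf (diag L s.1.2.1) (inm h)))
      (inf (diag L s.1.2.2) (inr h)) = s := by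
  have e1 : inf (diag L s.1.1) (inl h) = inl h1.1 := by
    simp [inf, mk, inl, diag, h1]
  have e2 : inf (diag L s.1.2.1) (inm h) = inm h2.1 := by
    simp [inf, mk, inm, diag, h2]
  have e3 : inf (diag L s.1.2.2) (inr h) = inr h3.1 := by
    simp [inf, mk, inr, diag, h3]
  rw [e1, e2, e3]
  refine eq_of_forall_ge_iff fun z => ?_
  have hs : ∀ x y : M3Angle L, sup x y ≤ z ↔ x ≤ z ∧ y ≤ z := fun x y => by
    rw [isLUB_le_iff (isLUB_sup x y)]; simp
  simp only [hs, le_iff, inl, inm, inr, mk]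
  constructor
  · tauto
  · rintro ⟨k1, k2, k3⟩
    exact ⟨⟨⟨k1, h2.1.trans k2, h3.1.trans k3⟩, h1.1.trans k1, k2, h3.1.trans k3⟩,
      h1.1.trans k1, h2.1.trans k2, k3⟩

theorem diag_of_rel (hΦ : PosetLatCon Φ) {s t : M3Angle L} (hst : Φ s t) :
    Φ (diag L s.1.1) (diag L t.1.1) ∧ Φ (diag L s.1.2.1) (diag L t.1.2.1) ∧
      Φ (diag L s.1.2.2) (diag L t.1.2.2) := by
  obtain ⟨o, i, h, a1, a2, a3, b1, b2, b3⟩ := exists_bounds s t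
  have r := fun x => hΦ.1.refl x
  refine ⟨?_, ?_, ?_⟩
  · rw [← poly_fst h s a1 a2.1 a3.1, ← poly_fst h t b1 b2.1 b3.1]
    have k := rel_inf hΦ hst (r (inl h))
    exact rel_inf hΦ (rel_sup hΦ k (r _)) (rel_sup hΦ k (r _))
  · rw [← poly_snd h s a1.1 a2 a3.1, ← poly_snd h t b1.1 b2 b3.1]
    have k := rel_inf hΦ hst (r (inm h))
    exact rel_inf hΦ (rel_sup hΦ k (r _)) (rel_sup hΦ k (r _))
  · rw [← poly_trd h s a1.1 a2.1 a3, ← poly_trd h t b1.1 b2.1 b3]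
    have k := rel_inf hΦ hst (r (inr h))
    exact rel_inf hΦ (rel_sup hΦ k (r _)) (rel_sup hΦ k (r _))

theorem rel_of_diag (hΦ : PosetLatCon Φ) {s t : M3Angle L}
    (h1 : Φ (diag L s.1.1) (diag L t.1.1)) (h2 : Φ (diag L s.1.2.1) (diag L t.1.2.1))
    (h3 : Φ (diag L s.1.2.2) (diag L t.1.2.2)) : Φ s t := by
  obtain ⟨o, i, h, a1, a2, a3, b1, b2, b3⟩ := exists_bounds s t
  have r := fun x => hΦ.1.refl x
  rw [← poly_diag h s a1 a2 a3, ← poly_diag h t b1 b2 b3]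
  exact rel_sup hΦ (rel_sup hΦ (rel_inf hΦ h1 (r _)) (rel_inf hΦ h2 (r _))) (rel_inf hΦ h3 (r _))

end Congruence

/-- The componentwise extension of a relation on `L` to `M₃⟨L⟩`. -/
def ext (θ : L → L → Prop) (s t : M3Angle L) : Prop :=
  θ s.1.1 t.1.1 ∧ θ s.1.2.1 t.1.2.1 ∧ θ s.1.2.2 t.1.2.2

theorem posetLatCon_ext {θ : L → L → Prop} (hθ : LatCon L θ) : PosetLatCon (ext θ) := by
  obtain ⟨he, hc⟩ := hθ
  have hj : ∀ {a b c d : L}, θ a b → θ c d → θ (a ⊔ c) (b ⊔ d) := fun h k => (hc _ _ _ _ h k).1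
  have hm : ∀ {a b c d : L}, θ a b → θ c d → θ (a ⊓ c) (b ⊓ d) := fun h k => (hc _ _ _ _ h k).2
  refine ⟨⟨fun s => ⟨he.refl _, he.refl _, he.refl _⟩,
    fun h => ⟨he.symm h.1, he.symm h.2.1, he.symm h.2.2⟩,
    fun h k => ⟨he.trans h.1 k.1, he.trans h.2.1 k.2.1, he.trans h.2.2 k.2.2⟩⟩, ?_, ?_⟩
  · intro a b c d s t h k hs ht
    obtain rfl := hs.unique (isLUB_sup a c)
    obtain rfl := ht.unique (isLUB_sup b d)
    have k1 := hj h.1 k.1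
    have k2 := hj h.2.1 k.2.1
    have k3 := hj h.2.2 k.2.2
    exact ⟨hm (hj k1 k2) (hj k1 k3), hm (hj k1 k2) (hj k2 k3), hm (hj k1 k3) (hj k2 k3)⟩
  · intro a b c d s t h k hs ht
    obtain rfl := hs.unique (isGLB_inf a c)
    obtain rfl := ht.unique (isGLB_inf b d)
    exact ⟨hm h.1 k.1, hm h.2.1 k.2.1, hm h.2.2 k.2.2⟩

end M3Angle

open M3Angle in
/-- `M₃⟨L⟩` is a lattice, and the diagonal map is an injective lattice homomorphism
from `L` into `M₃⟨L⟩` that is congruence-preserving. -/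
theorem M3Angle_lattice_and_diag_congruencePreserving (L : Type*) [Lattice L] :
    (∀ s t : M3Angle L, (∃ z, IsLUB {s, t} z) ∧ (∃ w, IsGLB {s, t} w)) ∧
    Function.Injective (diag L) ∧
    (∀ x y : L, IsLUB {diag L x, diag L y} (diag L (x ⊔ y)) ∧
                IsGLB {diag L x, diag L y} (diag L (x ⊓ y))) ∧
    (∀ θ : L → L → Prop, LatCon L θ →
      ∃! Θ : M3Angle L → M3Angle L → Prop,
        PosetLatCon Θ ∧ ∀ x y : L, (Θ (diag L x) (diag L y) ↔ θ x y)) := by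
  refine ⟨fun s t => ⟨⟨_, isLUB_sup s t⟩, _, isGLB_inf s t⟩, fun x y h => ((eq_iff _ _).1 h).1,
    fun x y => ⟨?_, ?_⟩, fun θ hθ => ⟨ext θ, ⟨posetLatCon_ext hθ, ?_⟩, ?_⟩⟩
  · convert isLUB_sup (diag L x) (diag L y) using 1
    simp [M3Angle.sup, cl, diag]
  · convert isGLB_inf (diag L x) (diag L y) using 1
    simp [M3Angle.inf, M3Angle.mk, diag]
  · intro x y
    simp [ext, diag]
  · rintro Φ ⟨hΦ, hd⟩
    funext s t
    refine propext ⟨fun h => ?_, fun h => ?_⟩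
    · obtain ⟨k1, k2, k3⟩ := diag_of_rel hΦ h
      exact ⟨(hd _ _).1 k1, (hd _ _).1 k2, (hd _ _).1 k3⟩
    · exact rel_of_diag hΦ ((hd _ _).2 h.1) ((hd _ _).2 h.2.1) ((hd _ _).2 h.2.2)
end

section
/- Every lattice L with more than one element has a proper congruence-preserving extension: there exist a lattice K and an injective, non-surjective lattice homomorphism f : L → K such that for every lattice congruence θ of L there is exactly one lattice congruence Θ of K with Θ(f x, f y) holding if and only if θ(x, y) holds, for all x, y ∈ L. -/
/-!
Fix `a < b` in `L`. A triple `(x, y, z)` is *Boolean* when `x = (x ⊔ y) ⊓ (x ⊔ z)` and likewise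
for `y` and `z`; Boolean triples form a lattice under the componentwise order, with componentwise
meets and with joins obtained by applying the closure
`(x, y, z) ↦ ((x ⊔ y) ⊓ (x ⊔ z), (y ⊔ x) ⊓ (y ⊔ z), (z ⊔ x) ⊓ (z ⊔ y))` to the componentwise join.
The extension is the convex sublattice `K` of Boolean triples with `a ≤ y ≤ b` and `z ≤ b`, and the
embedding is `φ x = (x, a, x ⊓ a)`. It is proper because `(a, b, a)` is not in the image.

A congruence `θ` of `L` extends to `K` componentwise, since the operations of `K` are lattice
polynomials in the components. Conversely a congruence `Θ` of `K` is determined by its restriction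
to the image: unary polynomials of `K` carry an element `(x, y, z)` to each of `φ x`, `φ y`, `φ z`
(`phi_x_of_rel`, `phi_y_of_rel`, `phi_z_of_rel`), and in the other direction they carry `φ y` to
`(q, y, q)` and `φ z` to `(z ⊓ a, a, z)` (`rel_mid`, `rel_psi`), where `q` is any sufficiently small
element; finally `(x, y, z) = φ x ⊔ (q, y, q) ⊔ (z ⊓ a, a, z)` (`eq_sup`). Hence `Θ` is the
componentwise extension of its restriction.
-/

universe u

/-- `f : L → K` is a proper congruence-preserving extension: an injective,
non-surjective lattice homomorphism such that every congruence of `L` extends to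
exactly one congruence of `K`. -/
def IsProperCPExt (L : Type*) [Lattice L] (K : Type*) [Lattice K] (f : L → K) : Prop :=
  Function.Injective f ∧ ¬ Function.Surjective f ∧
  (∀ x y : L, f (x ⊔ y) = f x ⊔ f y) ∧ (∀ x y : L, f (x ⊓ y) = f x ⊓ f y) ∧
  ∀ θ : L → L → Prop, LatCon L θ →
    ∃! Θ : K → K → Prop, LatCon K Θ ∧ ∀ x y : L, (Θ (f x) (f y) ↔ θ x y)

/-- The Boolean triples `(x, y, z)` of `L` with `a ≤ y ≤ b` and `z ≤ b`. Only the nontrivial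
inequality of each Booleanness equation is recorded. -/
@[ext]
structure BTriple (L : Type u) [Lattice L] (a b : L) : Type u where
  x : L
  y : L
  z : L
  ay : a ≤ y
  yb : y ≤ b
  zb : z ≤ b
  hx : (x ⊔ y) ⊓ (x ⊔ z) ≤ x
  hy : (y ⊔ x) ⊓ (y ⊔ z) ≤ y
  hz : (z ⊔ x) ⊓ (z ⊔ y) ≤ z

namespace BTriple

variable {L : Type u} [Lattice L] {a b : L}

instance : PartialOrder (BTriple L a b) where
  le s t := s.x ≤ t.x ∧ s.y ≤ t.y ∧ s.z ≤ t.z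
  le_refl s := ⟨le_rfl, le_rfl, le_rfl⟩
  le_trans s t r h k := ⟨h.1.trans k.1, h.2.1.trans k.2.1, h.2.2.trans k.2.2⟩
  le_antisymm s t h k :=
    BTriple.ext (le_antisymm h.1 k.1) (le_antisymm h.2.1 k.2.1) (le_antisymm h.2.2 k.2.2)

/-- The componentwise meet of two Boolean triples. -/
def inf (s t : BTriple L a b) : BTriple L a b where
  x := s.x ⊓ t.x
  y := s.y ⊓ t.y
  z := s.z ⊓ t.z
  ay := le_inf s.ay t.ay
  yb := inf_le_left.trans s.yb
  zb := inf_le_left.trans s.zb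
  hx := le_inf
    ((inf_le_inf (sup_le_sup inf_le_left inf_le_left)
      (sup_le_sup inf_le_left inf_le_left)).trans s.hx)
    ((inf_le_inf (sup_le_sup inf_le_right inf_le_right)
      (sup_le_sup inf_le_right inf_le_right)).trans t.hx)
  hy := le_inf
    ((inf_le_inf (sup_le_sup inf_le_left inf_le_left)
      (sup_le_sup inf_le_left inf_le_left)).trans s.hy)
    ((inf_le_inf (sup_le_sup inf_le_right inf_le_right)
      (sup_le_sup inf_le_right inf_le_right)).trans t.hy)
  hz := le_inf
    ((inf_le_inf (sup_le_sup inf_le_left inf_le_left)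
      (sup_le_sup inf_le_left inf_le_left)).trans s.hz)
    ((inf_le_inf (sup_le_sup inf_le_right inf_le_right)
      (sup_le_sup inf_le_right inf_le_right)).trans t.hz)

/-- The Boolean closure of an arbitrary triple `(x, y, z)` with `a ≤ y ≤ b` and `z ≤ b`. -/
def closure (x y z : L) (ay : a ≤ y) (yb : y ≤ b) (zb : z ≤ b) : BTriple L a b where
  x := (x ⊔ y) ⊓ (x ⊔ z)
  y := (y ⊔ x) ⊓ (y ⊔ z)
  z := (z ⊔ x) ⊓ (z ⊔ y)
  ay := le_inf (ay.trans le_sup_left) (ay.trans le_sup_left)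
  yb := inf_le_right.trans (sup_le yb zb)
  zb := inf_le_right.trans (sup_le zb yb)
  -- Closing a triple does not change the pairwise joins of its components.
  hx := inf_le_inf (sup_le inf_le_left (inf_le_left.trans (sup_comm y x).le))
    (sup_le inf_le_right (inf_le_left.trans (sup_comm z x).le))
  hy := inf_le_inf (sup_le inf_le_left (inf_le_left.trans (sup_comm x y).le))
    (sup_le inf_le_right (inf_le_right.trans (sup_comm z y).le))
  hz := inf_le_inf (sup_le inf_le_left (inf_le_right.trans (sup_comm x z).le))
    (sup_le inf_le_right (inf_le_right.trans (sup_comm y z).le))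

/-- The join of two Boolean triples: the closure of the componentwise join. -/
def sup (s t : BTriple L a b) : BTriple L a b :=
  closure (s.x ⊔ t.x) (s.y ⊔ t.y) (s.z ⊔ t.z) (s.ay.trans le_sup_left)
    (sup_le s.yb t.yb) (sup_le s.zb t.zb)

instance : Lattice (BTriple L a b) where
  inf := inf
  sup := sup
  inf_le_left _ _ := ⟨inf_le_left, inf_le_left, inf_le_left⟩
  inf_le_right _ _ := ⟨inf_le_right, inf_le_right, inf_le_right⟩
  le_inf _ _ _ h k := ⟨le_inf h.1 k.1, le_inf h.2.1 k.2.1, le_inf h.2.2 k.2.2⟩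
  le_sup_left s t :=
    ⟨le_sup_left.trans (le_inf le_sup_left le_sup_left),
      le_sup_left.trans (le_inf le_sup_left le_sup_left),
      le_sup_left.trans (le_inf le_sup_left le_sup_left)⟩
  le_sup_right s t :=
    ⟨le_sup_right.trans (le_inf le_sup_left le_sup_left),
      le_sup_right.trans (le_inf le_sup_left le_sup_left),
      le_sup_right.trans (le_inf le_sup_left le_sup_left)⟩
  sup_le s t r h k := by
    have X := sup_le h.1 k.1
    have Y := sup_le h.2.1 k.2.1
    have Z := sup_le h.2.2 k.2.2
    exact ⟨(inf_le_inf (sup_le_sup X Y) (sup_le_sup X Z)).trans r.hx,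
      (inf_le_inf (sup_le_sup Y X) (sup_le_sup Y Z)).trans r.hy,
      (inf_le_inf (sup_le_sup Z X) (sup_le_sup Z Y)).trans r.hz⟩

@[simp] lemma inf_x (s t : BTriple L a b) : (s ⊓ t).x = s.x ⊓ t.x := rfl
@[simp] lemma inf_y (s t : BTriple L a b) : (s ⊓ t).y = s.y ⊓ t.y := rfl
@[simp] lemma inf_z (s t : BTriple L a b) : (s ⊓ t).z = s.z ⊓ t.z := rfl

@[simp] lemma sup_x (s t : BTriple L a b) :
    (s ⊔ t).x = (s.x ⊔ t.x ⊔ (s.y ⊔ t.y)) ⊓ (s.x ⊔ t.x ⊔ (s.z ⊔ t.z)) := rfl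
@[simp] lemma sup_y (s t : BTriple L a b) :
    (s ⊔ t).y = (s.y ⊔ t.y ⊔ (s.x ⊔ t.x)) ⊓ (s.y ⊔ t.y ⊔ (s.z ⊔ t.z)) := rfl
@[simp] lemma sup_z (s t : BTriple L a b) :
    (s ⊔ t).z = (s.z ⊔ t.z ⊔ (s.x ⊔ t.x)) ⊓ (s.z ⊔ t.z ⊔ (s.y ⊔ t.y)) := rfl

lemma inf_za_le_x (s : BTriple L a b) : s.z ⊓ a ≤ s.x :=
  (le_inf (inf_le_right.trans (s.ay.trans le_sup_right))
    (inf_le_left.trans le_sup_right)).trans s.hx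

lemma inf_xa_le_z (s : BTriple L a b) : s.x ⊓ a ≤ s.z :=
  (le_inf (inf_le_left.trans le_sup_right)
    (inf_le_right.trans (s.ay.trans le_sup_right))).trans s.hz

/-- The embedding `x ↦ (x, a, x ⊓ a)` of `L` into the lattice of triples. -/
def phi (hab : a ≤ b) (x : L) : BTriple L a b where
  x := x
  y := a
  z := x ⊓ a
  ay := le_rfl
  yb := hab
  zb := inf_le_right.trans hab
  hx := by simp
  hy := by simp
  hz := by simp

/-- The triple `(z ⊓ a, a, z)`, the copy of `z ≤ b` in the third component. -/
def psi (hab : a ≤ b) (z : L) (h : z ≤ b) : BTriple L a b where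
  x := z ⊓ a
  y := a
  z := z
  ay := le_rfl
  yb := hab
  zb := h
  hx := by simp
  hy := by simp
  hz := by simp

/-- The triple `(q, t, q)`, which for small `q` is the copy of `t ∈ [a, b]` in the second
component. -/
def mid (q t : L) (hq : q ≤ a) (ht : a ≤ t) (htb : t ≤ b) : BTriple L a b where
  x := q
  y := t
  z := q
  ay := ht
  yb := htb
  zb := hq.trans (ht.trans htb)
  hx := by simp
  hy := by simp [hq.trans ht]
  hz := by simp

/-- The triple `(a, a, b)`; joining with it turns both `(q, t, q)` and `phi t`, for `q ≤ a ≤ t ≤ b`,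
into `(t, t, b)`, so that it transfers `t` between the first two components. -/
def swap (hab : a ≤ b) : BTriple L a b where
  x := a
  y := a
  z := b
  ay := le_rfl
  yb := hab
  zb := le_rfl
  hx := by simp
  hy := by simp [hab]
  hz := by simp [hab]

lemma inf_phi (hab : a ≤ b) (s : BTriple L a b) (w : L) (h : s.x ≤ w) :
    s ⊓ phi hab w = phi hab s.x := by
  refine BTriple.ext (inf_eq_left.2 h) (inf_eq_right.2 s.ay) (le_antisymm ?_ ?_)
  · exact le_inf ((inf_le_inf_left _ inf_le_right).trans s.inf_za_le_x)
      (inf_le_right.trans inf_le_right)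
  · exact le_inf s.inf_xa_le_z (inf_le_inf_right _ h)

lemma inf_psi (hab : a ≤ b) (s : BTriple L a b) (w : L) (hw : w ≤ b) (h : s.z ≤ w) :
    s ⊓ psi hab w hw = psi hab s.z s.zb := by
  refine BTriple.ext (le_antisymm ?_ ?_) (inf_eq_right.2 s.ay) (inf_eq_left.2 h)
  · exact le_inf ((inf_le_inf_left _ inf_le_right).trans s.inf_xa_le_z)
      (inf_le_right.trans inf_le_right)
  · exact le_inf s.inf_za_le_x (inf_le_inf_right _ h)

lemma inf_mid (hab : a ≤ b) (s : BTriple L a b) (q : L) (hq : q ≤ a) (hx : q ≤ s.x)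
    (hz : q ≤ s.z) : s ⊓ mid q b hq hab le_rfl = mid q s.y hq s.ay s.yb :=
  BTriple.ext (inf_eq_right.2 hx) (inf_eq_left.2 s.yb) (inf_eq_right.2 hz)

lemma mid_sup_swap_x (hab : a ≤ b) (q t : L) (hq : q ≤ a) (ht : a ≤ t) (htb : t ≤ b) :
    (mid q t hq ht htb ⊔ swap hab).x = t := by
  simp [mid, swap, hq, ht, htb, hab, hq.trans hab]

lemma psi_sup_mid_x (hab : a ≤ b) (q z : L) (hq : q ≤ a) (hz : z ≤ b) (hqz : q ≤ z) :
    (psi hab z hz ⊔ mid q b hq hab le_rfl).x = z := by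
  have h1 : q ≤ z ⊓ a := le_inf hqz hq
  have h2 : z ⊓ a ≤ b := inf_le_right.trans hab
  simp [mid, psi, hab, hz, hqz, h1, h2]

lemma phi_sup_swap_inf_mid (hab : a ≤ b) (q t : L) (hq : q ≤ a) (ht : a ≤ t) (htb : t ≤ b) :
    (phi hab t ⊔ swap hab) ⊓ mid q b hq hab le_rfl = mid q t hq ht htb := by
  ext <;> simp [mid, phi, swap, ht, htb, hab, hq.trans hab, hq.trans ht]

lemma phi_sup_mid_z (hab : a ≤ b) (q z : L) (hq : q ≤ a) (hz : z ≤ b) (hqz : q ≤ z) :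
    (phi hab z ⊔ mid q b hq hab le_rfl).z = z := by
  have h1 : q ≤ z ⊓ a := le_inf hqz hq
  have h2 : z ⊓ a ≤ b := inf_le_right.trans hab
  simp [mid, phi, hab, hz, hqz, h1, h2]

lemma eq_sup (hab : a ≤ b) (s : BTriple L a b) (q : L) (hq : q ≤ a) (hx : q ≤ s.x)
    (hz : q ≤ s.z) :
    s = phi hab s.x ⊔ mid q s.y hq s.ay s.yb ⊔ psi hab s.z s.zb := by
  apply le_antisymm
  · have h1 : phi hab s.x ≤ phi hab s.x ⊔ mid q s.y hq s.ay s.yb ⊔ psi hab s.z s.zb :=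
      le_sup_left.trans le_sup_left
    have h2 : mid q s.y hq s.ay s.yb ≤
        phi hab s.x ⊔ mid q s.y hq s.ay s.yb ⊔ psi hab s.z s.zb :=
      le_sup_right.trans le_sup_left
    have h3 : psi hab s.z s.zb ≤ phi hab s.x ⊔ mid q s.y hq s.ay s.yb ⊔ psi hab s.z s.zb :=
      le_sup_right
    exact ⟨h1.1, h2.2.1, h3.2.2⟩
  · exact sup_le (sup_le ⟨le_rfl, s.ay, s.inf_xa_le_z⟩ ⟨hx, le_rfl, hz⟩)
      ⟨s.inf_za_le_x, s.ay, le_rfl⟩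

section Congruence

variable {Θ : BTriple L a b → BTriple L a b → Prop}

lemma rel_sup (hΘ : LatCon (BTriple L a b) Θ)
    {s t : BTriple L a b} (h : Θ s t) (c : BTriple L a b) : Θ (s ⊔ c) (t ⊔ c) :=
  (hΘ.2 _ _ _ _ h (hΘ.1.refl c)).1

lemma rel_inf (hΘ : LatCon (BTriple L a b) Θ)
    {s t : BTriple L a b} (h : Θ s t) (c : BTriple L a b) : Θ (s ⊓ c) (t ⊓ c) :=
  (hΘ.2 _ _ _ _ h (hΘ.1.refl c)).2

lemma phi_x_of_rel (hΘ : LatCon (BTriple L a b) Θ) (hab : a ≤ b) {s t : BTriple L a b} (h : Θ s t) :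
    Θ (phi hab s.x) (phi hab t.x) := by
  have := rel_inf hΘ h (phi hab (s.x ⊔ t.x))
  rwa [inf_phi hab s _ le_sup_left, inf_phi hab t _ le_sup_right] at this

lemma phi_y_of_rel (hΘ : LatCon (BTriple L a b) Θ)
    (hab : a ≤ b) {s t : BTriple L a b} (h : Θ s t) {q : L} (hq : q ≤ a)
    (hsx : q ≤ s.x) (hsz : q ≤ s.z) (htx : q ≤ t.x) (htz : q ≤ t.z) :
    Θ (phi hab s.y) (phi hab t.y) := by
  have h1 := rel_inf hΘ h (mid q b hq hab le_rfl)
  rw [inf_mid hab s q hq hsx hsz, inf_mid hab t q hq htx htz] at h1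
  have h2 := phi_x_of_rel hΘ hab (rel_sup hΘ h1 (swap hab))
  rwa [mid_sup_swap_x, mid_sup_swap_x] at h2

lemma phi_z_of_rel (hΘ : LatCon (BTriple L a b) Θ)
    (hab : a ≤ b) {s t : BTriple L a b} (h : Θ s t) {q : L} (hq : q ≤ a)
    (hsz : q ≤ s.z) (htz : q ≤ t.z) :
    Θ (phi hab s.z) (phi hab t.z) := by
  have h1 := rel_inf hΘ h (psi hab (s.z ⊔ t.z) (sup_le s.zb t.zb))
  rw [inf_psi hab s _ _ le_sup_left, inf_psi hab t _ _ le_sup_right] at h1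
  have h2 := phi_x_of_rel hΘ hab (rel_sup hΘ h1 (mid q b hq hab le_rfl))
  rwa [psi_sup_mid_x hab q s.z hq s.zb hsz, psi_sup_mid_x hab q t.z hq t.zb htz] at h2

lemma rel_mid (hΘ : LatCon (BTriple L a b) Θ)
    (hab : a ≤ b) {y y' q : L} (h : Θ (phi hab y) (phi hab y')) (hq : q ≤ a)
    (hy : a ≤ y) (hyb : y ≤ b) (hy' : a ≤ y') (hyb' : y' ≤ b) :
    Θ (mid q y hq hy hyb) (mid q y' hq hy' hyb') := by
  have h1 := rel_inf hΘ (rel_sup hΘ h (swap hab)) (mid q b hq hab le_rfl)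
  rwa [phi_sup_swap_inf_mid hab q y hq hy hyb, phi_sup_swap_inf_mid hab q y' hq hy' hyb'] at h1

lemma rel_psi (hΘ : LatCon (BTriple L a b) Θ)
    (hab : a ≤ b) {z z' q : L} (h : Θ (phi hab z) (phi hab z')) (hq : q ≤ a)
    (hz : z ≤ b) (hz' : z' ≤ b) (hqz : q ≤ z) (hqz' : q ≤ z') :
    Θ (psi hab z hz) (psi hab z' hz') := by
  have h1 := rel_inf hΘ (rel_sup hΘ h (mid q b hq hab le_rfl))
    (psi hab (z ⊔ z') (sup_le hz hz'))
  have e := phi_sup_mid_z hab q z hq hz hqz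
  have e' := phi_sup_mid_z hab q z' hq hz' hqz'
  rw [inf_psi hab _ _ _ (e.le.trans le_sup_left),
    inf_psi hab _ _ _ (e'.le.trans le_sup_right)] at h1
  simpa only [e, e'] using h1

/-- A congruence of the lattice of triples is the componentwise extension of its restriction to
the image of `phi`. -/
lemma rel_iff (hΘ : LatCon (BTriple L a b) Θ) (hab : a ≤ b) (s t : BTriple L a b) :
    Θ s t ↔ Θ (phi hab s.x) (phi hab t.x) ∧ Θ (phi hab s.y) (phi hab t.y) ∧
      Θ (phi hab s.z) (phi hab t.z) := by
  obtain ⟨q, hq, hsx, hsz, htx, htz⟩ :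
      ∃ q : L, q ≤ a ∧ q ≤ s.x ∧ q ≤ s.z ∧ q ≤ t.x ∧ q ≤ t.z := by
    have h : a ⊓ (s.x ⊓ (s.z ⊓ (t.x ⊓ t.z))) ≤ a ⊓ (s.x ⊓ (s.z ⊓ (t.x ⊓ t.z))) := le_rfl
    exact ⟨_, by simpa only [le_inf_iff] using h⟩
  refine ⟨fun h => ⟨phi_x_of_rel hΘ hab h, phi_y_of_rel hΘ hab h hq hsx hsz htx htz,
    phi_z_of_rel hΘ hab h hq hsz htz⟩, fun ⟨h1, h2, h3⟩ => ?_⟩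
  rw [eq_sup hab s q hq hsx hsz, eq_sup hab t q hq htx htz]
  exact (hΘ.2 _ _ _ _ (hΘ.2 _ _ _ _ h1 (rel_mid hΘ hab h2 hq s.ay s.yb t.ay t.yb)).1
    (rel_psi hΘ hab h3 hq s.zb t.zb hsz htz)).1

end Congruence

lemma latCon_componentwise {θ : L → L → Prop} (hθ : LatCon L θ) :
    LatCon (BTriple L a b) fun s t => θ s.x t.x ∧ θ s.y t.y ∧ θ s.z t.z := by
  refine ⟨⟨fun s => ⟨hθ.1.refl _, hθ.1.refl _, hθ.1.refl _⟩,
    fun h => ⟨hθ.1.symm h.1, hθ.1.symm h.2.1, hθ.1.symm h.2.2⟩,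
    fun h k => ⟨hθ.1.trans h.1 k.1, hθ.1.trans h.2.1 k.2.1, hθ.1.trans h.2.2 k.2.2⟩⟩, ?_⟩
  rintro s t s' t' ⟨h1, h2, h3⟩ ⟨k1, k2, k3⟩
  have S {p q r u : L} (h : θ p q) (k : θ r u) : θ (p ⊔ r) (q ⊔ u) := (hθ.2 _ _ _ _ h k).1
  have I {p q r u : L} (h : θ p q) (k : θ r u) : θ (p ⊓ r) (q ⊓ u) := (hθ.2 _ _ _ _ h k).2
  have X := S h1 k1
  have Y := S h2 k2
  have Z := S h3 k3
  exact ⟨⟨I (S X Y) (S X Z), I (S Y X) (S Y Z), I (S Z X) (S Z Y)⟩, I h1 k1, I h2 k2, I h3 k3⟩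

lemma phi_sup (hab : a ≤ b) (x y : L) : phi hab (x ⊔ y) = phi hab x ⊔ phi hab y := by
  ext <;> simp [phi]

lemma phi_inf (hab : a ≤ b) (x y : L) : phi hab (x ⊓ y) = phi hab x ⊓ phi hab y := by
  ext <;> simp [phi, inf_inf_distrib_right]

lemma isProperCPExt_phi (hab : a < b) : IsProperCPExt L (BTriple L a b) (phi hab.le) := by
  refine ⟨fun x y h => congrArg BTriple.x h, fun h => ?_, phi_sup hab.le, phi_inf hab.le, ?_⟩
  · obtain ⟨x, hx⟩ := h (mid a b le_rfl hab.le le_rfl)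
    exact hab.ne (congrArg BTriple.y hx)
  · intro θ hθ
    refine ⟨_, ⟨latCon_componentwise hθ, fun x y => ⟨fun h => h.1, fun h =>
      ⟨h, hθ.1.refl _, (hθ.2 _ _ _ _ h (hθ.1.refl a)).2⟩⟩⟩, ?_⟩
    rintro Θ ⟨hΘ, hr⟩
    funext s t
    rw [rel_iff hΘ hab.le s t, hr, hr, hr]

end BTriple

/-- Every lattice with more than one element has a proper congruence-preserving
extension. -/
theorem exists_proper_congruencePreserving_extension
    (L : Type u) [Lattice L] [Nontrivial L] :
    ∃ (K : Type u) (instK : Lattice K) (f : L → K), @IsProperCPExt L _ K instK f := by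
  obtain ⟨c, d, hcd⟩ := exists_pair_ne L
  have hlt : c ⊓ d < c ⊔ d := inf_lt_sup.2 hcd
  exact ⟨BTriple L (c ⊓ d) (c ⊔ d), inferInstance, _, BTriple.isProperCPExt_phi hlt⟩
end

section
/- For every lattice L, the poset N₅⟨L⟩ is a lattice. -/
/-!
A triple `(x, y, z)` lies in `N₅⟨L⟩` exactly when `x ≤ z` and `z ⊓ (x ⊔ y) ≤ x`
(`mem_N5Angle_iff`). On the lattice of triples with `x ≤ z`, the map
`(x, y, z) ↦ (z ⊓ (x ⊔ y), y, z)` is a closure operator whose closed elements are the members of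
`N₅⟨L⟩`. Hence meets are computed componentwise, and the join is the closure of the
componentwise join.
-/

/-- `N₅⟨L⟩ = {(v ∧ w, u ∧ w, v) : u, v, w ∈ L}`, with the componentwise order. -/
abbrev N5Angle (L : Type*) [Lattice L] :=
  {t : L × L × L // ∃ u v w : L, t = (v ⊓ w, u ⊓ w, v)}

theorem mem_N5Angle_iff {L : Type*} [Lattice L] (x y z : L) :
    (∃ u v w : L, (x, y, z) = (v ⊓ w, u ⊓ w, v)) ↔ x ≤ z ∧ z ⊓ (x ⊔ y) ≤ x := by
  constructor
  · rintro ⟨u, v, w, h⟩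
    simp only [Prod.mk.injEq] at h
    obtain ⟨rfl, rfl, rfl⟩ := h
    exact ⟨inf_le_left, inf_le_inf_left _ (sup_le inf_le_right inf_le_right)⟩
  · rintro ⟨h1, h2⟩
    refine ⟨y, z, x ⊔ y, ?_⟩
    rw [le_antisymm h2 (le_inf h1 le_sup_left), inf_eq_left.2 (le_sup_right : y ≤ x ⊔ y)]

/-- For every lattice `L`, the poset `N₅⟨L⟩` is a lattice: every pair of elements
has a least upper bound and a greatest lower bound. -/
theorem N5Angle_isLattice (L : Type*) [Lattice L] :
    ∀ s t : N5Angle L, (∃ z, IsLUB {s, t} z) ∧ (∃ w, IsGLB {s, t} w) := by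
  rintro ⟨⟨x₁, y₁, z₁⟩, hs⟩ ⟨⟨x₂, y₂, z₂⟩, ht⟩
  obtain ⟨a₁, b₁⟩ := (mem_N5Angle_iff _ _ _).1 hs
  obtain ⟨a₂, b₂⟩ := (mem_N5Angle_iff _ _ _).1 ht
  constructor
  · refine ⟨⟨((z₁ ⊔ z₂) ⊓ ((x₁ ⊔ x₂) ⊔ (y₁ ⊔ y₂)), y₁ ⊔ y₂, z₁ ⊔ z₂),
      (mem_N5Angle_iff _ _ _).2 ⟨inf_le_left,
        inf_le_inf_left _ (sup_le inf_le_right le_sup_right)⟩⟩, ?_, ?_⟩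
    · rintro p (rfl | rfl)
      · exact ⟨le_inf (a₁.trans le_sup_left) (le_sup_left.trans le_sup_left),
          le_sup_left, le_sup_left⟩
      · exact ⟨le_inf (a₂.trans le_sup_right) (le_sup_right.trans le_sup_left),
          le_sup_right, le_sup_right⟩
    · rintro ⟨⟨a, b, c⟩, hp⟩ hub
      obtain ⟨hx₁, hy₁, hz₁⟩ := hub (Or.inl rfl)
      obtain ⟨hx₂, hy₂, hz₂⟩ := hub (Or.inr rfl)
      -- An upper bound is itself closed, so it lies above the closure of the componentwise join.
      exact ⟨(inf_le_inf (sup_le hz₁ hz₂) (sup_le_sup (sup_le hx₁ hx₂) (sup_le hy₁ hy₂))).trans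
        ((mem_N5Angle_iff _ _ _).1 hp).2, sup_le hy₁ hy₂, sup_le hz₁ hz₂⟩
  · refine ⟨⟨(x₁ ⊓ x₂, y₁ ⊓ y₂, z₁ ⊓ z₂), (mem_N5Angle_iff _ _ _).2 ⟨inf_le_inf a₁ a₂, le_inf
      ((inf_le_inf inf_le_left (sup_le_sup inf_le_left inf_le_left)).trans b₁)
      ((inf_le_inf inf_le_right (sup_le_sup inf_le_right inf_le_right)).trans b₂)⟩⟩, ?_, ?_⟩
    · rintro p (rfl | rfl)
      · exact ⟨inf_le_left, inf_le_left, inf_le_left⟩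
      · exact ⟨inf_le_right, inf_le_right, inf_le_right⟩
    · rintro ⟨⟨a, b, c⟩, hp⟩ hlb
      obtain ⟨hx₁, hy₁, hz₁⟩ := hlb (Or.inl rfl)
      obtain ⟨hx₂, hy₂, hz₂⟩ := hlb (Or.inr rfl)
      exact ⟨le_inf hx₁ hx₂, le_inf hy₁ hy₂, le_inf hz₁ hz₂⟩
end

section
/- Let A and B be lattices. Then A ⊡ B is a sublattice of the powerset lattice of A × B (i.e., it is closed under binary unions and binary intersections), and A □ B is a closure system in A ⊡ B: every H ∈ A ⊡ B is contained in a least element of A □ B. In particular, A □ B, ordered by inclusion, is a lattice, in which binary meets are given by intersection. -/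
/-!
Closure of `A ⊡ B` under intersection comes from distributing intersection over union, using
* `(a □ b) ∩ (c □ d) = ((a ⊓ c) □ (b ⊓ d)) ∪ (a ∘ d) ∪ (c ∘ b)`,
* `(a □ b) ∩ (c ∘ d) = ((a ⊓ c) ∘ d) ∪ (c ∘ (b ⊓ d))`,
* `(a ∘ b) ∩ (c ∘ d) = (a ⊓ c) ∘ (b ⊓ d)`.

For the closure, let `H = ⋃ (aᵢ □ bᵢ) ∪ ⋃_{j ∈ G} (cⱼ ∘ dⱼ)` and put `a = ⨆ aᵢ`, `b = ⨆ bᵢ`.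
If `u □ v` is not all of `A × B`, then it contains `H` exactly when `a ≤ u`, `b ≤ v` and, for each
`j`, `cⱼ ≤ u` or `dⱼ ≤ v` (`boxe_subset_boxe`). Sorting the `j` by which alternative
holds shows that the least element of `A □ B` above `H` is
`⋂_{S ⊆ G} (a ⊔ ⨆_{j ∈ S} cⱼ) □ (b ⊔ ⨆_{j ∈ G \ S} dⱼ)` (`exists_isLeast_boxProd`).
Since `A □ B ⊆ A ⊡ B`, the join of `H` and `K` in `A □ B` is the closure of `H ∪ K`.
-/

variable (A B : Type*) [Lattice A] [Lattice B]

/-- `a □ b = {(x,y) : x ≤ a or y ≤ b}`. -/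
def boxe (a : A) (b : B) : Set (A × B) := {p | p.1 ≤ a ∨ p.2 ≤ b}

/-- `c ∘ d = {(x,y) : x ≤ c and y ≤ d}`. -/
def circ (c : A) (d : B) : Set (A × B) := {p | p.1 ≤ c ∧ p.2 ≤ d}

/-- The box product `A □ B`: all finite nonempty intersections `⋂ (aᵢ □ bᵢ)`. -/
def boxProd : Set (Set (A × B)) :=
  {H | ∃ F : Finset (A × B), F.Nonempty ∧ H = ⋂ p ∈ F, boxe A B p.1 p.2}

/-- `A ⊡ B`: all finite unions `⋃_{i<m} (aᵢ □ bᵢ) ∪ ⋃_{j<n} (cⱼ ∘ dⱼ)` with `m ≥ 1`. -/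
def boxDot : Set (Set (A × B)) :=
  {H | ∃ F G : Finset (A × B), F.Nonempty ∧
      H = (⋃ p ∈ F, boxe A B p.1 p.2) ∪ ⋃ p ∈ G, circ A B p.1 p.2}

variable {A B} in
theorem mem_boxDot_set {F G : Finset (A × B)} {x : A × B} :
    x ∈ (⋃ p ∈ F, boxe A B p.1 p.2) ∪ ⋃ p ∈ G, circ A B p.1 p.2 ↔
      (∃ p ∈ F, x.1 ≤ p.1 ∨ x.2 ≤ p.2) ∨ ∃ p ∈ G, x.1 ≤ p.1 ∧ x.2 ≤ p.2 := by
  simp only [Set.mem_union, Set.mem_iUnion, boxe, circ, Set.mem_ofPred_eq, exists_prop]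

variable {A B} in
theorem union_mem_boxDot {H K : Set (A × B)} (hH : H ∈ boxDot A B) (hK : K ∈ boxDot A B) :
    H ∪ K ∈ boxDot A B := by
  classical
  obtain ⟨F, G, hF, rfl⟩ := hH
  obtain ⟨F', G', -, rfl⟩ := hK
  refine ⟨F ∪ F', G ∪ G', hF.mono Finset.subset_union_left, ?_⟩
  ext x
  rw [Set.mem_union, mem_boxDot_set, mem_boxDot_set, mem_boxDot_set]
  simp only [Finset.mem_union, or_and_right, exists_or]
  exact or_or_or_comm

variable {A B} in
theorem inter_mem_boxDot {H K : Set (A × B)} (hH : H ∈ boxDot A B) (hK : K ∈ boxDot A B) :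
    H ∩ K ∈ boxDot A B := by
  classical
  obtain ⟨F, G, hF, rfl⟩ := hH
  obtain ⟨F', G', hF', rfl⟩ := hK
  -- The pieces listed in the distributive expansion: two families from box-box, two from
  -- each of box-circ and circ-box, one from circ-circ.
  refine ⟨Finset.image₂ (fun p q => (p.1 ⊓ q.1, p.2 ⊓ q.2)) F F',
    Finset.image₂ (fun p q => (p.1, q.2)) F F' ∪
    Finset.image₂ (fun p q => (q.1, p.2)) F F' ∪
    Finset.image₂ (fun p q => (p.1 ⊓ q.1, q.2)) F G' ∪
    Finset.image₂ (fun p q => (q.1, p.2 ⊓ q.2)) F G' ∪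
    Finset.image₂ (fun p q => (p.1 ⊓ q.1, p.2)) G F' ∪
    Finset.image₂ (fun p q => (p.1, p.2 ⊓ q.2)) G F' ∪
    Finset.image₂ (fun p q => (p.1 ⊓ q.1, p.2 ⊓ q.2)) G G', hF.image₂ hF', ?_⟩
  ext x
  rw [Set.mem_inter_iff, mem_boxDot_set, mem_boxDot_set, mem_boxDot_set]
  constructor
  · rintro ⟨⟨p, hp, h⟩ | ⟨p, hp, h⟩, ⟨q, hq, k⟩ | ⟨q, hq, k⟩⟩ <;>
    simp only [Finset.mem_union, or_and_right, exists_or, Finset.exists_mem_image₂, le_inf_iff] <;>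
    grind
  · simp only [Finset.mem_union, or_and_right, exists_or, Finset.exists_mem_image₂, le_inf_iff]
    grind

variable {A B} in
theorem boxProd_subset_boxDot : boxProd A B ⊆ boxDot A B := by
  classical
  have single (p : A × B) : boxe A B p.1 p.2 ∈ boxDot A B :=
    ⟨{p}, ∅, Finset.singleton_nonempty p, by simp⟩
  rintro _ ⟨F, hF, rfl⟩
  induction hF using Finset.Nonempty.cons_induction with
  | singleton p => simpa using single p
  | cons p F hp hF ih =>
    rw [Finset.cons_eq_insert, Finset.set_biInter_insert]
    exact inter_mem_boxDot (single p) ih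

variable {A B} in
theorem inter_mem_boxProd {H K : Set (A × B)} (hH : H ∈ boxProd A B) (hK : K ∈ boxProd A B) :
    H ∩ K ∈ boxProd A B := by
  classical
  obtain ⟨F, hF, rfl⟩ := hH
  obtain ⟨F', -, rfl⟩ := hK
  exact ⟨F ∪ F', hF.mono Finset.subset_union_left, (Finset.iInf_union ..).symm⟩

variable {A B} in
/-- Unless `u □ v` is everything, it contains `a □ b` only if `a ≤ u` and `b ≤ v`: a point
`(x, y)` outside `u □ v` yields the test points `(a, y)` and `(x, b)`. -/
theorem boxe_subset_boxe {a u x : A} {b v y : B} (h : boxe A B a b ⊆ boxe A B u v)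
    (hxy : (x, y) ∉ boxe A B u v) : a ≤ u ∧ b ≤ v := by
  simp only [boxe, Set.mem_ofPred_eq, not_or] at hxy
  have h₁ : a ≤ u ∨ y ≤ v := @h (a, y) (Or.inl le_rfl)
  have h₂ : x ≤ u ∨ b ≤ v := @h (x, b) (Or.inr le_rfl)
  exact ⟨h₁.resolve_right hxy.2, h₂.resolve_left hxy.1⟩

/-- `a ⊔ ⨆_{p ∈ S} f p`; the term `a` makes it meaningful for empty `S` without a bottom. -/
def supFrom {L ι : Type*} [Lattice L] (a : L) (S : Finset ι) (f : ι → L) : L :=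
  (Finset.insertNone S).sup' Finset.insertNone_nonempty (fun o => o.elim a f)

theorem supFrom_le_iff {L ι : Type*} [Lattice L] {a u : L} {S : Finset ι} {f : ι → L} :
    supFrom a S f ≤ u ↔ a ≤ u ∧ ∀ p ∈ S, f p ≤ u := by
  rw [supFrom, Finset.sup'_le_iff, Finset.forall_mem_insertNone]
  rfl

variable {A B} in
theorem exists_isLeast_boxProd {H : Set (A × B)} (hH : H ∈ boxDot A B) :
    ∃ K, IsLeast {K' | K' ∈ boxProd A B ∧ H ⊆ K'} K := by
  classical
  obtain ⟨F, G, hF, rfl⟩ := hH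
  set a : A := F.sup' hF Prod.fst with ha
  set b : B := F.sup' hF Prod.snd with hb
  let g (S : Finset (A × B)) : A × B := (supFrom a S Prod.fst, supFrom b (G \ S) Prod.snd)
  refine ⟨⋂ q ∈ G.powerset.image g, boxe A B q.1 q.2,
    ⟨⟨_, (Finset.powerset_nonempty G).image g, rfl⟩, ?_⟩, ?_⟩
  · intro x hx
    rw [mem_boxDot_set] at hx
    rw [Finset.set_biInter_finset_image, Set.mem_iInter₂]
    intro S _
    have hA := supFrom_le_iff.1 (le_refl (supFrom a S Prod.fst))
    have hB := supFrom_le_iff.1 (le_refl (supFrom b (G \ S) Prod.snd))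
    change x.1 ≤ supFrom a S Prod.fst ∨ x.2 ≤ supFrom b (G \ S) Prod.snd
    rcases hx with ⟨p, hp, h | h⟩ | ⟨p, hp, h₁, h₂⟩
    · exact Or.inl (h.trans ((Finset.le_sup' Prod.fst hp).trans hA.1))
    · exact Or.inr (h.trans ((Finset.le_sup' Prod.snd hp).trans hB.1))
    · by_cases hpS : p ∈ S
      · exact Or.inl (h₁.trans (hA.2 p hpS))
      · exact Or.inr (h₂.trans (hB.2 p (Finset.mem_sdiff.2 ⟨hp, hpS⟩)))
  · rintro _ ⟨⟨E, -, rfl⟩, hE⟩ x hx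
    rw [Finset.set_biInter_finset_image, Set.mem_iInter₂] at hx
    refine Set.mem_iInter₂.2 fun ⟨u, v⟩ huv => ?_
    by_contra hxuv
    have hsub := hE.trans (Set.biInter_subset_of_mem (t := fun p => boxe A B p.1 p.2) huv)
    have hFle : ∀ p ∈ F, p.1 ≤ u ∧ p.2 ≤ v := fun p hp =>
      boxe_subset_boxe (fun y hy => hsub (mem_boxDot_set.2 (Or.inl ⟨p, hp, hy⟩))) hxuv
    have hG : ∀ p ∈ G, p.1 ≤ u ∨ p.2 ≤ v := fun p hp =>
      hsub (mem_boxDot_set.2 (Or.inr ⟨p, hp, le_rfl, le_rfl⟩))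
    -- The subset `S` of those `j` with `cⱼ ≤ u` gives a box contained in `u □ v`.
    have hAu : supFrom a (G.filter (·.1 ≤ u)) Prod.fst ≤ u :=
      supFrom_le_iff.2 ⟨Finset.sup'_le _ _ fun p hp => (hFle p hp).1,
        fun p hp => (Finset.mem_filter.1 hp).2⟩
    have hBv : supFrom b (G \ G.filter (·.1 ≤ u)) Prod.snd ≤ v := by
      refine supFrom_le_iff.2 ⟨Finset.sup'_le _ _ fun p hp => (hFle p hp).2, fun p hp => ?_⟩
      obtain ⟨hpG, hpS⟩ := Finset.mem_sdiff.1 hp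
      exact (hG p hpG).resolve_left fun h => hpS (Finset.mem_filter.2 ⟨hpG, h⟩)
    exact hxuv ((hx _ (Finset.mem_powerset.2 (Finset.filter_subset _ G))).imp
      (fun h => le_trans h hAu) (fun h => le_trans h hBv))

/-- `A ⊡ B` is a sublattice of the powerset of `A × B`; `A □ B` is a closure system
in `A ⊡ B`; in particular `A □ B`, ordered by inclusion, is a lattice whose binary
meets are intersections. -/
theorem boxProd_lattice :
    (∀ H ∈ boxDot A B, ∀ K ∈ boxDot A B, H ∪ K ∈ boxDot A B ∧ H ∩ K ∈ boxDot A B) ∧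
    (∀ H ∈ boxDot A B, ∃ K, IsLeast {K' | K' ∈ boxProd A B ∧ H ⊆ K'} K) ∧
    (∀ H ∈ boxProd A B, ∀ K ∈ boxProd A B, H ∩ K ∈ boxProd A B) ∧
    (∀ H K : {X // X ∈ boxProd A B}, (∃ z, IsLUB {H, K} z) ∧ (∃ w, IsGLB {H, K} w)) := by
  refine ⟨fun H hH K hK => ⟨union_mem_boxDot hH hK, inter_mem_boxDot hH hK⟩,
    fun H hH => exists_isLeast_boxProd hH, fun H hH K hK => inter_mem_boxProd hH hK, ?_⟩
  rintro ⟨H, hH⟩ ⟨K, hK⟩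
  constructor
  · obtain ⟨Z, ⟨hZ, hHKZ⟩, hmin⟩ := exists_isLeast_boxProd
      (union_mem_boxDot (boxProd_subset_boxDot hH) (boxProd_subset_boxDot hK))
    refine ⟨⟨Z, hZ⟩, ?_, fun W hW => ?_⟩
    · rintro _ (rfl | rfl)
      · exact Set.subset_union_left.trans hHKZ
      · exact Set.subset_union_right.trans hHKZ
    · exact hmin ⟨W.2, Set.union_subset (hW (Or.inl rfl)) (hW (Or.inr rfl))⟩
  · refine ⟨⟨H ∩ K, inter_mem_boxProd hH hK⟩, ?_, fun W hW => ?_⟩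
    · rintro _ (rfl | rfl)
      · exact Set.inter_subset_left
      · exact Set.inter_subset_right
    · exact Set.subset_inter (hW (Or.inl rfl)) (hW (Or.inr rfl))
end

section
/- Let G be a finite group and let D be a finite distributive lattice with more than one element. Then there exists a finite lattice L such that the group of lattice automorphisms of L (bijective maps L → L preserving joins and meets, under composition) is isomorphic to G, and the set of lattice congruences of L, ordered by inclusion, is order-isomorphic to D. -/
/-- The lattice automorphisms of `L`: bijections preserving joins and meets. -/
abbrev LatAut (L : Type*) [Lattice L] :=
  {f : L → L // Function.Bijective f ∧
    (∀ x y : L, f (x ⊔ y) = f x ⊔ f y) ∧ ∀ x y : L, f (x ⊓ y) = f x ⊓ f y}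

/-- The automorphism group of `L` (under composition) is isomorphic to `G`. -/
def AutIsoGroup (L : Type*) [Lattice L] (G : Type*) [Group G] : Prop :=
  ∃ e : LatAut L ≃ G,
    ∀ f g h : LatAut L, (∀ x, h.1 x = f.1 (g.1 x)) → e h = e f * e g

/-- The set of lattice congruences of `L`, ordered by inclusion, is
order-isomorphic to `D`. -/
def ConIsoLat (L : Type*) [Lattice L] (D : Type*) [Lattice D] : Prop :=
  ∃ e : {θ : L → L → Prop // LatCon L θ} ≃ D,
    ∀ θ ψ : {θ : L → L → Prop // LatCon L θ},
      (∀ a b, θ.1 a b → ψ.1 a b) ↔ e θ ≤ e ψ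


namespace IndepLat

open Function

/-! ### Closed-set lattices of ternary rules -/

section Ternary

variable {X : Type}

/-- A set is closed under the rules `R x y w`, read as `x, y ⊢ w`. -/
def IsCl (R : X → X → X → Prop) (A : Set X) : Prop :=
  ∀ x y w, R x y w → x ∈ A → y ∈ A → w ∈ A

/-- The closure of a set under the rules. -/
inductive clos (R : X → X → X → Prop) (A : Set X) : X → Prop
  | base {x : X} : x ∈ A → clos R A x
  | step {x y w : X} : R x y w → clos R A x → clos R A y → clos R A w

/-- Every rule has two distinct premises and a conclusion different from both. In particular the
empty set and all singletons are closed. -/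
def Proper (R : X → X → X → Prop) : Prop :=
  ∀ x y w, R x y w → x ≠ y ∧ w ≠ x ∧ w ≠ y

/-- Sets that absorb the conclusion of each rule as soon as they contain one of its premises.
They are the sets of atoms collapsed by a congruence of the closed-set lattice. -/
def Good (R : X → X → X → Prop) (S : Set X) : Prop :=
  ∀ x y w, R x y w → x ∈ S ∨ y ∈ S → w ∈ S

/-- The permutation maps closed sets to closed sets, in both directions. -/
def PresCl (R : X → X → X → Prop) (σ : Equiv.Perm X) : Prop :=
  ∀ A : Set X, IsCl R (σ '' A) ↔ IsCl R A

variable {R : X → X → X → Prop}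

lemma isCl_clos (A : Set X) : IsCl R {x | clos R A x} :=
  fun _ _ _ h hx hy => clos.step h hx hy

lemma clos_subset {A B : Set X} (hB : IsCl R B) (h : A ⊆ B) {x : X} (hx : clos R A x) : x ∈ B := by
  induction hx with
  | base h' => exact h h'
  | step r _ _ ihx ihy => exact hB _ _ _ r ihx ihy

/-- The lattice of closed sets of `R`, ordered by inclusion. -/
def CL (R : X → X → X → Prop) : Type := {A : Set X // IsCl R A}

instance : Lattice (CL R) where
  le A B := A.1 ⊆ B.1
  le_refl A := subset_rfl
  le_trans A B C h h' := Set.Subset.trans h h'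
  le_antisymm A B h h' := Subtype.ext (Set.Subset.antisymm h h')
  sup A B := ⟨{x | clos R (A.1 ∪ B.1) x}, isCl_clos _⟩
  inf A B := ⟨A.1 ∩ B.1, fun x y w h hx hy =>
    ⟨A.2 x y w h hx.1 hy.1, B.2 x y w h hx.2 hy.2⟩⟩
  le_sup_left A B := fun _ hx => clos.base (Or.inl hx)
  le_sup_right A B := fun _ hx => clos.base (Or.inr hx)
  sup_le A B C h h' := fun _ hx => clos_subset C.2 (Set.union_subset h h') hx
  inf_le_left A B := Set.inter_subset_left
  inf_le_right A B := Set.inter_subset_right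
  le_inf A B C h h' := Set.subset_inter h h'

lemma CL.le_iff {A B : CL R} : A ≤ B ↔ A.1 ⊆ B.1 := Iff.rfl

lemma CL.inf_val (A B : CL R) : (A ⊓ B).1 = A.1 ∩ B.1 := rfl

lemma CL.mem_sup {A B : CL R} {x : X} : x ∈ (A ⊔ B).1 ↔ clos R (A.1 ∪ B.1) x := Iff.rfl

instance [Finite X] : Finite (CL R) := inferInstanceAs (Finite {A : Set X // IsCl R A})

lemma isCl_empty : IsCl R (∅ : Set X) := fun _ _ _ _ h => h.elim

lemma Proper.isCl_singleton (hR : Proper R) (x : X) : IsCl R ({x} : Set X) := by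
  rintro a b w h rfl hb
  exact absurd hb.symm (hR _ _ _ h).1

/-- The empty closed set. -/
def CL.empty (R : X → X → X → Prop) : CL R := ⟨∅, isCl_empty⟩

/-- The closed set generated by a set. -/
def CL.gen (R : X → X → X → Prop) (A : Set X) : CL R := ⟨{x | clos R A x}, isCl_clos A⟩

/-- The atom of the closed-set lattice given by a point. -/
def CL.pt (hR : Proper R) (x : X) : CL R := ⟨{x}, hR.isCl_singleton x⟩

/-- Removing the points of a good set from the generators only loses points of that good set. -/
lemma Good.clos_sub {S A B : Set X} (hS : Good R S) (h : ∀ x, x ∉ S → x ∈ A → x ∈ B) {x : X}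
    (hx : clos R A x) : x ∈ S ∨ clos R B x := by
  induction hx with
  | @base x h' =>
    by_cases hxS : x ∈ S
    · exact Or.inl hxS
    · exact Or.inr (clos.base (h x hxS h'))
  | step r _ _ ihx ihy =>
    rcases ihx with ihx | ihx
    · exact Or.inl (hS _ _ _ r (Or.inl ihx))
    rcases ihy with ihy | ihy
    · exact Or.inl (hS _ _ _ r (Or.inr ihy))
    exact Or.inr (clos.step r ihx ihy)

/-! ### Congruences of closed-set lattices -/

/-- The congruence collapsing exactly the points of `S`: two closed sets are related when they
agree outside `S`. -/
def conOf (S : Set X) (A B : CL R) : Prop := ∀ x, x ∉ S → (x ∈ A.1 ↔ x ∈ B.1)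

lemma latCon_conOf {S : Set X} (hS : Good R S) : LatCon (CL R) (conOf S) := by
  refine ⟨⟨fun A x _ => Iff.rfl, fun h x hx => (h x hx).symm,
    fun h h' x hx => (h x hx).trans (h' x hx)⟩, fun A B C D h h' => ⟨fun x hx => ?_, fun x hx => ?_⟩⟩
  · rw [CL.mem_sup, CL.mem_sup]
    constructor
    · intro hc
      refine (hS.clos_sub (B := B.1 ∪ D.1) (fun y hy => ?_) hc).resolve_left hx
      exact Or.imp (h y hy).1 (h' y hy).1
    · intro hc
      refine (hS.clos_sub (B := A.1 ∪ C.1) (fun y hy => ?_) hc).resolve_left hx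
      exact Or.imp (h y hy).2 (h' y hy).2
  · exact and_congr (h x hx) (h' x hx)

/-- The set of points collapsed to the bottom by a relation. -/
def collapsed (hR : Proper R) (θ : CL R → CL R → Prop) : Set X :=
  {x | θ (CL.empty R) (CL.pt hR x)}

lemma good_collapsed (hR : Proper R) {θ : CL R → CL R → Prop} (hθ : LatCon (CL R) θ) :
    Good R (collapsed hR θ) := by
  -- `x ∼ 0` gives `x ∨ y ∼ y`, and meeting with `w ≤ x ∨ y`, `w ≠ y` gives `w ∼ 0`
  have key : ∀ x y w : X, w ∈ (CL.pt hR x ⊔ CL.pt hR y).1 → w ≠ y →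
      x ∈ collapsed hR θ → w ∈ collapsed hR θ := by
    intro x y w hw hne hx
    have h1 := (hθ.2 _ _ _ _ hx (hθ.1.refl (CL.pt hR y))).1
    have h2 := (hθ.2 _ _ _ _ h1 (hθ.1.refl (CL.pt hR w))).2
    have e1 : (CL.empty R ⊔ CL.pt hR y) ⊓ CL.pt hR w = CL.empty R := by
      have : CL.empty R ⊔ CL.pt hR y = CL.pt hR y := sup_eq_right.2 (Set.empty_subset _)
      rw [this]
      refine Subtype.ext (Set.eq_empty_iff_forall_notMem.2 ?_)
      rintro a ⟨rfl, ha⟩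
      exact hne (Set.mem_singleton_iff.1 ha).symm
    have e2 : (CL.pt hR x ⊔ CL.pt hR y) ⊓ CL.pt hR w = CL.pt hR w :=
      inf_eq_right.2 (Set.singleton_subset_iff.2 hw)
    rwa [e1, e2] at h2
  intro x y w h hxy
  obtain ⟨-, hwx, hwy⟩ := hR _ _ _ h
  have hw : w ∈ (CL.pt hR x ⊔ CL.pt hR y).1 :=
    clos.step h (clos.base (Or.inl rfl)) (clos.base (Or.inr rfl))
  rcases hxy with hx | hy
  · exact key x y w hw hwy hx
  · exact key y x w (by rwa [sup_comm]) hwx hy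

/-- A congruence is determined by the points it collapses to the bottom. -/
lemma conOf_collapsed [Finite X] (hR : Proper R) {θ : CL R → CL R → Prop}
    (hθ : LatCon (CL R) θ) (A B : CL R) : conOf (collapsed hR θ) A B ↔ θ A B := by
  constructor
  · intro h
    -- any set of collapsed points generates a closed set related to the empty one
    have gen : ∀ F : Set X, F ⊆ collapsed hR θ →
        θ (CL.empty R) (CL.gen R F) := by
      intro F
      induction F, Set.toFinite F using Set.Finite.induction_on with
      | empty =>
        intro _
        have : CL.gen R ∅ = CL.empty R :=
          le_antisymm (fun x hx => clos_subset isCl_empty subset_rfl hx)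
            (Set.empty_subset _)
        rw [this]
        exact hθ.1.refl _
      | @insert a F _ _ ih =>
        intro hF
        have h1 := (hθ.2 _ _ _ _ (hF (Set.mem_insert a F))
          (ih ((Set.subset_insert a F).trans hF))).1
        rw [sup_idem] at h1
        have : CL.gen R (insert a F) =
            CL.pt hR a ⊔ CL.gen R F := by
          refine le_antisymm (fun x hx => ?_) (sup_le ?_ ?_)
          · refine clos_subset (isCl_clos _) ?_ hx
            rintro y (rfl | hy)
            · exact clos.base (Or.inl rfl)
            · exact clos.base (Or.inr (clos.base hy))
          · rintro x rfl
            exact clos.base (Set.mem_insert _ F)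
          · exact fun x hx => clos_subset (isCl_clos _)
              (fun y hy => clos.base (Set.mem_insert_of_mem _ hy)) hx
        rw [this]
        exact h1
    have half : ∀ C D : CL R, C ≤ D → (∀ x, x ∈ D.1 → x ∉ C.1 → x ∈ collapsed hR θ) →
        θ C D := by
      intro C D hCD hx
      have h1 := (hθ.2 _ _ _ _ (hθ.1.refl C)
        (gen (D.1 \ C.1) (fun x hxx => hx x hxx.1 hxx.2))).1
      have e1 : C ⊔ CL.empty R = C := sup_eq_left.2 (Set.empty_subset _)
      have e2 : C ⊔ CL.gen R (D.1 \ C.1) = D := by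
        refine le_antisymm (sup_le hCD ?_) (fun x hxD => ?_)
        · exact fun x hx => clos_subset D.2 Set.sdiff_subset hx
        · by_cases hxC : x ∈ C.1
          · exact clos.base (Or.inl hxC)
          · exact clos.base (Or.inr (clos.base ⟨hxD, hxC⟩))
      rwa [e1, e2] at h1
    refine hθ.1.trans (hθ.1.symm (half (A ⊓ B) A inf_le_left ?_)) (half (A ⊓ B) B inf_le_right ?_)
    · intro x hx hn
      by_contra hc
      exact hn ⟨hx, (h x hc).1 hx⟩
    · intro x hx hn
      by_contra hc
      exact hn ⟨(h x hc).2 hx, hx⟩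
  · have half : ∀ A B : CL R, θ A B → ∀ x, x ∉ collapsed hR θ → x ∈ A.1 → x ∈ B.1 := by
      intro A B h x hx hA
      by_contra hB
      apply hx
      have h1 := (hθ.2 _ _ _ _ h (hθ.1.refl (CL.pt hR x))).2
      have e1 : A ⊓ CL.pt hR x = CL.pt hR x := inf_eq_right.2 (Set.singleton_subset_iff.2 hA)
      have e2 : B ⊓ CL.pt hR x = CL.empty R := by
        refine Subtype.ext (Set.eq_empty_iff_forall_notMem.2 ?_)
        rintro a ⟨ha, rfl⟩
        exact hB ha
      rw [e1, e2] at h1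
      exact hθ.1.symm h1
    exact fun h x hx => ⟨half A B h x hx, half B A (hθ.1.symm h) x hx⟩

lemma collapsed_conOf (hR : Proper R) (S : Set X) : collapsed hR (conOf S) = S := by
  ext x
  constructor
  · intro h
    by_contra hx
    exact ((h x hx).2 rfl).elim
  · intro hx y hy
    refine ⟨fun h => h.elim, ?_⟩
    rintro rfl
    exact absurd hx hy

/-- Congruences of the closed-set lattice correspond to good sets. -/
lemma conIsoLat_of_good [Finite X] (hR : Proper R) {D : Type} [Lattice D]
    (e : {S : Set X // Good R S} ≃o D) : ConIsoLat (CL R) D := by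
  let E : {θ : CL R → CL R → Prop // LatCon (CL R) θ} ≃ {S : Set X // Good R S} :=
    { toFun := fun θ => ⟨collapsed hR θ.1, good_collapsed hR θ.2⟩
      invFun := fun S => ⟨conOf S.1, latCon_conOf S.2⟩
      left_inv := fun θ => Subtype.ext (by
        funext A B
        exact propext (conOf_collapsed hR θ.2 A B))
      right_inv := fun S => Subtype.ext (collapsed_conOf hR S.1) }
  refine ⟨E.trans e.toEquiv, fun θ ψ => ?_⟩
  change _ ↔ e (E θ) ≤ e (E ψ)
  rw [e.le_iff_le]
  constructor
  · exact fun h x hx => h _ _ hx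
  · intro h A B hAB
    rw [← conOf_collapsed hR ψ.2]
    rw [← conOf_collapsed hR θ.2] at hAB
    exact fun x hx => hAB x (fun hc => hx (h hc))

/-! ### Automorphisms of closed-set lattices -/

/-- Every lattice automorphism is induced by a permutation of the points. -/
lemma exists_perm_of_latAut (hR : Proper R) (f : LatAut (CL R)) :
    ∃ σ : Equiv.Perm X, PresCl R σ ∧ ∀ A, (f.1 A).1 = σ '' A.1 := by
  obtain ⟨f, hf, hsup, -⟩ := f
  have hle : ∀ A B, f A ≤ f B ↔ A ≤ B := by
    intro A B
    rw [← sup_eq_right, ← hsup, hf.1.eq_iff, sup_eq_right]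
  let F : CL R ≃o CL R := ⟨Equiv.ofBijective f hf, @hle⟩
  -- order automorphisms permute the atoms, that is, the singletons
  have pt_of : ∀ F : CL R ≃o CL R, ∀ x, ∃ y, F (CL.pt hR x) = CL.pt hR y := by
    intro F x
    have hne : (F (CL.pt hR x)).1.Nonempty := by
      by_contra hc
      rw [Set.not_nonempty_iff_eq_empty] at hc
      have h1 : F (CL.pt hR x) ≤ F (CL.empty R) := by
        rw [CL.le_iff, hc]
        exact Set.empty_subset _
      exact (F.le_iff_le.1 h1) (Set.mem_singleton x)
    obtain ⟨y, hy⟩ := hne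
    refine ⟨y, le_antisymm ?_ (Set.singleton_subset_iff.2 hy)⟩
    have h1 : F.symm (CL.pt hR y) ≤ CL.pt hR x := by
      rw [F.symm_apply_le]
      exact Set.singleton_subset_iff.2 hy
    rcases Set.subset_singleton_iff_eq.1 h1 with h2 | h2
    · have h3 : F.symm (CL.pt hR y) ≤ F.symm (CL.empty R) := by
        rw [CL.le_iff, h2]
        exact Set.empty_subset _
      exact ((F.symm.le_iff_le.1 h3) (Set.mem_singleton y)).elim
    · have h3 : F.symm (CL.pt hR y) = CL.pt hR x := Subtype.ext h2
      rw [← h3, F.apply_symm_apply]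
  choose s hs using pt_of F
  choose s' hs' using pt_of F.symm
  have pt_inj : ∀ x y, CL.pt hR x = CL.pt hR y → x = y := fun x y h =>
    Set.singleton_injective (congrArg Subtype.val h)
  let σ : Equiv.Perm X := ⟨s, s', fun x => pt_inj _ _ (by rw [← hs', ← hs, F.symm_apply_apply]),
    fun x => pt_inj _ _ (by rw [← hs, ← hs', F.apply_symm_apply])⟩
  have hmem : ∀ (A : CL R) x, σ x ∈ (F A).1 ↔ x ∈ A.1 := by
    intro A x
    have h1 : CL.pt hR (s x) ≤ F A ↔ CL.pt hR x ≤ A := by rw [← hs, F.le_iff_le]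
    exact Set.singleton_subset_iff.symm.trans (h1.trans Set.singleton_subset_iff)
  have himg : ∀ A : CL R, (F A).1 = σ '' A.1 := by
    intro A
    ext y
    obtain ⟨x, rfl⟩ := σ.surjective y
    rw [hmem, σ.injective.mem_set_image]
  refine ⟨σ, fun A => ⟨fun h => ?_, fun h => ?_⟩, himg⟩
  · obtain ⟨B, hB⟩ := F.surjective ⟨σ '' A, h⟩
    have h1 := himg B
    rw [hB] at h1
    have h2 : A = B.1 := σ.injective.image_injective h1
    rw [h2]
    exact B.2
  · have h1 := himg ⟨A, h⟩
    rw [← h1]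
    exact (F ⟨A, h⟩).2

/-- The automorphism of the closed-set lattice induced by a permutation of the points. -/
def autOf (σ : Equiv.Perm X) (h : PresCl R σ) : LatAut (CL R) := by
  refine ⟨fun A => ⟨σ '' A.1, (h A.1).2 A.2⟩, ?_⟩
  have hinj : Injective (fun A : CL R => (⟨σ '' A.1, (h A.1).2 A.2⟩ : CL R)) := fun A B hAB =>
    Subtype.ext (σ.injective.image_injective (congrArg Subtype.val hAB))
  have hsurj : Surjective (fun A : CL R => (⟨σ '' A.1, (h A.1).2 A.2⟩ : CL R)) := fun B =>
    ⟨⟨σ ⁻¹' B.1, (h _).1 (by rw [Set.image_preimage_eq _ σ.surjective]; exact B.2)⟩,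
      Subtype.ext (Set.image_preimage_eq _ σ.surjective)⟩
  let F : CL R ≃o CL R := ⟨Equiv.ofBijective _ ⟨hinj, hsurj⟩,
    @fun A B => Set.image_subset_image_iff σ.injective⟩
  exact ⟨⟨hinj, hsurj⟩, fun A B => F.map_sup A B, fun A B => F.map_inf A B⟩

lemma autOf_val (σ : Equiv.Perm X) (h : PresCl R σ) (A : CL R) :
    ((autOf σ h).1 A).1 = σ '' A.1 := rfl

lemma presCl_of_rule {σ : Equiv.Perm X} (h : ∀ x y w, R (σ x) (σ y) (σ w) ↔ R x y w) :
    PresCl R σ := by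
  intro A
  constructor
  · intro hA x y w r hx hy
    have := hA _ _ _ ((h x y w).2 r) (Set.mem_image_of_mem σ hx) (Set.mem_image_of_mem σ hy)
    rwa [σ.injective.mem_set_image] at this
  · rintro hA _ _ w r ⟨x, hx, rfl⟩ ⟨y, hy, rfl⟩
    obtain ⟨w, rfl⟩ := σ.surjective w
    exact Set.mem_image_of_mem σ (hA x y w ((h x y w).1 r) hx hy)

/-- If a group acts faithfully by rule-preserving permutations, and every permutation preserving
closed sets comes from the action, then it is the automorphism group of the closed-set lattice. -/
lemma autIsoGroup_of_action (hR : Proper R) {G : Type} [Group G] (φ : G →* Equiv.Perm X)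
    (hinj : Injective φ) (hφ : ∀ g x y w, R (φ g x) (φ g y) (φ g w) ↔ R x y w)
    (hsurj : ∀ σ, PresCl R σ → ∃ g, σ = φ g) : AutIsoGroup (CL R) G := by
  let E : G → LatAut (CL R) := fun g => autOf (φ g) (presCl_of_rule (hφ g))
  have hE : ∀ g A, ((E g).1 A).1 = φ g '' A.1 := fun g A => rfl
  have hbij : Bijective E := by
    constructor
    · intro g k h
      apply hinj
      ext x
      have h1 : ((E g).1 (CL.pt hR x)).1 = ((E k).1 (CL.pt hR x)).1 := by rw [h]
      rw [hE, hE] at h1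
      change φ g '' {x} = φ k '' {x} at h1
      rw [Set.image_singleton, Set.image_singleton] at h1
      exact Set.singleton_injective h1
    · intro f
      obtain ⟨σ, hσ, hf⟩ := exists_perm_of_latAut hR f
      obtain ⟨g, rfl⟩ := hsurj σ hσ
      refine ⟨g, Subtype.ext (funext fun A => Subtype.ext ?_)⟩
      rw [hE, hf]
  refine ⟨(Equiv.ofBijective E hbij).symm, fun f g h hfg => ?_⟩
  obtain ⟨a, rfl⟩ := hbij.2 f
  obtain ⟨b, rfl⟩ := hbij.2 g
  rw [Equiv.symm_apply_eq]
  have e1 : ∀ c, (Equiv.ofBijective E hbij).symm (E c) = c :=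
    fun c => (Equiv.ofBijective E hbij).symm_apply_apply c
  rw [e1, e1]
  refine Subtype.ext (funext fun A => Subtype.ext ?_)
  rw [hfg]
  change φ a '' (φ b '' A.1) = φ (a * b) '' A.1
  rw [map_mul, Equiv.Perm.coe_mul, Set.image_comp]

/-- Permutations preserving closed sets also pull good sets back to good sets, since goodness can
be expressed through closed sets alone. -/
lemma PresCl.good_preimage (hR : Proper R) {σ : Equiv.Perm X} (h : PresCl R σ) {S : Set X}
    (hS : Good R S) : Good R (σ ⁻¹' S) := by
  have key : ∀ x y w, R x y w → clos R {σ x, σ y} (σ w) := by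
    intro x y w r
    have h1 : IsCl R (σ ⁻¹' {v | clos R {σ x, σ y} v}) := by
      rw [← h, Set.image_preimage_eq _ σ.surjective]
      exact isCl_clos _
    exact h1 x y w r (clos.base (by simp)) (clos.base (by simp))
  intro x y w r hxy
  obtain ⟨-, hwx, hwy⟩ := hR _ _ _ r
  have sing : ∀ u v, clos R {u} v → v = u := fun u v hc =>
    clos_subset (hR.isCl_singleton u) subset_rfl hc
  rcases hxy with hx | hy
  · have h0 : ∀ v, v ∉ S → v ∈ ({σ x, σ y} : Set X) → v ∈ ({σ y} : Set X) := by
      rintro v hv (rfl | hv')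
      · exact absurd hx hv
      · exact hv'
    exact (hS.clos_sub h0 (key x y w r)).resolve_right
      (fun h1 => hwy (σ.injective (sing _ _ h1)))
  · have h0 : ∀ v, v ∉ S → v ∈ ({σ x, σ y} : Set X) → v ∈ ({σ x} : Set X) := by
      rintro v hv (hv' | rfl)
      · exact hv'
      · exact absurd hy hv
    exact (hS.clos_sub h0 (key x y w r)).resolve_right
      (fun h1 => hwx (σ.injective (sing _ _ h1)))

lemma PresCl.symm {σ : Equiv.Perm X} (h : PresCl R σ) : PresCl R σ.symm := by
  intro A
  rw [← h, ← Set.image_comp]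
  simp

end Ternary

/-! ### Blocks and their gluing over a poset -/

/-- A finite rule structure whose closed-set lattice is simple, with an action of `G` that
exhausts its automorphisms. The action need not be faithful. -/
structure Block (G : Type) [Group G] where
  /-- the points -/
  Y : Type
  /-- the rules -/
  R : Y → Y → Y → Prop
  /-- the action of `G` -/
  φ : G →* Equiv.Perm Y
  finite : Finite Y
  nontrivial : Nontrivial Y
  proper : Proper R
  simple : ∀ S, Good R S → S.Nonempty → S = Set.univ
  act : ∀ g x y w, R (φ g x) (φ g y) (φ g w) ↔ R x y w
  aut : ∀ σ, PresCl R σ → ∃ g, σ = φ g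

section Glue

variable {G : Type} [Group G] {P : Type}

/-- The glued rules on the disjoint union of the blocks: those of each block, and for `p < q` the
rules by which a point of block `p` together with a point of block `q` generates all of block `p`.
The latter force the congruence of block `p` below that of block `q`. -/
inductive Glue [PartialOrder P] (B : P → Block G) :
    (Σ p, (B p).Y) → (Σ p, (B p).Y) → (Σ p, (B p).Y) → Prop
  | inner {p : P} {x y w : (B p).Y} : (B p).R x y w → Glue B ⟨p, x⟩ ⟨p, y⟩ ⟨p, w⟩
  | cross {p q : P} {x w : (B p).Y} {y : (B q).Y} : p < q → w ≠ x →
      Glue B ⟨p, x⟩ ⟨q, y⟩ ⟨p, w⟩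

variable (B : P → Block G)

/-- `G` acts blockwise on the glued structure. -/
def glueAct : G →* Equiv.Perm (Σ p, (B p).Y) where
  toFun g := Equiv.sigmaCongrRight fun p => (B p).φ g
  map_one' := Equiv.ext fun ⟨p, x⟩ => by
    change (⟨p, (B p).φ 1 x⟩ : Σ p, (B p).Y) = ⟨p, x⟩
    rw [map_one, Equiv.Perm.one_apply]
  map_mul' g h := Equiv.ext fun ⟨p, x⟩ => by
    change (⟨p, (B p).φ (g * h) x⟩ : Σ p, (B p).Y) = ⟨p, (B p).φ g ((B p).φ h x)⟩
    rw [map_mul, Equiv.Perm.mul_apply]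

lemma glueAct_apply (g : G) (p : P) (x : (B p).Y) :
    glueAct B g ⟨p, x⟩ = ⟨p, (B p).φ g x⟩ := rfl

variable [PartialOrder P]

lemma glue_proper : Proper (Glue B) := by
  intro x y w h
  cases h with
  | inner h =>
    obtain ⟨h1, h2, h3⟩ := (B _).proper _ _ _ h
    simp [h1, h2, h3]
  | @cross p q x w y hpq hne =>
    have hpq' := hpq.ne
    refine ⟨fun h => hpq' (congrArg Sigma.fst h), ?_, fun h => hpq' (congrArg Sigma.fst h)⟩
    simp [hne]

lemma good_of_lowerSet (I : LowerSet P) : Good (Glue B) {x | x.1 ∈ I} := by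
  intro x y w h hxy
  cases h with
  | inner h => simpa using hxy
  | cross hpq hne =>
    rcases hxy with h | h
    · exact h
    · exact I.lower hpq.le h

lemma good_block {S : Set (Σ p, (B p).Y)} (hS : Good (Glue B) S) {p : P} {x : (B p).Y}
    (hx : ⟨p, x⟩ ∈ S) (y : (B p).Y) : ⟨p, y⟩ ∈ S := by
  have h1 : Good (B p).R {y | (⟨p, y⟩ : Σ p, (B p).Y) ∈ S} :=
    fun a b w r h => hS _ _ _ (Glue.inner r) h
  have h2 := (B p).simple _ h1 ⟨x, hx⟩
  exact (Set.eq_univ_iff_forall.1 h2) y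

/-- Good sets of the glued structure are unions of blocks over lower sets of `P`. -/
def goodIso : {S : Set (Σ p, (B p).Y) // Good (Glue B) S} ≃o LowerSet P where
  toFun S := ⟨{p | ∃ x, ⟨p, x⟩ ∈ S.1}, by
    rintro q p hpq ⟨y, hy⟩
    rcases hpq.eq_or_lt with rfl | hlt
    · exact ⟨y, hy⟩
    · obtain ⟨x, w, hne⟩ := (B p).nontrivial
      exact ⟨w, S.2 _ _ _ (Glue.cross (x := x) (y := y) hlt hne.symm) (Or.inr hy)⟩⟩
  invFun I := ⟨{x | x.1 ∈ I}, good_of_lowerSet B I⟩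
  left_inv S := by
    refine Subtype.ext (Set.ext ?_)
    rintro ⟨p, y⟩
    exact ⟨fun ⟨x, hx⟩ => good_block B S.2 hx y, fun h => ⟨y, h⟩⟩
  right_inv I := by
    refine SetLike.ext fun p => ?_
    obtain ⟨x, -⟩ := (B p).nontrivial
    exact ⟨fun ⟨_, h⟩ => h, fun h => ⟨x, h⟩⟩
  map_rel_iff' := by
    intro S T
    constructor
    · rintro h ⟨p, y⟩ hy
      obtain ⟨x, hx⟩ := h (show p ∈ {p | ∃ x, (⟨p, x⟩ : Σ p, (B p).Y) ∈ S.1} from ⟨y, hy⟩)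
      exact good_block B T.2 hx y
    · rintro h p ⟨x, hx⟩
      exact ⟨x, h hx⟩

lemma glueAct_rule (g : G) (x y w) :
    Glue B (glueAct B g x) (glueAct B g y) (glueAct B g w) ↔ Glue B x y w := by
  have key : ∀ g x y w, Glue B x y w →
      Glue B (glueAct B g x) (glueAct B g y) (glueAct B g w) := by
    intro g x y w h
    cases h with
    | inner h => exact Glue.inner (((B _).act g _ _ _).2 h)
    | cross hpq hne => exact Glue.cross hpq (fun h => hne (((B _).φ g).injective h))
  refine ⟨fun h => ?_, key g x y w⟩
  have := key g⁻¹ _ _ _ h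
  simpa [← Equiv.Perm.mul_apply, ← map_mul] using this

/-- Automorphisms of the glued structure map each block into a single block. -/
lemma PresCl.fst_eq {σ : Equiv.Perm (Σ p, (B p).Y)} (h : PresCl (Glue B) σ) {p : P}
    (x y : (B p).Y) : (σ ⟨p, x⟩).1 = (σ ⟨p, y⟩).1 := by
  -- the preimage of the good set of blocks below `q` is a union of blocks
  have key : ∀ x y : (B p).Y, (σ ⟨p, x⟩).1 ≤ (σ ⟨p, y⟩).1 := by
    intro x y
    have h1 := h.good_preimage (glue_proper B)
      (good_of_lowerSet B (LowerSet.Iic (σ ⟨p, y⟩).1))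
    exact good_block B h1 (x := y) (le_refl _) x
  exact le_antisymm (key x y) (key y x)

/-- When the blocks have pairwise different sizes, automorphisms of the glued structure stabilise
every block. -/
lemma PresCl.fst_fixed (hcard : Injective fun p => Nat.card (B p).Y)
    {σ : Equiv.Perm (Σ p, (B p).Y)} (h : PresCl (Glue B) σ) (x : Σ p, (B p).Y) :
    (σ x).1 = x.1 := by
  have le : ∀ (σ : Equiv.Perm (Σ p, (B p).Y)), PresCl (Glue B) σ → ∀ x,
      Nat.card (B x.1).Y ≤ Nat.card (B (σ x).1).Y := by
    rintro σ h ⟨p, x⟩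
    have hfin := (B (σ ⟨p, x⟩).1).finite
    have hq : ∀ y, (σ ⟨p, y⟩).1 = (σ ⟨p, x⟩).1 := fun y => h.fst_eq B y x
    generalize (σ ⟨p, x⟩).1 = q at hq hfin ⊢
    refine Nat.card_le_card_of_injective (fun y => (hq y ▸ (σ ⟨p, y⟩).2 : (B q).Y)) ?_
    intro y z hyz
    have e : ∀ y, (⟨q, hq y ▸ (σ ⟨p, y⟩).2⟩ : Σ p, (B p).Y) = σ ⟨p, y⟩ := by
      intro y
      refine Sigma.ext (hq y).symm ?_
      simp
    have h2 : σ ⟨p, y⟩ = σ ⟨p, z⟩ := by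
      rw [← e y, ← e z]
      exact congrArg _ hyz
    simpa using σ.injective h2
  apply hcard
  refine le_antisymm ?_ (le σ h x)
  simpa using le σ.symm h.symm (σ x)

lemma isCl_glue_image {p : P} (A : Set (B p).Y) :
    IsCl (Glue B) (Sigma.mk p '' A) ↔ IsCl (B p).R A := by
  constructor
  · intro h x y w r hx hy
    have := h _ _ _ (Glue.inner r) (Set.mem_image_of_mem _ hx) (Set.mem_image_of_mem _ hy)
    rwa [sigma_mk_injective.mem_set_image] at this
  · intro h x y w r hx hy
    cases r with
    | inner r =>
      obtain ⟨x, hx, hx'⟩ := hx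
      obtain ⟨rfl, hx'⟩ := Sigma.mk.inj hx'
      obtain rfl := eq_of_heq hx'
      rw [sigma_mk_injective.mem_set_image] at hy
      exact Set.mem_image_of_mem _ (h _ _ _ r hx hy)
    | cross hpq hne =>
      obtain ⟨x, hx, hx'⟩ := hx
      obtain ⟨y, hy, hy'⟩ := hy
      exact absurd ((Sigma.mk.inj hx').1.symm.trans (Sigma.mk.inj hy').1) hpq.ne

/-- On each block, an automorphism of the glued structure acts as some element of `G`, which may
depend on the block. -/
lemma PresCl.exists_block (hcard : Injective fun p => Nat.card (B p).Y)
    {σ : Equiv.Perm (Σ p, (B p).Y)} (h : PresCl (Glue B) σ) (p : P) :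
    ∃ g, ∀ x : (B p).Y, σ ⟨p, x⟩ = ⟨p, (B p).φ g x⟩ := by
  have ex : ∀ σ : Equiv.Perm (Σ p, (B p).Y), PresCl (Glue B) σ → ∀ x : (B p).Y,
      ∃ y : (B p).Y, σ ⟨p, x⟩ = ⟨p, y⟩ := by
    intro σ h x
    have h1 : (σ ⟨p, x⟩).1 = p := h.fst_fixed B hcard ⟨p, x⟩
    generalize σ ⟨p, x⟩ = z at h1
    obtain ⟨q, y⟩ := z
    obtain rfl : q = p := h1
    exact ⟨y, rfl⟩
  choose s hs using ex σ h
  choose s' hs' using ex σ.symm h.symm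
  have inj : ∀ {x y : (B p).Y}, (⟨p, x⟩ : Σ p, (B p).Y) = ⟨p, y⟩ → x = y :=
    fun hxy => eq_of_heq (Sigma.mk.inj hxy).2
  let τ : Equiv.Perm (B p).Y := ⟨s, s', fun x => inj (by
      rw [← hs', ← hs, σ.symm_apply_apply]), fun x => inj (by
      rw [← hs, ← hs', σ.apply_symm_apply])⟩
  have hτ : PresCl (B p).R τ := by
    intro A
    rw [← isCl_glue_image, ← isCl_glue_image]
    have : Sigma.mk p '' (τ '' A) = σ '' (Sigma.mk p '' A) := by
      rw [← Set.image_comp, ← Set.image_comp]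
      exact Set.image_congr fun x _ => (hs x).symm
    rw [this, h]
  obtain ⟨g, hg⟩ := (B p).aut τ hτ
  refine ⟨g, fun x => ?_⟩
  rw [hs, ← hg]
  rfl

/-- Blocks of pairwise different sizes, all but one of them rigid, glue to a structure with the
automorphisms of the remaining block. -/
lemma glue_autIso (hcard : Injective fun p => Nat.card (B p).Y) (p₀ : P)
    (h₀ : Injective (B p₀).φ) (h₁ : ∀ p, p ≠ p₀ → ∀ g, (B p).φ g = 1) :
    AutIsoGroup (CL (Glue B)) G := by
  refine autIsoGroup_of_action (glue_proper B) (glueAct B) ?_ (glueAct_rule B) ?_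
  · intro g g' h
    apply h₀
    ext x
    have h2 : glueAct B g ⟨p₀, x⟩ = glueAct B g' ⟨p₀, x⟩ := by rw [h]
    rw [glueAct_apply, glueAct_apply] at h2
    exact eq_of_heq (Sigma.mk.inj h2).2
  · intro σ hσ
    obtain ⟨g, hg⟩ := hσ.exists_block B hcard p₀
    refine ⟨g, Equiv.ext ?_⟩
    rintro ⟨p, x⟩
    rw [glueAct_apply]
    by_cases hp : p = p₀
    · subst hp
      exact hg x
    · obtain ⟨g', hg'⟩ := hσ.exists_block B hcard p
      rw [hg', h₁ p hp, h₁ p hp]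

end Glue

/-! ### A block with prescribed automorphism group and arbitrarily large size -/

section Net

variable (K : Type) [Fintype K] (n : ℕ)

/-- The points of the block built from `K` and `n`: two families `a`, `b` on which `K` acts by left
translation, a chain `t` with as many members as there are pairs `(k, j)`, and two extra points. -/
inductive Net : Type
  | a (g : K) : Net
  | b (h : K) (j : Fin n) : Net
  | t (i : Fin (Fintype.card (K × Fin n))) : Net
  | z : Net
  | u : Net

variable {K n}

/-- The position in the chain `t` that records a difference `k` and a level `j`. -/
noncomputable def pos (k : K) (j : Fin n) : Fin (Fintype.card (K × Fin n)) :=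
  Fintype.equivFin (K × Fin n) (k, j)

lemma pos_inj {k k' : K} {j j' : Fin n} (h : pos k j = pos k' j') : k = k' ∧ j = j' :=
  Prod.mk.inj ((Fintype.equivFin (K × Fin n)).injective h)

lemma exists_pos (i : Fin (Fintype.card (K × Fin n))) : ∃ (k : K) (j : Fin n), pos k j = i := by
  obtain ⟨⟨k, j⟩, h⟩ := (Fintype.equivFin (K × Fin n)).surjective i
  exact ⟨k, j, h⟩

/-- The points as a disjoint union, used for counting. -/
def netEquiv : Net K n ≃ K ⊕ (K × Fin n) ⊕ Fin (Fintype.card (K × Fin n)) ⊕ Bool where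
  toFun
    | .a g => .inl g
    | .b h j => .inr (.inl (h, j))
    | .t i => .inr (.inr (.inl i))
    | .z => .inr (.inr (.inr false))
    | .u => .inr (.inr (.inr true))
  invFun
    | .inl g => .a g
    | .inr (.inl (h, j)) => .b h j
    | .inr (.inr (.inl i)) => .t i
    | .inr (.inr (.inr false)) => .z
    | .inr (.inr (.inr true)) => .u
  left_inv := by rintro (_ | _ | _ | _ | _) <;> rfl
  right_inv := by rintro (_ | _ | _ | _ | _) <;> rfl

instance : Finite (Net K n) := Finite.of_equiv _ netEquiv.symm

lemma card_net : Nat.card (Net K n) = Fintype.card K * (2 * n + 1) + 2 := by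
  rw [Nat.card_congr netEquiv, Nat.card_eq_fintype_card]
  simp
  ring

variable [Group K]

/-- The rules: `a g` and `b h j` generate the final segment of the chain starting at the position
of `(g⁻¹ * h, j)`; each of the pairs `z, a g`, `z, t i` and `u, t i` generates everything. -/
inductive NetR : Net K n → Net K n → Net K n → Prop
  | ab {g h : K} {j : Fin n} {i} : pos (g⁻¹ * h) j ≤ i → NetR (.a g) (.b h j) (.t i)
  | za {g : K} {w} : w ≠ .z → w ≠ .a g → NetR .z (.a g) w
  | zt {i} {w} : w ≠ .z → w ≠ .t i → NetR .z (.t i) w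
  | ut {i} {w} : w ≠ .u → w ≠ .t i → NetR .u (.t i) w

/-- The action of a group element on the points. -/
def netMap (k : K) : Net K n → Net K n
  | .a g => .a (k * g)
  | .b h j => .b (k * h) j
  | .t i => .t i
  | .z => .z
  | .u => .u

/-- `K` acts by left translation on `a` and `b` and trivially elsewhere. -/
def netAct : K →* Equiv.Perm (Net K n) where
  toFun k := ⟨netMap k, netMap k⁻¹, by rintro (_ | _ | _ | _ | _) <;> simp [netMap],
    by rintro (_ | _ | _ | _ | _) <;> simp [netMap]⟩
  map_one' := Equiv.ext (by rintro (_ | _ | _ | _ | _) <;> simp [netMap])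
  map_mul' k l := Equiv.ext (by rintro (_ | _ | _ | _ | _) <;> simp [netMap, mul_assoc])

lemma netAct_apply (k : K) (x : Net K n) : netAct k x = netMap k x := rfl

lemma netAct_injective : Injective (netAct (K := K) (n := n)) := by
  intro k l h
  have : netAct (n := n) k (.a 1) = netAct l (.a 1) := by rw [h]
  simpa [netAct_apply, netMap] using this

lemma netAct_rule (k : K) (x y w : Net K n) :
    NetR (netAct k x) (netAct k y) (netAct k w) ↔ NetR x y w := by
  have key : ∀ (k : K) (x y w : Net K n), NetR x y w →
      NetR (netAct k x) (netAct k y) (netAct k w) := by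
    intro k x y w h
    cases h with
    | ab h => exact NetR.ab (by simpa [mul_assoc] using h)
    | za h h' =>
      exact NetR.za (fun e => h ((netAct k).injective e))
        (fun e => h' ((netAct k).injective e))
    | zt h h' =>
      exact NetR.zt (fun e => h ((netAct k).injective e))
        (fun e => h' ((netAct k).injective e))
    | ut h h' =>
      exact NetR.ut (fun e => h ((netAct k).injective e))
        (fun e => h' ((netAct k).injective e))
  refine ⟨fun h => ?_, key k x y w⟩
  have := key k⁻¹ _ _ _ h
  simpa [← Equiv.Perm.mul_apply, ← map_mul] using this

lemma netR_proper : Proper (NetR (K := K) (n := n)) := by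
  intro x y w h
  cases h with
  | ab h => simp
  | za h h' => exact ⟨by simp, h, h'⟩
  | zt h h' => exact ⟨by simp, h, h'⟩
  | ut h h' => exact ⟨by simp, h, h'⟩

lemma netR_simple (hn : 0 < n) (S : Set (Net K n)) (hS : Good NetR S) (hne : S.Nonempty) :
    S = Set.univ := by
  have ht : ∀ i, Net.t i ∈ S → S = Set.univ := by
    intro i hi
    rw [Set.eq_univ_iff_forall]
    intro w
    by_cases hw : w = .t i
    · rwa [hw]
    by_cases hz : w = .z
    · exact hS _ _ _ (NetR.ut (i := i) (by simp [hz]) hw) (Or.inr hi)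
    · exact hS _ _ _ (NetR.zt (i := i) hz hw) (Or.inr hi)
  have i₀ : Fin (Fintype.card (K × Fin n)) := pos 1 ⟨0, hn⟩
  have hz : Net.z ∈ S → S = Set.univ := fun h =>
    ht i₀ (hS _ _ _ (NetR.za (g := 1) (by simp) (by simp)) (Or.inl h))
  obtain ⟨x, hx⟩ := hne
  cases x with
  | a g => exact ht i₀ (hS _ _ _ (NetR.za (g := g) (by simp) (by simp)) (Or.inr hx))
  | b h j => exact ht _ (hS _ _ _ (NetR.ab (g := 1) le_rfl) (Or.inr hx))
  | t i => exact ht i hx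
  | z => exact hz hx
  | u => exact hz (hS _ _ _ (NetR.ut (i := i₀) (by simp) (by simp)) (Or.inl hx))

/-- The pair generates the whole structure. -/
def Gen (x y : Net K n) : Prop := ∀ C, IsCl NetR C → x ∈ C → y ∈ C → C = Set.univ

lemma gen_of_rule {x y : Net K n} (h : ∀ w, w ≠ x → w ≠ y → NetR x y w) : Gen x y := by
  intro C hC hx hy
  rw [Set.eq_univ_iff_forall]
  intro w
  by_cases h1 : w = x
  · rwa [h1]
  by_cases h2 : w = y
  · rwa [h2]
  exact hC _ _ _ (h w h1 h2) hx hy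

lemma gen_za (g : K) : Gen (n := n) .z (.a g) := gen_of_rule fun _ h h' => .za h h'
lemma gen_zt (i) : Gen (K := K) (n := n) .z (.t i) := gen_of_rule fun _ h h' => .zt h h'
lemma gen_ut (i) : Gen (K := K) (n := n) .u (.t i) := gen_of_rule fun _ h h' => .ut h h'

lemma Gen.symm {x y : Net K n} (h : Gen x y) : Gen y x := fun C hC hx hy => h C hC hy hx

lemma isCl_noz : IsCl NetR {x : Net K n | x ≠ .z ∧ x ≠ .u} := by
  intro x y w r hx hy
  cases r <;> simp_all

lemma isCl_bz : IsCl NetR {x : Net K n | x = .z ∨ x = .u ∨ ∃ h j, x = .b h j} := by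
  intro x y w r hx hy
  cases r <;> simp_all

lemma isCl_az : IsCl NetR {x : Net K n | x = .u ∨ ∃ g, x = .a g} := by
  intro x y w r hx hy
  cases r <;> simp_all

lemma not_gen_of_noz {x y : Net K n} (hx : x ≠ .z ∧ x ≠ .u) (hy : y ≠ .z ∧ y ≠ .u) :
    ¬ Gen x y := fun h => by
  have := h _ isCl_noz hx hy
  exact ((Set.eq_univ_iff_forall.1 this) .z).1 rfl

/-- The points `b h j` have no `Gen` partner, while every other point has one; this is how
automorphisms recognise them. -/
lemma not_gen_b (h : K) (j : Fin n) (y : Net K n) : ¬ Gen (.b h j) y := by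
  by_cases hy : y ≠ .z ∧ y ≠ .u
  · exact not_gen_of_noz (by simp) hy
  · intro hg
    have := hg _ isCl_bz (by simp) (by by_cases y = .z <;> simp_all)
    have := (Set.eq_univ_iff_forall.1 this) (.a 1)
    simp at this

lemma not_gen_uz : ¬ Gen (K := K) (n := n) .u .z := by
  intro hg
  have := hg _ isCl_bz (by simp) (by simp)
  have := (Set.eq_univ_iff_forall.1 this) (.a 1)
  simp at this

lemma not_gen_ua (g : K) : ¬ Gen (n := n) .u (.a g) := by
  intro hg
  have := hg _ isCl_az (by simp) (by simp)
  have := (Set.eq_univ_iff_forall.1 this) .z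
  simp at this

/-- This set is the closure of `a g` and `b h j`. -/
lemma isCl_seg (g h : K) (j : Fin n) :
    IsCl NetR {x : Net K n | x = .a g ∨ x = .b h j ∨ ∃ i, pos (g⁻¹ * h) j ≤ i ∧ x = .t i} := by
  intro x y w r hx hy
  cases r with
  | @ab g' h' j' i hi =>
    have e1 : g' = g := by simpa using hx
    have e2 : h' = h ∧ j' = j := by simpa using hy
    obtain ⟨rfl, rfl⟩ := e2
    subst e1
    exact Or.inr (Or.inr ⟨_, hi, rfl⟩)
  | za => simp at hx
  | zt => simp at hx
  | ut => simp at hx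

lemma clos_ab {g h : K} {j : Fin n} {i} :
    clos NetR {.a g, .b h j} (.t i) ↔ pos (g⁻¹ * h) j ≤ i := by
  constructor
  · intro hc
    have := clos_subset (isCl_seg g h j) (by rintro x (rfl | rfl) <;> simp) hc
    simpa using this
  · intro hi
    exact clos.step (NetR.ab hi) (clos.base (by simp)) (clos.base (by simp))

/-- Together with `not_isCl_ab`, this characterises the points `a g` as those that generate a third
point with some `b h j`. -/
lemma isCl_pair_b {x : Net K n} {h : K} {j : Fin n} (hx : ∀ g, x ≠ .a g) :
    IsCl NetR {x, .b h j} := by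
  intro p v w r hu hv
  cases r with
  | ab hi =>
    rcases hu with hu | hu
    · exact absurd hu.symm (hx _)
    · simp at hu
  | za =>
    rcases hv with hv | hv
    · exact absurd hv.symm (hx _)
    · simp at hv
  | zt =>
    rcases hu with hu | hu <;> rcases hv with hv | hv <;> simp_all
    simp [← hu] at hv
  | ut =>
    rcases hu with hu | hu <;> rcases hv with hv | hv <;> simp_all
    simp [← hu] at hv

lemma not_isCl_ab (g h : K) (j : Fin n) : ¬ IsCl NetR {.a g, .b h j} := by
  intro hc
  have := hc _ _ _ (NetR.ab (g := g) (h := h) (j := j) le_rfl) (by simp) (by simp)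
  simp at this

section Aut

variable {σ : Equiv.Perm (Net K n)}

lemma PresCl.gen (hσ : PresCl NetR σ) {x y : Net K n} (h : Gen x y) : Gen (σ x) (σ y) := by
  intro C hC hx hy
  have h1 := h (σ ⁻¹' C) ((hσ _).1 (by rwa [Set.image_preimage_eq _ σ.surjective])) hx hy
  rw [Set.eq_univ_iff_forall] at h1 ⊢
  intro w
  simpa using h1 (σ.symm w)

lemma PresCl.map_b (hσ : PresCl NetR σ) (hn : 0 < n) (h : K) (j : Fin n) :
    ∃ h' j', σ (.b h j) = .b h' j' := by
  have hng : ∀ y, ¬ Gen (σ (.b h j)) y := by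
    intro y hg
    have := hσ.symm.gen hg
    rw [σ.symm_apply_apply] at this
    exact not_gen_b _ _ _ this
  generalize σ (.b h j) = x at hng
  cases x with
  | a g => exact absurd (gen_za g).symm (hng _)
  | b h' j' => exact ⟨h', j', rfl⟩
  | t i => exact absurd (gen_zt i).symm (hng _)
  | z => exact absurd (gen_za 1) (hng _)
  | u => exact absurd (gen_ut (pos 1 ⟨0, hn⟩)) (hng _)

lemma PresCl.map_a (hσ : PresCl NetR σ) (hn : 0 < n) (g : K) : ∃ g', σ (.a g) = .a g' := by
  by_contra! hc
  obtain ⟨h', j', hb⟩ := hσ.map_b hn 1 ⟨0, hn⟩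
  have h1 := isCl_pair_b (h := h') (j := j') hc
  rw [← hb, ← Set.image_pair, hσ] at h1
  exact not_isCl_ab _ _ _ h1

lemma PresCl.map_z (hσ : PresCl NetR σ) (hn : 0 < n) : σ .z = .z := by
  obtain ⟨g, hg⟩ := hσ.map_a hn 1
  have h1 := hσ.gen (gen_za 1)
  rw [hg] at h1
  by_contra hz
  by_cases hz' : σ .z = .u
  · rw [hz'] at h1
    exact not_gen_ua _ h1
  · exact not_gen_of_noz ⟨hz, hz'⟩ (by simp) h1

lemma PresCl.map_t (hσ : PresCl NetR σ) (hn : 0 < n) (i) : ∃ i', σ (.t i) = .t i' := by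
  have h1 := (hσ.gen (gen_zt i)).symm
  rw [hσ.map_z hn] at h1
  have ha : ∀ g, σ (.t i) ≠ .a g := by
    intro g hg
    obtain ⟨g', hg'⟩ := hσ.symm.map_a hn g
    rw [← hg, σ.symm_apply_apply] at hg'
    simp at hg'
  have hz : σ (.t i) ≠ .z := by
    intro hz
    rw [← hσ.map_z hn] at hz
    simpa using σ.injective hz
  generalize σ (.t i) = x at *
  cases x with
  | a g => exact absurd rfl (ha g)
  | b h' j' => exact absurd h1 (not_gen_b _ _ _)
  | t i => exact ⟨i, rfl⟩
  | z => exact absurd rfl hz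
  | u => exact absurd h1 not_gen_uz

lemma PresCl.clos_iff (hσ : PresCl NetR σ) (A : Set (Net K n)) (x : Net K n) :
    clos NetR (σ '' A) (σ x) ↔ clos NetR A x := by
  constructor
  · intro h
    have := clos_subset ((hσ _).2 (isCl_clos A)) (Set.image_mono fun y hy => clos.base hy) h
    rwa [σ.injective.mem_set_image] at this
  · intro h
    have h1 : IsCl NetR (σ ⁻¹' {x | clos NetR (σ '' A) x}) := by
      rw [← hσ, Set.image_preimage_eq _ σ.surjective]
      exact isCl_clos _
    exact clos_subset h1 (fun y hy => clos.base (Set.mem_image_of_mem σ hy)) h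

/-- The final segments of the chain generated by pairs `a g`, `b h j` are determined by their sizes,
which automorphisms preserve. So the chain is fixed pointwise and the differences `g⁻¹ * h` and
levels `j` are kept, which leaves only left translations. -/
lemma PresCl.exists_netAct (hσ : PresCl NetR σ) (hn : 0 < n) : ∃ k, σ = netAct k := by
  choose α hα using hσ.map_a hn
  choose β γ hβ using hσ.map_b hn
  choose τ hτ using hσ.map_t hn
  have τinj : Injective τ := fun i j h => by
    have : σ (.t i) = σ (.t j) := by rw [hτ, hτ, h]
    simpa using σ.injective this
  have τsurj : Surjective τ := Finite.surjective_of_injective τinj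
  have hle : ∀ g h j i, pos ((α g)⁻¹ * β h j) (γ h j) ≤ τ i ↔ pos (g⁻¹ * h) j ≤ i := by
    intro g h j i
    rw [← clos_ab, ← clos_ab, ← hσ.clos_iff {.a g, .b h j}, Set.image_pair, hα, hβ, hτ]
  have heq : ∀ g h j, pos ((α g)⁻¹ * β h j) (γ h j) = pos (g⁻¹ * h) j := by
    intro g h j
    have h1 : (Finset.Ici (pos (g⁻¹ * h) j)).map ⟨τ, τinj⟩ =
        Finset.Ici (pos ((α g)⁻¹ * β h j) (γ h j)) := by
      ext i
      obtain ⟨i, rfl⟩ := τsurj i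
      simp only [Finset.mem_map, Finset.mem_Ici, Embedding.coeFn_mk]
      rw [hle]
      exact ⟨fun ⟨i', h1, h2⟩ => τinj h2 ▸ h1, fun h1 => ⟨i, h1, rfl⟩⟩
    have h2 := congrArg Finset.card h1
    rw [Finset.card_map, Fin.card_Ici, Fin.card_Ici] at h2
    apply Fin.ext
    omega
  have hτid : ∀ i, τ i = i := by
    have key : ∀ i i', i' ≤ τ i ↔ i' ≤ i := by
      intro i i'
      obtain ⟨k, j, rfl⟩ := exists_pos i'
      have := hle 1 k j i
      rw [heq] at this
      simpa using this
    exact fun i => le_antisymm ((key i _).1 le_rfl) ((key i i).2 le_rfl)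
  have hβ1 : ∀ g h j, β h j = α g * (g⁻¹ * h) := fun g h j => by
    rw [← (pos_inj (heq g h j)).1, mul_inv_cancel_left]
  have hγ : ∀ h j, γ h j = j := fun h j => (pos_inj (heq 1 h j)).2
  refine ⟨α 1, Equiv.ext ?_⟩
  rintro (g | ⟨h, j⟩ | i | _ | _)
  · rw [hα, netAct_apply, netMap]
    have h1 := hβ1 g g ⟨0, hn⟩
    rw [hβ1 1 g ⟨0, hn⟩] at h1
    simpa using h1.symm
  · rw [hβ, hγ, netAct_apply, netMap, hβ1 1]
    simp
  · rw [hτ, hτid]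
    rfl
  · exact hσ.map_z hn
  -- `u` is the only point left
  · obtain ⟨x, hx⟩ := σ.surjective .u
    have e : x = .u := by
      cases x with
      | a g => rw [hα] at hx; simp at hx
      | b h j => rw [hβ] at hx; simp at hx
      | t i => rw [hτ] at hx; simp at hx
      | z => rw [hσ.map_z hn] at hx; simp at hx
      | u => rfl
    rw [e] at hx
    exact hx

end Aut

/-- The net of a quotient `K` of `G` as a block for `G`. -/
def netBlock {G : Type} [Group G] (f : G →* K) (hf : Surjective f) (hn : 0 < n) : Block G where
  Y := Net K n
  R := NetR
  φ := netAct.comp f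
  finite := inferInstance
  nontrivial := ⟨.z, .u, by simp⟩
  proper := netR_proper
  simple := netR_simple hn
  act g x y w := netAct_rule (f g) x y w
  aut σ hσ := by
    obtain ⟨k, hk⟩ := hσ.exists_netAct hn
    obtain ⟨g, rfl⟩ := hf k
    exact ⟨g, hk⟩

end Net

/-- The blocks over `P`: the net of `G` at `p₀` and nets of the trivial group elsewhere, of pairwise
different sizes. -/
lemma exists_blocks (G : Type) [Group G] [Fintype G] (P : Type) [Finite P] (p₀ : P) :
    ∃ B : P → Block G, Injective (fun p => Nat.card (B p).Y) ∧ Injective (B p₀).φ ∧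
      ∀ p, p ≠ p₀ → ∀ g, (B p).φ g = 1 := by
  classical
  have := Fintype.ofFinite P
  let c : P → ℕ := fun p => (Fintype.equivFin P p : ℕ)
  have hc : ∀ p, c p < Fintype.card P := fun p => (Fintype.equivFin P p).2
  have cinj : ∀ p q, c p = c q → p = q := fun p q h =>
    (Fintype.equivFin P).injective (Fin.ext h)
  let B₀ : Block G := netBlock (n := Fintype.card P + 1) (MonoidHom.id G) surjective_id (by simp)
  let B₁ : ℕ → Block G := fun m => netBlock (K := Unit) (n := m + 1) (1 : G →* Unit)
    (fun u => ⟨1, rfl⟩) (by simp)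
  have h₀ : Nat.card B₀.Y = Fintype.card G * (2 * (Fintype.card P + 1) + 1) + 2 := card_net
  have h₁ : ∀ m, Nat.card (B₁ m).Y = 2 * (m + 1) + 1 + 2 := fun m =>
    (card_net (K := Unit) (n := m + 1)).trans (by simp)
  have hG : 0 < Fintype.card G := Fintype.card_pos
  have hlt : ∀ p, Nat.card (B₁ (c p)).Y < Nat.card B₀.Y := by
    intro p
    rw [h₀, h₁]
    have := hc p
    have := Nat.le_mul_of_pos_left (2 * (Fintype.card P + 1) + 1) hG
    omega
  refine ⟨fun p => if p = p₀ then B₀ else B₁ (c p), ?_, ?_, ?_⟩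
  · intro p q h
    by_cases hp : p = p₀ <;> by_cases hq : q = p₀
    · rw [hp, hq]
    · simp only [hp, hq, if_true, if_false] at h
      exact absurd h (hlt q).ne'
    · simp only [hp, hq, if_true, if_false] at h
      exact absurd h (hlt p).ne
    · simp only [hp, hq, if_false] at h
      rw [h₁, h₁] at h
      exact cinj p q (by omega)
  · have key : ∀ C : Block G, C = B₀ → Injective C.φ := by
      rintro _ rfl
      exact netAct_injective
    exact key _ (if_pos rfl)
  · intro p hp g
    have key : ∀ C : Block G, C = B₁ (c p) → C.φ g = 1 := by
      rintro _ rfl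
      exact map_one (netAct (K := Unit) (n := c p + 1))
    exact key _ (if_neg hp)

end IndepLat

/-- The Independence Theorem for finite lattices: for every finite group `G` and
every finite distributive lattice `D` with more than one element, there is a finite
lattice `L` whose automorphism group is isomorphic to `G` and whose congruence
lattice is isomorphic to `D`. -/
theorem independence_finite_lattices
    (G : Type) [Group G] [Fintype G]
    (D : Type) [DistribLattice D] [Fintype D] [Nontrivial D] :
    ∃ (L : Type) (instL : Lattice L) (_ : Fintype L),
      @AutIsoGroup L instL G _ ∧ @ConIsoLat L instL D _ := by
  classical
  let _ : OrderBot D := Fintype.toOrderBot D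
  let P := {a : D // SupIrred a}
  let E : D ≃o LowerSet P := OrderIso.lowerSetSupIrred
  have hP : Nonempty P := by
    -- otherwise there would be only one lower set
    by_contra hP
    rw [not_nonempty_iff] at hP
    obtain ⟨x, y, hxy⟩ := exists_pair_ne D
    exact hxy (E.injective (SetLike.ext fun p => hP.elim p))
  obtain ⟨p₀⟩ := hP
  obtain ⟨B, hcard, h₀, h₁⟩ := IndepLat.exists_blocks G P p₀
  have : ∀ p, Finite (B p).Y := fun p => (B p).finite
  refine ⟨IndepLat.CL (IndepLat.Glue B), inferInstance, Fintype.ofFinite _,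
    IndepLat.glue_autIso B hcard p₀ h₀ h₁, ?_⟩
  exact IndepLat.conIsoLat_of_good (IndepLat.glue_proper B) ((IndepLat.goodIso B).trans E.symm)
end
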